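/- arXiv:1912.03398 — 5 statements merged into one kernel-verified Lean document; each statement's English description precedes it below -/
import Mathlib

section
/- (Quotient criterion.) Let G be a group generated by elements σ1, σ2, σ3 satisfying (σ1σ2)^2 = (σ2σ3)^2 = (σ1σ2σ3)^2 = 1, and let θ : G → H be a group homomorphism with θ(σj) = λj for 1 ≤ j ≤ 3, such that the restriction of θ to the subgroup ⟨σ1, σ2⟩ (or to ⟨σ2, σ3⟩) is injective. If the triple (λ1, λ2, λ3) generates H and satisfies the chiral intersection condition in H, namely ⟨λ1⟩ ∩ ⟨λ2, λ3⟩ = {1} = ⟨λ1, λ2⟩ ∩ ⟨λ3⟩ and ⟨λ1, λ2⟩ ∩ ⟨λ2, λ3⟩ = ⟨λ2⟩, then the triple (σ1, σ2, σ3) satisfies the chiral intersection condition in G, namely ⟨σ1⟩ ∩ ⟨σ2, σ3⟩ = {1} = ⟨σ1, σ2⟩ ∩ ⟨σ3⟩ and ⟨σ1, σ2⟩ ∩ ⟨σ2, σ3⟩ = ⟨σ2⟩. -/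
/-- The chiral form of the intersection condition for a triple `(t1, t2, t3)` of elements
of a group: `⟨t1⟩ ⊓ ⟨t2, t3⟩ = 1 = ⟨t1, t2⟩ ⊓ ⟨t3⟩` and `⟨t1, t2⟩ ⊓ ⟨t2, t3⟩ = ⟨t2⟩`. -/
def ChiralIC {G : Type*} [Group G] (t1 t2 t3 : G) : Prop :=
  Subgroup.closure {t1} ⊓ Subgroup.closure {t2, t3} = ⊥ ∧
  Subgroup.closure {t1, t2} ⊓ Subgroup.closure {t3} = ⊥ ∧
  Subgroup.closure {t1, t2} ⊓ Subgroup.closure {t2, t3} = Subgroup.closure {t2}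

/-!
Once `A ⊓ B = C` holds for the images of the subgroups under `f`, it lifts back as soon as `f` is
injective on `A ⊓ B` and `C ≤ A ⊓ B`. Each of the three intersections in the chiral condition is
contained in `⟨s1, s2⟩ ⊓ ⟨s2, s3⟩`, where `f` is injective.
-/

section

variable {G H : Type*} [Group G] [Group H]

theorem map_closure_singleton (f : G →* H) (a : G) :
    (Subgroup.closure {a}).map f = Subgroup.closure {f a} := by
  rw [MonoidHom.map_closure, Set.image_singleton]

theorem map_closure_pair (f : G →* H) (a b : G) :
    (Subgroup.closure {a, b}).map f = Subgroup.closure {f a, f b} := by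
  rw [MonoidHom.map_closure, Set.image_pair]

theorem inf_eq_of_map_inf_map_le {f : G →* H} {A B C : Subgroup G}
    (hf : Set.InjOn f (A ⊓ B : Subgroup G)) (hC : C ≤ A ⊓ B)
    (h : A.map f ⊓ B.map f ≤ C.map f) : A ⊓ B = C := by
  have map_le : (A ⊓ B).map f ≤ C.map f := (Subgroup.map_inf_le A B f).trans h
  exact le_antisymm ((hf.image_subset_image_iff subset_rfl hC).1 map_le) hC

theorem quotient_criterion_general (s1 s2 s3 : G) (f : G →* H)
    (hinj : Set.InjOn f (Subgroup.closure {s1, s2} ⊓ Subgroup.closure {s2, s3} : Subgroup G))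
    (hH : ChiralIC (f s1) (f s2) (f s3)) : ChiralIC s1 s2 s3 := by
  simp only [ChiralIC, ← map_closure_singleton, ← map_closure_pair] at hH
  obtain ⟨h1, h3, h2⟩ := hH
  have le_left : Subgroup.closure {s1} ≤ Subgroup.closure {s1, s2} :=
    Subgroup.closure_mono (by simp)
  have le_right : Subgroup.closure {s3} ≤ Subgroup.closure {s2, s3} :=
    Subgroup.closure_mono (by simp)
  have le_both : Subgroup.closure {s2} ≤ Subgroup.closure {s1, s2} ⊓ Subgroup.closure {s2, s3} :=
    le_inf (Subgroup.closure_mono (by simp)) (Subgroup.closure_mono (by simp))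
  refine ⟨?_, ?_, ?_⟩
  · exact inf_eq_of_map_inf_map_le (hinj.mono (inf_le_inf_right _ le_left)) bot_le
      (h1.trans_le bot_le)
  · exact inf_eq_of_map_inf_map_le (hinj.mono (inf_le_inf_left _ le_right)) bot_le
      (h3.trans_le bot_le)
  · exact inf_eq_of_map_inf_map_le hinj le_both h2.le

end

/-- The quotient criterion for chiral 4-polytopes. -/
theorem quotient_criterion {G H : Type*} [Group G] [Group H]
    (s1 s2 s3 : G) (hgen : Subgroup.closure {s1, s2, s3} = ⊤)
    (h12 : (s1 * s2) ^ 2 = 1) (h23 : (s2 * s3) ^ 2 = 1) (h123 : (s1 * s2 * s3) ^ 2 = 1)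
    (f : G →* H)
    (hinj : Set.InjOn f ((Subgroup.closure {s1, s2} : Subgroup G) : Set G) ∨
            Set.InjOn f ((Subgroup.closure {s2, s3} : Subgroup G) : Set G))
    (hHgen : Subgroup.closure {f s1, f s2, f s3} = ⊤)
    (hH : ChiralIC (f s1) (f s2) (f s3)) :
    ChiralIC s1 s2 s3 :=
  quotient_criterion_general s1 s2 s3 f
    (hinj.elim (·.mono inf_le_left) (·.mono inf_le_right)) hH
end

section
/- In the group U, the subgroup N = ⟨x, y⟩ generated by x = (ac^{-1})^4 and y = (c^{-1}a)^4 is a normal subgroup of U of index 1024. -/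
/-- The defining relators of the group `U` on generators `a, b, c` (indexed `0, 1, 2`):
`a^4, b^4, c^4, (ab)^2, (bc)^2, (abc)^2, (a^2b^2)^4, a^2c^2b^2(ac)^2, [a,c⁻¹]b^2`,
where `[x,y] = x⁻¹y⁻¹xy`. -/
def Urels : Set (FreeGroup (Fin 3)) :=
  {(FreeGroup.of 0) ^ 4, (FreeGroup.of 1) ^ 4, (FreeGroup.of 2) ^ 4,
   (FreeGroup.of 0 * FreeGroup.of 1) ^ 2,
   (FreeGroup.of 1 * FreeGroup.of 2) ^ 2,
   (FreeGroup.of 0 * FreeGroup.of 1 * FreeGroup.of 2) ^ 2,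
   ((FreeGroup.of 0) ^ 2 * (FreeGroup.of 1) ^ 2) ^ 4,
   (FreeGroup.of 0) ^ 2 * (FreeGroup.of 2) ^ 2 * (FreeGroup.of 1) ^ 2 *
     (FreeGroup.of 0 * FreeGroup.of 2) ^ 2,
   (FreeGroup.of 0)⁻¹ * FreeGroup.of 2 * FreeGroup.of 0 * (FreeGroup.of 2)⁻¹ *
     (FreeGroup.of 1) ^ 2}

/-- The finitely presented group `U`. -/
abbrev UGroup : Type := PresentedGroup Urels

/-- The generator `a` of `U`. -/
def Ua : UGroup := PresentedGroup.of 0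

/-- The generator `b` of `U`. -/
def Ub : UGroup := PresentedGroup.of 1

/-- The generator `c` of `U`. -/
def Uc : UGroup := PresentedGroup.of 2

/-- The element `x = (ac⁻¹)^4` of `U`. -/
def Ux : UGroup := (Ua * Uc⁻¹) ^ 4

/-- The element `y = (c⁻¹a)^4` of `U`. -/
def Uy : UGroup := (Uc⁻¹ * Ua) ^ 4

/-!
Write `g u g⁻¹ = v` as `SemiconjBy g u v`. Put `s = b²`, `e = s^a`, `q = s^c`, `p = (a²s)²`,
`z = (se)²`. The relations express each conjugate of these involutions by `a`, `b`, `c` through the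
same elements; in particular `z` is a central involution and `x = z q (c s c⁻¹)`. It follows that
conjugation by `a`, `b`, `c` permutes `x, x⁻¹, y, y⁻¹`, so `N` is normal.

Modulo `N`, adjoining `z`, `p`, `r = sq`, `f = se`, `s`, `c`, `a`, `b` in this order gives a chain
of normal subgroups whose successive indices are at most `2, 2, 2, 2, 2, 4, 4, 2`, with product
`1024`. None of the steps collapses. The element `z` acts nontrivially on an explicit set of `128`
points on which `x` and `y` act trivially. Each of `p`, `r`, `f`, `s` is multiplied by `z` under
conjugation by some element commuting with the preceding ones, hence is new because `z ≠ 1`. The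
last three steps are seen in dihedral quotients of `U`.
-/

section Group

variable {G : Type*} [Group G] {g h k u v : G}

theorem mul_sq_comm_of_pow_four (hu : u * u = 1) (hv : v * v = 1) (huv : (u * v) ^ 4 = 1) :
    (u * v) ^ 2 = (v * u) ^ 2 := by
  have hinv : (u * v)⁻¹ = v * u := by
    rw [mul_inv_rev, inv_eq_of_mul_eq_one_left hu, inv_eq_of_mul_eq_one_left hv]
  rw [← hinv, inv_pow, eq_inv_iff_mul_eq_one, ← pow_add, huv]

theorem commute_mul_sq_left (hu : u * u = 1) (hv : v * v = 1) (huv : (u * v) ^ 4 = 1) :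
    Commute u ((u * v) ^ 2) :=
  calc u * (u * v) ^ 2 = u * (v * u) ^ 2 := by rw [mul_sq_comm_of_pow_four hu hv huv]
    _ = (u * v) ^ 2 * u := by simp only [sq, mul_assoc]

theorem commute_mul_sq_right (hu : u * u = 1) (hv : v * v = 1) (huv : (u * v) ^ 4 = 1) :
    Commute v ((u * v) ^ 2) :=
  calc v * (u * v) ^ 2 = (v * u) ^ 2 * v := by simp only [sq, mul_assoc]
    _ = (u * v) ^ 2 * v := by rw [mul_sq_comm_of_pow_four hu hv huv]

theorem semiconjBy_inv_mul_sq (hg : g ^ 4 = 1) (hgh : (h * g) ^ 2 = 1) :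
    SemiconjBy g h (h⁻¹ * g ^ 2) := by
  have hconj : g * h * g = h⁻¹ :=
    eq_inv_of_mul_eq_one_right (by simpa only [sq, mul_assoc] using hgh)
  calc g * h = g * h * g * g ^ 4 * g⁻¹ := by rw [hg]; group
    _ = h⁻¹ * g ^ 2 * g := by rw [hconj]; group

theorem eq_of_semiconjBy (hu : SemiconjBy g u k) (hv : SemiconjBy g v k) : u = v :=
  mul_left_cancel (hu.eq.trans hv.eq.symm)

theorem mul_self_eq_one_of_semiconjBy (h : SemiconjBy g u v) (hv : v * v = 1) : u * u = 1 :=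
  eq_of_semiconjBy (h.mul_right h) (by rw [hv]; exact .one_right g)

theorem commute_of_semiconjBy_mul (hgk : SemiconjBy (g * k) u v) (hg : SemiconjBy g u v) :
    Commute k u :=
  mul_left_cancel (a := g) <| by rw [← mul_assoc, hgk.eq, ← mul_assoc, ← hg.eq, mul_assoc]

theorem semiconjBy_of_conj {u' v' w w' : G} (hu : SemiconjBy g u u') (hv : SemiconjBy g v v')
    (hw : SemiconjBy g w w') (h : SemiconjBy u' v' w') : SemiconjBy u v w :=
  eq_of_semiconjBy (hu.mul_right hv) (h.eq ▸ hw.mul_right hu)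

theorem semiconjBy_of_semiconjBy_sq (hu : SemiconjBy g u v) (hk : SemiconjBy (g ^ 2) k v) :
    SemiconjBy g k u :=
  mul_left_cancel (a := g) <| by
    rw [← mul_assoc, ← sq, hk.eq, sq, ← mul_assoc, ← hu.eq, mul_assoc]

theorem normal_closure_of_semiconjBy {S X : Set G} (hX : Subgroup.closure X = ⊤)
    (hfin : ∀ t ∈ X, IsOfFinOrder t)
    (h : ∀ t ∈ X, ∀ u ∈ S, ∃ v ∈ Subgroup.closure S, SemiconjBy t v u) :
    (Subgroup.closure S).Normal := by
  have hconj (t : G) (ht : t ∈ Submonoid.closure X) :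
      Subgroup.closure S ≤ (Subgroup.closure S).comap (MulAut.conj t⁻¹).toMonoidHom := by
    induction ht using Submonoid.closure_induction with
    | mem t ht =>
      refine (Subgroup.closure_le _).mpr fun u hu => ?_
      obtain ⟨v, hv, htv⟩ := h t ht u hu
      have : t⁻¹ * u * t = v := by rw [mul_assoc, ← htv.eq, inv_mul_cancel_left]
      simpa [this] using hv
    | one => simp
    | mul t₁ t₂ _ _ h₁ h₂ =>
      intro u hu
      simpa [mul_assoc] using h₂ (h₁ hu)
  have htop (t : G) : t ∈ Submonoid.closure X := by
    rw [← Subgroup.closure_toSubmonoid_of_isOfFinOrder hfin, hX]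
    trivial
  exact ⟨fun u hu t => by simpa using hconj t⁻¹ (htop _) hu⟩

theorem normal_closure_insert {S X : Set G} (hX : Subgroup.closure X = ⊤)
    (hfin : ∀ t ∈ X, IsOfFinOrder t) (hS : (Subgroup.closure S).Normal)
    (h : ∀ t ∈ X, ∃ v ∈ Subgroup.closure (insert g S), SemiconjBy t v g) :
    (Subgroup.closure (insert g S)).Normal := by
  refine normal_closure_of_semiconjBy hX hfin fun t ht u hu => ?_
  obtain rfl | hu := hu
  · exact h t ht
  · exact ⟨t⁻¹ * u * t, Subgroup.closure_mono (Set.subset_insert g S)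
      (by simpa using hS.conj_mem u (Subgroup.subset_closure hu) t⁻¹),
      by simp [SemiconjBy, mul_assoc]⟩

theorem card_closure_insert {S : Set G} (hS : (Subgroup.closure S).Normal) (ℓ n : ℕ)
    [Fact ℓ.Prime] (hnot : g ^ ℓ ^ n ∉ Subgroup.closure S)
    (hmem : g ^ ℓ ^ (n + 1) ∈ Subgroup.closure S) :
    Nat.card (Subgroup.closure (insert g S)) = Nat.card (Subgroup.closure S) * ℓ ^ (n + 1) := by
  set N := Subgroup.closure S
  have hindex : N.relIndex (Subgroup.zpowers g) = ℓ ^ (n + 1) :=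
    calc N.relIndex (Subgroup.zpowers g)
        = Nat.card ((Subgroup.zpowers g).map (QuotientGroup.mk' N)) := by
          rw [← Subgroup.relIndex_ker, QuotientGroup.ker_mk']
      _ = orderOf (g : G ⧸ N) := by rw [MonoidHom.map_zpowers, Nat.card_zpowers]; rfl
      _ = ℓ ^ (n + 1) := by
        refine orderOf_eq_prime_pow ?_ ?_
        · rwa [← QuotientGroup.mk_pow, QuotientGroup.eq_one_iff]
        · rwa [← QuotientGroup.mk_pow, QuotientGroup.eq_one_iff]
  have hsup : Subgroup.closure (insert g S) = Subgroup.zpowers g ⊔ N := by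
    rw [Set.insert_eq, Subgroup.closure_union, Subgroup.zpowers_eq_closure]
  rw [hsup, ← Subgroup.relIndex_bot_left,
    ← Subgroup.relIndex_mul_relIndex _ _ _ bot_le le_sup_right, Subgroup.relIndex_bot_left,
    Subgroup.relIndex_sup_right, hindex]

theorem card_closure_insert_of_mul_self_mem {S : Set G} (hS : (Subgroup.closure S).Normal)
    (hnot : g ∉ Subgroup.closure S) (hmem : g * g ∈ Subgroup.closure S) :
    Nat.card (Subgroup.closure (insert g S)) = Nat.card (Subgroup.closure S) * 2 :=
  card_closure_insert hS 2 0 (by simpa using hnot) (by simpa [sq] using hmem)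

theorem card_closure_insert_of_pow_four_mem {S : Set G} (hS : (Subgroup.closure S).Normal)
    (hnot : g ^ 2 ∉ Subgroup.closure S) (hmem : g ^ 4 ∈ Subgroup.closure S) :
    Nat.card (Subgroup.closure (insert g S)) = Nat.card (Subgroup.closure S) * 4 :=
  card_closure_insert hS 2 1 hnot hmem

theorem not_mem_closure_of_semiconjBy {S : Set G} (hS : ∀ v ∈ S, Commute u v)
    (hg : SemiconjBy u (k * g) g) (hk : k ≠ 1) : g ∉ Subgroup.closure S := by
  intro hmem
  have hle : Subgroup.closure S ≤ Subgroup.centralizer {u} :=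
    (Subgroup.closure_le _).mpr fun v hv =>
      Subgroup.mem_centralizer_singleton_iff.mpr (hS v hv).symm
  have hcomm : Commute u g := (Subgroup.mem_centralizer_singleton_iff.mp (hle hmem)).symm
  exact hk (mul_eq_right.mp (eq_of_semiconjBy hg hcomm))

end Group

/-- Elements `a, b, c` of a group `G` satisfying the defining relations of `U`; equivalently, a
homomorphism `U →* G`. -/
structure Realization (G : Type*) [Group G] where
  a : G
  b : G
  c : G
  a_pow_four : a ^ 4 = 1
  b_pow_four : b ^ 4 = 1
  c_pow_four : c ^ 4 = 1
  ab_sq : (a * b) ^ 2 = 1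
  bc_sq : (b * c) ^ 2 = 1
  abc_sq : (a * b * c) ^ 2 = 1
  a_sq_b_sq_pow_four : (a ^ 2 * b ^ 2) ^ 4 = 1
  a_sq_c_sq_b_sq : a ^ 2 * c ^ 2 * b ^ 2 * (a * c) ^ 2 = 1
  commutator_b_sq : a⁻¹ * c * a * c⁻¹ * b ^ 2 = 1

namespace Realization

open Subgroup

variable {G : Type*} [Group G] (T : Realization G)

/-- The square of `b`, an involution commuting with `b`. -/
def s : G := T.b ^ 2

/-- The conjugate `a⁻¹sa` of the involution `s`. -/
def e : G := T.a⁻¹ * T.s * T.a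

/-- The conjugate `c⁻¹sc` of the involution `s`. -/
def q : G := T.c⁻¹ * T.s * T.c

/-- The commutator of the involutions `a²` and `s`. -/
def p : G := (T.a ^ 2 * T.s) ^ 2

/-- The commutator of the involutions `s` and `e`, which turns out to be central. -/
def z : G := (T.s * T.e) ^ 2

/-- The image of the element `x = (ac⁻¹)⁴` of `U`. -/
def x : G := (T.a * T.c⁻¹) ^ 4

/-- The image of the element `y = (c⁻¹a)⁴` of `U`. -/
def y : G := (T.c⁻¹ * T.a) ^ 4

theorem s_mul_s : T.s * T.s = 1 := by rw [s, ← pow_add, T.b_pow_four]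

theorem a_sq_mul_a_sq : T.a ^ 2 * T.a ^ 2 = 1 := by rw [← pow_add, T.a_pow_four]

theorem c_sq_mul_c_sq : T.c ^ 2 * T.c ^ 2 = 1 := by rw [← pow_add, T.c_pow_four]

theorem semiconjBy_a_e : SemiconjBy T.a T.e T.s := by
  simp [SemiconjBy, e, mul_assoc]

theorem semiconjBy_c_q : SemiconjBy T.c T.q T.s := by
  simp [SemiconjBy, q, mul_assoc]

theorem e_mul_e : T.e * T.e = 1 := mul_self_eq_one_of_semiconjBy T.semiconjBy_a_e T.s_mul_s

theorem q_mul_q : T.q * T.q = 1 := mul_self_eq_one_of_semiconjBy T.semiconjBy_c_q T.s_mul_s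

theorem commute_b_s : Commute T.b T.s := (Commute.refl T.b).pow_right 2

theorem semiconjBy_c_a : SemiconjBy T.c T.a (T.a * T.s) := by
  have hs : T.s⁻¹ = T.s := inv_eq_of_mul_eq_one_left T.s_mul_s
  calc T.c * T.a = T.a * (T.a⁻¹ * T.c * T.a * T.c⁻¹ * T.b ^ 2) * (T.b ^ 2)⁻¹ * T.c := by
        group
    _ = T.a * T.s * T.c := by rw [T.commutator_b_sq, mul_one, ← s, hs]

theorem semiconjBy_b_a : SemiconjBy T.b T.a (T.a⁻¹ * T.s) :=
  semiconjBy_inv_mul_sq T.b_pow_four T.ab_sq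

theorem semiconjBy_b_c : SemiconjBy T.b T.c (T.c⁻¹ * T.s) := by
  refine semiconjBy_inv_mul_sq T.b_pow_four ?_
  calc (T.c * T.b) ^ 2 = T.b⁻¹ * (T.b * T.c) ^ 2 * T.b := by simp [sq, mul_assoc]
    _ = 1 := by rw [T.bc_sq]; group

theorem commute_a_sq_s_mul_c_sq : Commute (T.a ^ 2) (T.s * T.c ^ 2) := by
  have hac : (T.a * T.c) ^ 2 = T.a ^ 2 * (T.s * T.c ^ 2) :=
    calc (T.a * T.c) ^ 2 = T.a * (T.c * T.a) * T.c := by simp only [sq, mul_assoc]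
      _ = T.a ^ 2 * (T.s * T.c ^ 2) := by rw [T.semiconjBy_c_a.eq]; simp only [sq, mul_assoc]
  have hinv : (T.s * T.c ^ 2)⁻¹ = T.c ^ 2 * T.s := by
    rw [mul_inv_rev, inv_eq_of_mul_eq_one_left T.s_mul_s, inv_eq_of_mul_eq_one_left T.c_sq_mul_c_sq]
  have hrel : T.a ^ 2 * (T.s * T.c ^ 2)⁻¹ * (T.a ^ 2 * (T.s * T.c ^ 2)) = 1 := by
    rw [hinv, ← hac, ← mul_assoc]
    exact T.a_sq_c_sq_b_sq
  refine Commute.inv_right_iff.mp ?_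
  calc T.a ^ 2 * (T.s * T.c ^ 2)⁻¹ = (T.a ^ 2 * (T.s * T.c ^ 2))⁻¹ :=
        eq_inv_of_mul_eq_one_left hrel
    _ = (T.s * T.c ^ 2)⁻¹ * T.a ^ 2 := by
      rw [mul_inv_rev, inv_eq_of_mul_eq_one_left T.a_sq_mul_a_sq]

theorem p_mul_p : T.p * T.p = 1 := by
  rw [p, ← pow_add]; exact T.a_sq_b_sq_pow_four

theorem commute_a_sq_p : Commute (T.a ^ 2) T.p :=
  commute_mul_sq_left T.a_sq_mul_a_sq T.s_mul_s T.a_sq_b_sq_pow_four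

theorem commute_s_p : Commute T.s T.p :=
  commute_mul_sq_right T.a_sq_mul_a_sq T.s_mul_s T.a_sq_b_sq_pow_four

theorem semiconjBy_a_sq_s : SemiconjBy (T.a ^ 2) T.s (T.p * T.s) := by
  have hp : T.p = T.a ^ 2 * T.s * (T.a ^ 2 * T.s) := sq _
  calc T.a ^ 2 * T.s = T.p * (T.a ^ 2 * T.s)⁻¹ := by rw [hp, mul_inv_cancel_right]
    _ = T.p * T.s * T.a ^ 2 := by
      rw [mul_inv_rev, inv_eq_of_mul_eq_one_left T.s_mul_s,
        inv_eq_of_mul_eq_one_left T.a_sq_mul_a_sq, mul_assoc]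

theorem semiconjBy_a_sq_c_sq : SemiconjBy (T.a ^ 2) (T.c ^ 2) (T.p * T.c ^ 2) := by
  have h := T.semiconjBy_a_sq_s.inv_right.mul_right T.commute_a_sq_s_mul_c_sq
  have hp : (T.p * T.s)⁻¹ * T.s = T.p := by
    rw [inv_mul_eq_iff_eq_mul, mul_assoc, T.commute_s_p.eq, ← mul_assoc, T.p_mul_p, one_mul]
  rwa [inv_mul_cancel_left, ← mul_assoc, hp] at h

theorem commute_c_sq_p : Commute (T.c ^ 2) T.p := by
  have hp : (T.a ^ 2 * T.c ^ 2) ^ 2 = T.p :=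
    calc (T.a ^ 2 * T.c ^ 2) ^ 2 = T.p * T.c ^ 2 * (T.a ^ 2 * T.a ^ 2) * T.c ^ 2 := by
          rw [sq]; nth_rw 1 [T.semiconjBy_a_sq_c_sq.eq]; simp only [mul_assoc]
      _ = T.p := by rw [T.a_sq_mul_a_sq, mul_one, mul_assoc, T.c_sq_mul_c_sq, mul_one]
  rw [← hp]
  refine commute_mul_sq_right T.a_sq_mul_a_sq T.c_sq_mul_c_sq ?_
  calc (T.a ^ 2 * T.c ^ 2) ^ 4 = ((T.a ^ 2 * T.c ^ 2) ^ 2) ^ 2 := by rw [← pow_mul]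
    _ = 1 := by rw [hp, sq, T.p_mul_p]

theorem semiconjBy_c_a_sq : SemiconjBy T.c (T.a ^ 2) (T.a ^ 2 * T.e * T.s) := by
  have h : (T.a * T.s) ^ 2 = T.a ^ 2 * T.e * T.s :=
    calc (T.a * T.s) ^ 2 = T.a * (T.s * T.a) * T.s := by simp only [sq, mul_assoc]
      _ = T.a ^ 2 * T.e * T.s := by rw [← T.semiconjBy_a_e.eq]; simp only [sq, mul_assoc]
  exact h ▸ T.semiconjBy_c_a.pow_right 2

theorem semiconjBy_c_sq_a_sq : SemiconjBy (T.c ^ 2) (T.a ^ 2) (T.a ^ 2 * T.p) := by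
  rw [SemiconjBy, T.commute_a_sq_p.eq, mul_assoc, T.semiconjBy_a_sq_c_sq.eq, mul_assoc T.p,
    ← mul_assoc, p_mul_p, one_mul]

theorem semiconjBy_c_a_sq_mul_e_mul_s : SemiconjBy T.c (T.a ^ 2 * T.e * T.s) (T.a ^ 2 * T.p) :=
  calc T.c * (T.a ^ 2 * T.e * T.s) = T.c ^ 2 * T.a ^ 2 * T.c⁻¹ := by
        rw [sq T.c, mul_assoc T.c T.c, T.semiconjBy_c_a_sq.eq]; group
    _ = T.a ^ 2 * T.p * T.c := by rw [T.semiconjBy_c_sq_a_sq.eq]; group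

theorem semiconjBy_a_s_a_sq_mul_e_mul_a_sq : SemiconjBy T.a T.s (T.a ^ 2 * T.e * T.a ^ 2) :=
  calc T.a * T.s = T.a * T.s * (T.a ^ 2 * T.a ^ 2) := by rw [T.a_sq_mul_a_sq, mul_one]
    _ = T.a * (T.s * T.a) * T.a * T.a ^ 2 := by simp only [sq, mul_assoc]
    _ = T.a ^ 2 * T.e * T.a ^ 2 * T.a := by rw [← T.semiconjBy_a_e.eq]; simp only [sq, mul_assoc]

theorem semiconjBy_c_a_sq_conj :
    SemiconjBy T.c (T.a ^ 2 * T.s * (T.a ^ 2 * T.e * T.a ^ 2)) (T.a ^ 2) := by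
  have hsc : SemiconjBy (T.s * T.c) (T.a ^ 2 * T.e * T.s) (T.a ^ 2) :=
    calc T.s * T.c * (T.a ^ 2 * T.e * T.s) = T.s * T.c * (T.c * T.a ^ 2 * T.c⁻¹) := by
          rw [T.semiconjBy_c_a_sq.eq, mul_inv_cancel_right]
      _ = T.s * T.c ^ 2 * T.a ^ 2 * T.c⁻¹ := by simp only [sq, mul_assoc]
      _ = T.a ^ 2 * (T.s * T.c) := by rw [← T.commute_a_sq_s_mul_c_sq.eq]; group
  have hca : SemiconjBy (T.c * T.a) (T.a ^ 2 * T.e * T.s) (T.a ^ 2) := by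
    rw [T.semiconjBy_c_a.eq, mul_assoc]
    exact SemiconjBy.mul_left (Commute.self_pow T.a 2) hsc
  have ha : SemiconjBy T.a (T.a ^ 2 * T.e * T.s) (T.a ^ 2 * T.s * (T.a ^ 2 * T.e * T.a ^ 2)) :=
    (SemiconjBy.mul_right (Commute.self_pow T.a 2) T.semiconjBy_a_e).mul_right
      T.semiconjBy_a_s_a_sq_mul_e_mul_a_sq
  refine mul_right_cancel (b := T.a) ?_
  rw [mul_assoc, ← ha.eq, ← mul_assoc, hca.eq, mul_assoc]

theorem commute_c_p : Commute T.c T.p := by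
  have h := T.semiconjBy_c_a_sq_conj.mul_right T.semiconjBy_c_a_sq_mul_e_mul_s
  have hl : T.a ^ 2 * T.s * (T.a ^ 2 * T.e * T.a ^ 2) * (T.a ^ 2 * T.e * T.s) = T.p := by
    have hp : T.p = T.a ^ 2 * T.s * (T.a ^ 2 * T.s) := sq _
    grind [T.a_sq_mul_a_sq, T.e_mul_e]
  have hr : T.a ^ 2 * (T.a ^ 2 * T.p) = T.p := by
    rw [← mul_assoc, T.a_sq_mul_a_sq, one_mul]
  rwa [hl, hr] at h

theorem s_mul_a_sq_mul_s : T.s * T.a ^ 2 * T.s = T.p * T.a ^ 2 := by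
  rw [mul_assoc, T.semiconjBy_a_sq_s.eq, ← mul_assoc, ← mul_assoc, T.commute_s_p.eq, mul_assoc T.p,
    T.s_mul_s, mul_one]

theorem commute_e_p : Commute T.e T.p := by
  have h := T.semiconjBy_c_a_sq_mul_e_mul_s.mul_right T.semiconjBy_c_a_sq_conj
  have hr : T.a ^ 2 * T.p * T.a ^ 2 = T.p := by
    rw [T.commute_a_sq_p.eq, mul_assoc, T.a_sq_mul_a_sq, mul_one]
  rw [hr] at h
  have hl := eq_of_semiconjBy h T.commute_c_p
  have hepe : T.e * T.p * T.e = T.p :=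
    calc T.e * T.p * T.e
        = T.a ^ 2 * (T.a ^ 2 * T.e * (T.p * T.a ^ 2) * T.a ^ 2 * T.e * T.a ^ 2) * T.a ^ 2 := by
          grind [T.a_sq_mul_a_sq]
      _ = T.p := by rw [← T.s_mul_a_sq_mul_s]; grind [T.a_sq_mul_a_sq, T.commute_a_sq_p.eq]
  calc T.e * T.p = T.e * T.p * T.e * T.e := by rw [mul_assoc, T.e_mul_e, mul_one]
    _ = T.p * T.e := by rw [hepe]

theorem semiconjBy_a_sq_e : SemiconjBy (T.a ^ 2) T.e (T.s * T.e * T.s * T.p) := by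
  have hexpand : T.a ^ 2 * T.e =
      T.a ^ 2 * T.e * T.s * (T.a ^ 2 * T.e * T.s) * T.s * T.e * T.a ^ 2 * T.s := by
    grind [T.a_sq_mul_a_sq, T.e_mul_e, T.s_mul_s]
  have hinv := mul_self_eq_one_of_semiconjBy T.semiconjBy_c_a_sq_mul_e_mul_s (by
    grind [T.commute_a_sq_p.eq, T.a_sq_mul_a_sq, T.p_mul_p])
  calc T.a ^ 2 * T.e
      = T.s * T.e * T.s * (T.s * T.a ^ 2 * T.s) := by
        rw [hexpand, hinv, one_mul, mul_assoc (_ * _) T.s, ← mul_assoc T.s, ← mul_assoc T.s,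
          T.s_mul_s, one_mul, mul_assoc]
    _ = T.s * T.e * T.s * T.p * T.a ^ 2 := by rw [T.s_mul_a_sq_mul_s, mul_assoc _ T.p]

theorem a_sq_mul_e_mul_a_sq_eq_s_mul_e_mul_s_mul_p :
    T.a ^ 2 * T.e * T.a ^ 2 = T.s * T.e * T.s * T.p := by
  rw [T.semiconjBy_a_sq_e.eq, mul_assoc, T.a_sq_mul_a_sq, mul_one]

theorem commute_p_z : Commute T.p T.z :=
  (T.commute_s_p.symm.mul_right T.commute_e_p.symm).pow_right 2

theorem semiconjBy_a_z_mul_p : SemiconjBy T.a (T.z * T.p) T.p := by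
  have hA : SemiconjBy T.a (T.a ^ 2) (T.a ^ 2) := Commute.self_pow T.a 2
  have h := ((hA.mul_right T.semiconjBy_a_e).mul_right hA).mul_right T.semiconjBy_a_e
  have hl : T.a ^ 2 * T.e * T.a ^ 2 * T.e = T.z * T.p :=
    calc T.a ^ 2 * T.e * T.a ^ 2 * T.e = T.s * T.e * T.s * (T.p * T.e) := by
          rw [T.a_sq_mul_e_mul_a_sq_eq_s_mul_e_mul_s_mul_p, mul_assoc _ T.p]
      _ = T.z * T.p := by rw [← T.commute_e_p.eq, z, sq]; simp only [mul_assoc]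
  have hr : T.a ^ 2 * T.s * T.a ^ 2 * T.s = T.p := by rw [p, sq (_ * _), mul_assoc _ (_ ^ 2)]
  rwa [hl, hr] at h

theorem z_mul_z : T.z * T.z = 1 := by
  have h := mul_self_eq_one_of_semiconjBy T.semiconjBy_a_z_mul_p T.p_mul_p
  grind [T.commute_p_z.eq, T.p_mul_p]

theorem s_mul_e_pow_four : (T.s * T.e) ^ 4 = 1 := by
  rw [pow_mul _ 2 2, ← z, sq, T.z_mul_z]

theorem commute_s_z : Commute T.s T.z := commute_mul_sq_left T.s_mul_s T.e_mul_e T.s_mul_e_pow_four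

theorem commute_e_z : Commute T.e T.z := commute_mul_sq_right T.s_mul_s T.e_mul_e T.s_mul_e_pow_four

theorem semiconjBy_s_z_mul_e : SemiconjBy T.s (T.z * T.e) T.e :=
  calc T.s * (T.z * T.e) = T.s * T.s * T.e * T.s * (T.e * T.e) := by
        rw [z, sq]; simp only [mul_assoc]
    _ = T.e * T.s := by rw [T.s_mul_s, T.e_mul_e, one_mul, mul_one]

theorem a_sq_mul_e_mul_a_sq : T.a ^ 2 * T.e * T.a ^ 2 = T.e * T.z * T.p := by
  have h : T.s * T.e * T.s = T.e * T.z := by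
    rw [mul_assoc, ← T.semiconjBy_s_z_mul_e.eq, ← mul_assoc, T.s_mul_s, one_mul, T.commute_e_z.eq]
  rw [T.a_sq_mul_e_mul_a_sq_eq_s_mul_e_mul_s_mul_p, h]

theorem semiconjBy_a_s : SemiconjBy T.a T.s (T.e * T.z * T.p) :=
  T.a_sq_mul_e_mul_a_sq ▸ T.semiconjBy_a_s_a_sq_mul_e_mul_a_sq

theorem semiconjBy_a_p_mul_s : SemiconjBy T.a (T.p * T.s) T.e :=
  mul_left_cancel (a := T.a) <|
    calc T.a * (T.a * (T.p * T.s)) = T.a ^ 2 * (T.p * T.s) := by rw [sq, mul_assoc]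
      _ = T.s * T.a ^ 2 := by
        grind [T.semiconjBy_a_sq_s.eq, T.commute_a_sq_p.eq, T.p_mul_p, T.commute_s_p.eq]
      _ = T.a * (T.e * T.a) := by rw [sq, ← mul_assoc, ← mul_assoc, T.semiconjBy_a_e.eq]

theorem e_mul_s_sq : (T.e * T.s) ^ 2 = T.z :=
  (mul_sq_comm_of_pow_four T.s_mul_s T.e_mul_e T.s_mul_e_pow_four).symm

theorem commute_a_z : Commute T.a T.z := by
  have hz : (T.e * (T.p * T.s)) ^ 2 = T.z := by
    have hcomm : Commute T.p (T.e * T.s) := T.commute_e_p.symm.mul_right T.commute_s_p.symm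
    rw [← mul_assoc, T.commute_e_p.eq, mul_assoc, hcomm.mul_pow, sq T.p, T.p_mul_p, one_mul,
      T.e_mul_s_sq]
  have h := (T.semiconjBy_a_e.mul_right T.semiconjBy_a_p_mul_s).pow_right 2
  rwa [hz, ← z] at h

theorem inv_s : T.s⁻¹ = T.s := inv_eq_of_mul_eq_one_left T.s_mul_s

theorem commute_s_z_mul_p : Commute T.s (T.z * T.p) := T.commute_s_z.mul_right T.commute_s_p

theorem commute_c_z : Commute T.c T.z := by
  -- Both `a` and `c * a = a * s * c` conjugate `z p` to `p`, so `c` commutes with `z p`.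
  have hca : SemiconjBy (T.c * T.a) (T.z * T.p) T.p :=
    SemiconjBy.mul_left T.commute_c_p T.semiconjBy_a_z_mul_p
  rw [T.semiconjBy_c_a.eq] at hca
  have h := commute_of_semiconjBy_mul hca (T.semiconjBy_a_z_mul_p.mul_left T.commute_s_z_mul_p)
  simpa only [mul_inv_cancel_right] using h.mul_right T.commute_c_p.inv_right

theorem semiconjBy_b_s_mul_inv_a : SemiconjBy T.b (T.s * T.a⁻¹) T.a := by
  have h := SemiconjBy.mul_right T.commute_b_s T.semiconjBy_b_a.inv_right
  rwa [mul_inv_rev, inv_inv, inv_s, ← mul_assoc, s_mul_s, one_mul] at h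

theorem semiconjBy_b_s_mul_inv_c : SemiconjBy T.b (T.s * T.c⁻¹) T.c := by
  have h := SemiconjBy.mul_right T.commute_b_s T.semiconjBy_b_c.inv_right
  rwa [mul_inv_rev, inv_inv, inv_s, ← mul_assoc, s_mul_s, one_mul] at h

theorem semiconjBy_b_e : SemiconjBy T.b (T.e * T.z * T.p) T.e := by
  have h := (T.semiconjBy_b_s_mul_inv_a.inv_right.mul_right T.commute_b_s).mul_right
    T.semiconjBy_b_s_mul_inv_a
  have hl : (T.s * T.a⁻¹)⁻¹ * T.s * (T.s * T.a⁻¹) = T.e * T.z * T.p := by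
    rw [← mul_inv_cancel_right (T.e * T.z * T.p) T.a, ← T.semiconjBy_a_s.eq]
    group
  rwa [hl] at h

theorem commute_b_z : Commute T.b T.z := by
  have h := (SemiconjBy.mul_right T.commute_b_s T.semiconjBy_b_e).pow_right 2
  have hl : (T.s * (T.e * T.z * T.p)) ^ 2 = T.z := by
    have hcomm : Commute (T.s * T.e) (T.z * T.p) :=
      T.commute_s_z_mul_p.mul_left (T.commute_e_z.mul_right T.commute_e_p)
    have hzp : (T.z * T.p) ^ 2 = 1 := by
      rw [T.commute_p_z.symm.mul_pow, sq, sq, T.z_mul_z, T.p_mul_p, one_mul]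
    rw [mul_assoc T.e, ← mul_assoc, hcomm.mul_pow, hzp, mul_one, z]
  rwa [hl, ← z] at h

theorem commute_q_p : Commute T.q T.p :=
  semiconjBy_of_conj T.semiconjBy_c_q T.commute_c_p T.commute_c_p T.commute_s_p

theorem commute_q_z : Commute T.q T.z :=
  semiconjBy_of_conj T.semiconjBy_c_q T.commute_c_z T.commute_c_z T.commute_s_z

theorem semiconjBy_c_a_mul_q : SemiconjBy T.c (T.a * T.q) T.a := by
  have h := T.semiconjBy_c_a.mul_right T.semiconjBy_c_q
  rwa [mul_assoc T.a, s_mul_s, mul_one] at h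

theorem q_mul_a_mul_q : T.q * T.a * T.q = T.a * (T.s * T.e * T.z * T.p) := by
  have h := eq_of_semiconjBy (T.semiconjBy_c_a_mul_q.pow_right 2) T.semiconjBy_c_a_sq_conj
  rw [a_sq_mul_e_mul_a_sq] at h
  simpa only [sq, mul_assoc, mul_left_cancel_iff] using h

theorem semiconjBy_a_q : SemiconjBy T.a (T.s * T.e * T.z * T.p * T.q) T.q := by
  rw [SemiconjBy, ← mul_assoc, ← q_mul_a_mul_q, mul_assoc, q_mul_q, mul_one]

theorem semiconjBy_c_e : SemiconjBy T.c (T.q * T.s * T.e * T.z * T.p) T.e := by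
  have h := (T.semiconjBy_c_a_mul_q.inv_right.mul_right T.semiconjBy_c_q).mul_right
    T.semiconjBy_c_a_mul_q
  have hl : (T.a * T.q)⁻¹ * T.q * (T.a * T.q) = T.q * T.s * T.e * T.z * T.p := by
    have hq : T.q⁻¹ = T.q := inv_eq_of_mul_eq_one_left T.q_mul_q
    rw [mul_assoc, ← mul_assoc T.q, q_mul_a_mul_q, mul_inv_rev, hq]
    group
  rwa [hl] at h

theorem semiconjBy_a_sq_q : SemiconjBy (T.a ^ 2) (T.z * T.p * T.q) T.q := by
  have h : SemiconjBy T.a (T.e * (T.p * T.s) * T.z * (T.z * T.p) * (T.s * T.e * T.z * T.p * T.q))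
      (T.s * T.e * T.z * T.p * T.q) :=
    (((T.semiconjBy_a_e.mul_right T.semiconjBy_a_p_mul_s).mul_right T.commute_a_z).mul_right
      T.semiconjBy_a_z_mul_p).mul_right T.semiconjBy_a_q
  have hl : T.e * (T.p * T.s) * T.z * (T.z * T.p) * (T.s * T.e * T.z * T.p * T.q)
      = T.z * T.p * T.q := by
    grind [T.z_mul_z, T.p_mul_p, T.s_mul_s, T.e_mul_e, T.commute_s_p.eq, T.commute_e_p.eq,
      T.commute_s_z.eq, T.commute_e_z.eq, T.commute_p_z.eq]
  rw [hl] at h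
  exact sq T.a ▸ T.semiconjBy_a_q.mul_left h

/-- The conjugate `csc⁻¹` of the involution `s`. -/
def q' : G := T.c * T.s * T.c⁻¹

theorem c_sq_mul_q_mul_c_sq : T.c ^ 2 * T.q * T.c ^ 2 = T.q' :=
  calc T.c ^ 2 * T.q * T.c ^ 2 = T.c * T.s * T.c⁻¹ * T.c ^ 4 := by rw [q]; group
    _ = T.q' := by rw [T.c_pow_four, mul_one, q']

theorem semiconjBy_a_sq_q' : SemiconjBy (T.a ^ 2) (T.z * T.p * T.q') T.q' := by
  have h := (T.semiconjBy_a_sq_c_sq.mul_right T.semiconjBy_a_sq_q).mul_right T.semiconjBy_a_sq_c_sq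
  have hl : T.c ^ 2 * (T.z * T.p * T.q) * T.c ^ 2 = T.z * T.p * T.q' := by
    have hzp : Commute (T.c ^ 2) (T.z * T.p) :=
      (T.commute_c_z.pow_left 2).mul_right T.commute_c_sq_p
    rw [← mul_assoc, hzp.eq, ← c_sq_mul_q_mul_c_sq]
    simp only [mul_assoc]
  have hr : T.p * T.c ^ 2 * T.q * (T.p * T.c ^ 2) = T.q' := by
    have hp : Commute (T.c ^ 2 * T.q) T.p := T.commute_c_sq_p.mul_left T.commute_q_p
    rw [mul_assoc T.p, ← hp.eq, mul_assoc, ← mul_assoc T.p, p_mul_p, one_mul, c_sq_mul_q_mul_c_sq]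
  rwa [hl, hr] at h

theorem semiconjBy_b_q' : SemiconjBy T.b T.q' T.q := by
  have h := (T.semiconjBy_b_s_mul_inv_c.inv_right.mul_right T.commute_b_s).mul_right
    T.semiconjBy_b_s_mul_inv_c
  have hl : (T.s * T.c⁻¹)⁻¹ * T.s * (T.s * T.c⁻¹) = T.q' := by
    rw [q']; group
  rwa [hl] at h

theorem x_eq : T.x = T.z * T.q * T.q' := by
  have hsq : (T.a * T.c⁻¹) ^ 2 = T.a ^ 2 * T.q * T.c ^ 2 := by
    have hc : T.c⁻¹ * T.c⁻¹ = T.c ^ 2 := by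
      rw [← mul_inv_rev, ← sq, inv_eq_of_mul_eq_one_left T.c_sq_mul_c_sq]
    calc (T.a * T.c⁻¹) ^ 2 = T.a * (T.c⁻¹ * T.a) * T.c⁻¹ := by simp only [sq, mul_assoc]
      _ = T.a ^ 2 * T.q * (T.c⁻¹ * T.c⁻¹) := by
        rw [T.semiconjBy_c_a_mul_q.inv_symm_left.eq]; simp only [sq, mul_assoc]
      _ = T.a ^ 2 * T.q * T.c ^ 2 := by rw [hc]
  have hq : T.a ^ 2 * T.q * T.a ^ 2 = T.z * T.p * T.q := by
    rw [mul_assoc, ← T.semiconjBy_a_sq_q.eq, ← mul_assoc, a_sq_mul_a_sq, one_mul]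
  calc T.x = ((T.a * T.c⁻¹) ^ 2) ^ 2 := by rw [x, ← pow_mul]
    _ = T.a ^ 2 * T.q * (T.c ^ 2 * T.a ^ 2) * T.q * T.c ^ 2 := by
      rw [hsq, sq]; simp only [mul_assoc]
    _ = T.a ^ 2 * T.q * T.a ^ 2 * T.p * (T.c ^ 2 * T.q * T.c ^ 2) := by
      rw [T.semiconjBy_c_sq_a_sq.eq]; simp only [mul_assoc]
    _ = T.z * T.q * T.q' := by
      rw [hq, c_sq_mul_q_mul_c_sq, mul_assoc T.z, ← T.commute_q_p.eq, ← mul_assoc,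
        mul_assoc _ T.p, mul_assoc _ T.p, ← mul_assoc T.p, p_mul_p, one_mul]

theorem semiconjBy_a_y : SemiconjBy T.a T.y T.x :=
  SemiconjBy.pow_right (mul_assoc T.a T.c⁻¹ T.a).symm 4

theorem semiconjBy_c_y : SemiconjBy T.c T.y T.x := by
  have h : SemiconjBy T.c (T.c⁻¹ * T.a) (T.a * T.c⁻¹) := by simp [SemiconjBy]
  exact h.pow_right 4

theorem q'_mul_q' : T.q' * T.q' = 1 :=
  mul_self_eq_one_of_semiconjBy T.semiconjBy_b_q' T.q_mul_q

theorem commute_q'_z : Commute T.q' T.z :=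
  semiconjBy_of_conj T.semiconjBy_b_q' T.commute_b_z T.commute_b_z T.commute_q_z

theorem inv_x : T.x⁻¹ = T.z * T.q' * T.q := by
  have hz : Commute (T.q' * T.q) T.z := T.commute_q'_z.mul_left T.commute_q_z
  rw [x_eq, mul_assoc, mul_inv_rev, mul_inv_rev, inv_eq_of_mul_eq_one_left T.q_mul_q,
    inv_eq_of_mul_eq_one_left T.q'_mul_q', inv_eq_of_mul_eq_one_left T.z_mul_z, hz.eq, mul_assoc]

theorem commute_a_sq_x : Commute (T.a ^ 2) T.x := by
  have hz : Commute (T.a ^ 2) T.z := T.commute_a_z.pow_left 2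
  have h := (SemiconjBy.mul_right hz T.semiconjBy_a_sq_q).mul_right T.semiconjBy_a_sq_q'
  have hl : T.z * (T.z * T.p * T.q) * (T.z * T.p * T.q') = T.z * T.q * T.q' := by
    grind [T.z_mul_z, T.p_mul_p, T.commute_p_z.eq, T.commute_q_z.eq, T.commute_q_p.eq]
  rwa [hl, ← x_eq] at h

theorem semiconjBy_c_sq_q' : SemiconjBy (T.c ^ 2) T.q' T.q := by
  rw [SemiconjBy, ← c_sq_mul_q_mul_c_sq, ← mul_assoc, ← mul_assoc, c_sq_mul_c_sq, one_mul]

theorem semiconjBy_c_sq_q : SemiconjBy (T.c ^ 2) T.q T.q' := by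
  rw [SemiconjBy, ← c_sq_mul_q_mul_c_sq, mul_assoc, mul_assoc, c_sq_mul_c_sq, mul_one]

theorem semiconjBy_c_sq_inv_x : SemiconjBy (T.c ^ 2) T.x⁻¹ T.x := by
  rw [inv_x, x_eq]
  exact (SemiconjBy.mul_right (T.commute_c_z.pow_left 2) T.semiconjBy_c_sq_q').mul_right
    T.semiconjBy_c_sq_q

theorem semiconjBy_s_inv_y : SemiconjBy T.s T.y⁻¹ T.y := by
  have hcs : SemiconjBy T.c T.s T.q' := by simp [SemiconjBy, q']
  have hq' : SemiconjBy T.q' T.x⁻¹ T.x := by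
    calc T.q' * T.x⁻¹ = T.z * T.q' * T.q' * T.q := by
          rw [inv_x, ← mul_assoc, ← mul_assoc, T.commute_q'_z.eq]
      _ = T.z * T.q * T.q' * T.q' := by
          rw [mul_assoc T.z, q'_mul_q', mul_assoc _ T.q', q'_mul_q', mul_one, mul_one]
      _ = T.x * T.q' := by rw [x_eq]
  exact semiconjBy_of_conj hcs T.semiconjBy_c_y.inv_right T.semiconjBy_c_y hq'

theorem semiconjBy_b_y : SemiconjBy T.b T.y T.x := by
  have h := (T.semiconjBy_b_s_mul_inv_a.mul_right T.semiconjBy_b_s_mul_inv_c.inv_right).pow_right 4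
  have hl : (T.s * T.a⁻¹ * (T.s * T.c⁻¹)⁻¹) ^ 4 = T.y := by
    have hconj : SemiconjBy T.s (T.a⁻¹ * T.c) (T.s * T.a⁻¹ * (T.s * T.c⁻¹)⁻¹) := by
      simp [SemiconjBy, mul_assoc]
    have hinv : (T.a⁻¹ * T.c) ^ 4 = T.y⁻¹ := by rw [y, ← inv_pow, mul_inv_rev, inv_inv]
    refine mul_right_cancel (b := T.s) ?_
    rw [← T.semiconjBy_s_inv_y.eq, ← hinv, (hconj.pow_right 4).eq]
  rwa [hl] at h

theorem semiconjBy_b_sq_inv_x : SemiconjBy (T.b ^ 2) T.x⁻¹ T.x := by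
  have hb := T.semiconjBy_b_y.inv_symm_left
  exact semiconjBy_of_conj (SemiconjBy.inv_symm_left T.commute_b_s) hb.inv_right hb
    T.semiconjBy_s_inv_y

/-- The set of the three generators. -/
def generators : Set G := {T.a, T.b, T.c}

theorem isOfFinOrder_of_mem_generators : ∀ t ∈ T.generators, IsOfFinOrder t := by
  rintro t (rfl | rfl | rfl) <;> refine isOfFinOrder_iff_pow_eq_one.mpr ⟨4, by simp, ?_⟩
  exacts [T.a_pow_four, T.b_pow_four, T.c_pow_four]

theorem normal_closure_x_y (hgen : closure T.generators = ⊤) :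
    (closure {T.x, T.y}).Normal := by
  have hx : T.x ∈ closure {T.x, T.y} := subset_closure (by simp)
  have hy : T.y ∈ closure {T.x, T.y} := subset_closure (by simp)
  refine normal_closure_of_semiconjBy hgen T.isOfFinOrder_of_mem_generators ?_
  rintro t (rfl | rfl | rfl) u (rfl | rfl)
  exacts [⟨T.y, hy, T.semiconjBy_a_y⟩,
    ⟨T.x, hx, semiconjBy_of_semiconjBy_sq T.semiconjBy_a_y T.commute_a_sq_x⟩,
    ⟨T.y, hy, T.semiconjBy_b_y⟩,
    ⟨T.x⁻¹, inv_mem hx, semiconjBy_of_semiconjBy_sq T.semiconjBy_b_y T.semiconjBy_b_sq_inv_x⟩,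
    ⟨T.y, hy, T.semiconjBy_c_y⟩,
    ⟨T.x⁻¹, inv_mem hx, semiconjBy_of_semiconjBy_sq T.semiconjBy_c_y T.semiconjBy_c_sq_inv_x⟩]

/-- The product of the involutions `s` and `q`, which commute modulo `N`. -/
def r : G := T.s * T.q

/-- The product of the involutions `s` and `e`; its square is `z`. -/
def f : G := T.s * T.e

theorem q'_eq_z_mul_q (hx : T.x = 1) : T.q' = T.z * T.q := by
  rw [x_eq] at hx
  rw [eq_inv_of_mul_eq_one_right hx, mul_inv_rev, inv_eq_of_mul_eq_one_left T.q_mul_q,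
    inv_eq_of_mul_eq_one_left T.z_mul_z, T.commute_q_z.eq]

theorem semiconjBy_c_s (hx : T.x = 1) : SemiconjBy T.c T.s (T.z * T.q) := by
  rw [← T.q'_eq_z_mul_q hx]
  simp [SemiconjBy, q']

theorem e_mul_s : T.e * T.s = T.z * (T.s * T.e) := by
  rw [← T.semiconjBy_s_z_mul_e.eq, ← mul_assoc, T.commute_s_z.eq, mul_assoc]

theorem semiconjBy_a_p_mul_r : SemiconjBy T.a (T.p * T.r) T.r := by
  have h := T.semiconjBy_a_e.mul_right T.semiconjBy_a_q
  have hl : T.e * (T.s * T.e * T.z * T.p * T.q) = T.p * T.r :=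
    calc T.e * (T.s * T.e * T.z * T.p * T.q) = T.e * T.s * (T.e * (T.z * T.p)) * T.q := by
          simp only [mul_assoc]
      _ = T.p * T.r := by
        rw [e_mul_s, r]
        grind [T.e_mul_e, T.z_mul_z, T.commute_p_z.eq, T.commute_s_p.eq, T.commute_s_z.eq]
  rwa [hl] at h

theorem commute_q_s (hx : T.x = 1) : Commute T.q T.s := by
  -- Conjugation by `c * a = a * s * c` sends `z p q s` and `z p s q` to the same element `s q`.
  have hs := T.semiconjBy_c_s hx
  have hzs : SemiconjBy T.c (T.z * T.s) T.q := by
    have h := SemiconjBy.mul_right T.commute_c_z hs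
    rwa [← mul_assoc, z_mul_z, one_mul] at h
  have hca : SemiconjBy (T.c * T.a) (T.z * T.p * (T.q * T.s)) (T.s * T.q) := by
    have ha : SemiconjBy T.a (T.p * (T.q * T.s)) (T.q * T.s) := by
      have hinv : (T.s * T.q)⁻¹ = T.q * T.s := by
        rw [mul_inv_rev, inv_s, inv_eq_of_mul_eq_one_left T.q_mul_q]
      have h := T.semiconjBy_a_p_mul_r.inv_right
      rwa [r, mul_inv_rev, hinv, inv_eq_of_mul_eq_one_left T.p_mul_p,
        (T.commute_q_p.mul_left T.commute_s_p).eq] at h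
    have hc : SemiconjBy T.c (T.z * (T.q * T.s)) (T.s * T.q) := by
      have h := T.semiconjBy_c_q.mul_right hzs
      rwa [← mul_assoc, T.commute_q_z.eq, mul_assoc] at h
    rw [mul_assoc T.z]
    exact hc.mul_left (SemiconjBy.mul_right T.commute_a_z ha)
  have hasc : SemiconjBy (T.a * T.s * T.c) (T.z * T.p * (T.s * T.q)) (T.s * T.q) := by
    have hc : SemiconjBy T.c (T.p * (T.z * T.s) * T.q) (T.p * T.q * T.s) :=
      (SemiconjBy.mul_right T.commute_c_p hzs).mul_right T.semiconjBy_c_q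
    have hs : SemiconjBy T.s (T.p * T.q * T.s) (T.p * T.r) := by
      rw [SemiconjBy, r, mul_assoc T.p, ← mul_assoc, T.commute_s_p.eq]
      simp only [mul_assoc]
    have h := (T.semiconjBy_a_p_mul_r.mul_left hs).mul_left hc
    rwa [← mul_assoc T.p, T.commute_p_z.eq, mul_assoc (T.z * T.p)] at h
  rw [T.semiconjBy_c_a.eq] at hca
  exact mul_left_cancel (eq_of_semiconjBy hca hasc)

theorem r_mul_r (hx : T.x = 1) : T.r * T.r = 1 := by
  rw [r, ← sq, (T.commute_q_s hx).symm.mul_pow, sq, sq, s_mul_s, q_mul_q, one_mul]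

theorem commute_s_r (hx : T.x = 1) : Commute T.s T.r :=
  (Commute.refl T.s).mul_right (T.commute_q_s hx).symm

theorem commute_e_r (hx : T.x = 1) : Commute T.e T.r := by
  have h : Commute T.e (T.p * T.r) := semiconjBy_of_conj T.semiconjBy_a_e T.semiconjBy_a_p_mul_r
    T.semiconjBy_a_p_mul_r (T.commute_s_r hx)
  have h' := T.commute_e_p.mul_right h
  rwa [← mul_assoc, p_mul_p, one_mul] at h'

theorem semiconjBy_b_z_mul_p : SemiconjBy T.b (T.z * T.p) T.p := by
  have h :=
    (SemiconjBy.mul_right (T.semiconjBy_b_s_mul_inv_a.pow_right 2) T.commute_b_s).pow_right 2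
  have hl : ((T.s * T.a⁻¹) ^ 2 * T.s) ^ 2 = T.z * T.p := by
    have hsq : (T.s * T.a⁻¹) ^ 2 = T.s * T.e * T.a ^ 2 :=
      calc (T.s * T.a⁻¹) ^ 2 = T.s * T.e * (T.a ^ 2)⁻¹ := by rw [sq, e]; group
        _ = T.s * T.e * T.a ^ 2 := by rw [inv_eq_of_mul_eq_one_left T.a_sq_mul_a_sq]
    calc ((T.s * T.a⁻¹) ^ 2 * T.s) ^ 2
        = T.s * T.e * T.a ^ 2 * (T.s * T.s) * T.e * T.a ^ 2 * T.s := by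
          rw [hsq, sq (_ * T.s)]; simp only [mul_assoc]
      _ = T.s * T.e * (T.a ^ 2 * T.e * T.a ^ 2) * T.s := by
          rw [s_mul_s, mul_one]; simp only [mul_assoc]
      _ = T.s * (T.e * T.e) * (T.z * T.p) * T.s := by
          rw [a_sq_mul_e_mul_a_sq]; simp only [mul_assoc]
      _ = T.z * T.p := by
          rw [e_mul_e, mul_one, T.commute_s_z_mul_p.eq, mul_assoc, s_mul_s, mul_one]
  rwa [hl, ← p] at h

theorem semiconjBy_b_z_mul_r (hx : T.x = 1) : SemiconjBy T.b (T.z * T.r) T.r := by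
  have h := SemiconjBy.mul_right T.commute_b_s T.semiconjBy_b_q'
  rwa [q'_eq_z_mul_q T hx, ← mul_assoc, T.commute_s_z.eq, mul_assoc, ← r] at h

theorem semiconjBy_c_z_mul_r (hx : T.x = 1) : SemiconjBy T.c (T.z * T.r) T.r := by
  have h := SemiconjBy.mul_right T.commute_c_z (T.semiconjBy_c_q.mul_right (T.semiconjBy_c_s hx))
  have hr : T.z * (T.s * (T.z * T.q)) = T.r := by
    rw [← mul_assoc T.s, T.commute_s_z.eq, mul_assoc, ← mul_assoc, z_mul_z, one_mul, r]
  rwa [hr, (T.commute_q_s hx).eq, ← r] at h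

theorem semiconjBy_a_f : SemiconjBy T.a (T.z * T.p * T.f) T.f := by
  have h := T.semiconjBy_a_e.mul_right T.semiconjBy_a_p_mul_s
  rwa [← mul_assoc, T.commute_e_p.eq, mul_assoc, e_mul_s, ← mul_assoc, T.commute_p_z.eq, ← f] at h

theorem z_mul_p_mul_f : T.z * T.p * T.f = T.s * T.e * T.z * T.p := by
  have hcomm : Commute T.f (T.z * T.p) :=
    T.commute_s_z_mul_p.mul_left (T.commute_e_z.mul_right T.commute_e_p)
  rw [← hcomm.eq, f, mul_assoc (_ * _) T.z]

theorem semiconjBy_c_f : SemiconjBy T.c (T.z * T.p * T.f) T.f := by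
  have h := T.semiconjBy_c_q.mul_right T.semiconjBy_c_e
  rwa [mul_assoc T.q, mul_assoc T.q, mul_assoc T.q, ← mul_assoc T.q, q_mul_q, one_mul,
    ← z_mul_p_mul_f] at h

theorem semiconjBy_b_f : SemiconjBy T.b (T.z * T.p * T.f) T.f := by
  have h := SemiconjBy.mul_right T.commute_b_s T.semiconjBy_b_e
  rwa [← mul_assoc, ← mul_assoc, ← z_mul_p_mul_f] at h

theorem semiconjBy_s_f : SemiconjBy T.s (T.z * T.f) T.f := by
  have h := SemiconjBy.mul_right (Commute.refl T.s) T.semiconjBy_s_z_mul_e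
  rwa [← mul_assoc, T.commute_s_z.eq, mul_assoc] at h

theorem commute_f_z : Commute T.f T.z := T.commute_s_z.mul_left T.commute_e_z

theorem commute_f_p : Commute T.f T.p := T.commute_s_p.mul_left T.commute_e_p

theorem commute_f_r (hx : T.x = 1) : Commute T.f T.r :=
  (T.commute_s_r hx).mul_left (T.commute_e_r hx)

theorem semiconjBy_f_s : SemiconjBy T.f (T.z * T.s) T.s :=
  calc T.f * (T.z * T.s) = T.z * (T.f * T.s) := by
        rw [← mul_assoc, T.commute_f_z.eq, mul_assoc]
    _ = T.z * T.z * (T.s * T.f) := by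
        rw [← T.semiconjBy_s_f.eq, ← mul_assoc T.s, T.commute_s_z.eq, mul_assoc, mul_assoc]
    _ = T.s * T.f := by rw [z_mul_z, one_mul]

theorem normal_closure_z (hgen : closure T.generators = ⊤) : (closure {T.z}).Normal := by
  refine normal_closure_of_semiconjBy hgen T.isOfFinOrder_of_mem_generators ?_
  have hz : T.z ∈ closure {T.z} := subset_closure rfl
  rintro t (rfl | rfl | rfl) _ rfl
  exacts [⟨T.z, hz, T.commute_a_z⟩, ⟨T.z, hz, T.commute_b_z⟩, ⟨T.z, hz, T.commute_c_z⟩]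

theorem normal_closure_p_z (hgen : closure T.generators = ⊤) : (closure {T.p, T.z}).Normal := by
  refine normal_closure_insert hgen T.isOfFinOrder_of_mem_generators
    (T.normal_closure_z hgen) ?_
  have hp : T.p ∈ closure {T.p, T.z} := subset_closure (by simp)
  have hz : T.z ∈ closure {T.p, T.z} := subset_closure (by simp)
  rintro t (rfl | rfl | rfl)
  exacts [⟨_, mul_mem hz hp, T.semiconjBy_a_z_mul_p⟩, ⟨_, mul_mem hz hp, T.semiconjBy_b_z_mul_p⟩,
    ⟨_, hp, T.commute_c_p⟩]

theorem normal_closure_r_p_z (hgen : closure T.generators = ⊤) (hx : T.x = 1) :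
    (closure {T.r, T.p, T.z}).Normal := by
  refine normal_closure_insert hgen T.isOfFinOrder_of_mem_generators
    (T.normal_closure_p_z hgen) ?_
  have hr : T.r ∈ closure {T.r, T.p, T.z} := subset_closure (by simp)
  have hp : T.p ∈ closure {T.r, T.p, T.z} := subset_closure (by simp)
  have hz : T.z ∈ closure {T.r, T.p, T.z} := subset_closure (by simp)
  rintro t (rfl | rfl | rfl)
  exacts [⟨_, mul_mem hp hr, T.semiconjBy_a_p_mul_r⟩, ⟨_, mul_mem hz hr, T.semiconjBy_b_z_mul_r hx⟩,
    ⟨_, mul_mem hz hr, T.semiconjBy_c_z_mul_r hx⟩]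

theorem normal_closure_f_r_p_z (hgen : closure T.generators = ⊤) (hx : T.x = 1) :
    (closure {T.f, T.r, T.p, T.z}).Normal := by
  refine normal_closure_insert hgen T.isOfFinOrder_of_mem_generators
    (T.normal_closure_r_p_z hgen hx) ?_
  have hzpf : T.z * T.p * T.f ∈ closure {T.f, T.r, T.p, T.z} :=
    mul_mem (mul_mem (subset_closure (by simp)) (subset_closure (by simp)))
      (subset_closure (by simp))
  rintro t (rfl | rfl | rfl)
  exacts [⟨_, hzpf, T.semiconjBy_a_f⟩, ⟨_, hzpf, T.semiconjBy_b_f⟩, ⟨_, hzpf, T.semiconjBy_c_f⟩]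

theorem e_mem_closure : T.e ∈ closure {T.s, T.f, T.r, T.p, T.z} := by
  have h : T.e = T.s * T.f := by rw [f, ← mul_assoc, s_mul_s, one_mul]
  rw [h]
  exact mul_mem (subset_closure (by simp)) (subset_closure (by simp))

theorem q_mem_closure : T.q ∈ closure {T.s, T.f, T.r, T.p, T.z} := by
  have h : T.q = T.s * T.r := by rw [r, ← mul_assoc, s_mul_s, one_mul]
  rw [h]
  exact mul_mem (subset_closure (by simp)) (subset_closure (by simp))

theorem normal_closure_s_f_r_p_z (hgen : closure T.generators = ⊤) (hx : T.x = 1) :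
    (closure {T.s, T.f, T.r, T.p, T.z}).Normal := by
  refine normal_closure_insert hgen T.isOfFinOrder_of_mem_generators
    (T.normal_closure_f_r_p_z hgen hx) ?_
  have hs : T.s ∈ closure {T.s, T.f, T.r, T.p, T.z} := subset_closure (by simp)
  rintro t (rfl | rfl | rfl)
  exacts [⟨_, T.e_mem_closure, T.semiconjBy_a_e⟩, ⟨_, hs, T.commute_b_s⟩,
    ⟨_, T.q_mem_closure, T.semiconjBy_c_q⟩]

theorem semiconjBy_a_s_mul_c : SemiconjBy T.a (T.s * T.c) T.c := by
  rw [SemiconjBy, T.semiconjBy_c_a.eq, mul_assoc]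

theorem normal_closure_c_s_f_r_p_z (hgen : closure T.generators = ⊤) (hx : T.x = 1) :
    (closure {T.c, T.s, T.f, T.r, T.p, T.z}).Normal := by
  refine normal_closure_insert hgen T.isOfFinOrder_of_mem_generators
    (T.normal_closure_s_f_r_p_z hgen hx) ?_
  have hc : T.c ∈ closure {T.c, T.s, T.f, T.r, T.p, T.z} := subset_closure (by simp)
  have hs : T.s ∈ closure {T.c, T.s, T.f, T.r, T.p, T.z} := subset_closure (by simp)
  rintro t (rfl | rfl | rfl)
  exacts [⟨_, mul_mem hs hc, T.semiconjBy_a_s_mul_c⟩,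
    ⟨_, mul_mem hs (inv_mem hc), T.semiconjBy_b_s_mul_inv_c⟩, ⟨_, hc, Commute.refl T.c⟩]

theorem normal_closure_a_c_s_f_r_p_z (hgen : closure T.generators = ⊤) (hx : T.x = 1) :
    (closure {T.a, T.c, T.s, T.f, T.r, T.p, T.z}).Normal := by
  refine normal_closure_insert hgen T.isOfFinOrder_of_mem_generators
    (T.normal_closure_c_s_f_r_p_z hgen hx) ?_
  have ha : T.a ∈ closure {T.a, T.c, T.s, T.f, T.r, T.p, T.z} := subset_closure (by simp)
  have hs : T.s ∈ closure {T.a, T.c, T.s, T.f, T.r, T.p, T.z} := subset_closure (by simp)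
  have hq : T.q ∈ closure {T.a, T.c, T.s, T.f, T.r, T.p, T.z} :=
    closure_mono ((Set.subset_insert _ _).trans (Set.subset_insert _ _)) T.q_mem_closure
  rintro t (rfl | rfl | rfl)
  exacts [⟨_, ha, Commute.refl T.a⟩, ⟨_, mul_mem hs (inv_mem ha), T.semiconjBy_b_s_mul_inv_a⟩,
    ⟨_, mul_mem ha hq, T.semiconjBy_c_a_mul_q⟩]

theorem closure_b_a_c_s_f_r_p_z (hgen : closure T.generators = ⊤) :
    closure {T.b, T.a, T.c, T.s, T.f, T.r, T.p, T.z} = ⊤ := by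
  refine top_le_iff.mp (hgen ▸ closure_mono ?_)
  rintro t (rfl | rfl | rfl) <;> simp

theorem card_closure_z (hz : T.z ≠ 1) : Nat.card (closure {T.z}) = 2 := by
  rw [← zpowers_eq_closure, Nat.card_zpowers]
  exact orderOf_eq_prime (sq T.z ▸ T.z_mul_z) hz

theorem card_closure_p_z (hgen : closure T.generators = ⊤) (hz : T.z ≠ 1) :
    Nat.card (closure {T.p, T.z}) = 4 := by
  have hnot : T.p ∉ closure {T.z} :=
    not_mem_closure_of_semiconjBy (by simpa using T.commute_a_z) T.semiconjBy_a_z_mul_p hz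
  rw [card_closure_insert_of_mul_self_mem (T.normal_closure_z hgen) hnot
    (by rw [p_mul_p]; exact one_mem _), T.card_closure_z hz]

theorem card_closure_r_p_z (hgen : closure T.generators = ⊤) (hx : T.x = 1) (hz : T.z ≠ 1) :
    Nat.card (closure {T.r, T.p, T.z}) = 8 := by
  have hnot : T.r ∉ closure {T.p, T.z} :=
    not_mem_closure_of_semiconjBy (by simpa using ⟨T.commute_c_p, T.commute_c_z⟩)
      (T.semiconjBy_c_z_mul_r hx) hz
  rw [card_closure_insert_of_mul_self_mem (T.normal_closure_p_z hgen) hnot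
    (by rw [T.r_mul_r hx]; exact one_mem _), T.card_closure_p_z hgen hz]

theorem card_closure_f_r_p_z (hgen : closure T.generators = ⊤) (hx : T.x = 1) (hz : T.z ≠ 1) :
    Nat.card (closure {T.f, T.r, T.p, T.z}) = 16 := by
  have hnot : T.f ∉ closure {T.r, T.p, T.z} :=
    not_mem_closure_of_semiconjBy
      (by simpa using ⟨T.commute_s_r hx, T.commute_s_p, T.commute_s_z⟩) T.semiconjBy_s_f hz
  have hsq : T.f * T.f = T.z := (sq T.f).symm
  rw [card_closure_insert_of_mul_self_mem (T.normal_closure_r_p_z hgen hx) hnot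
    (by rw [hsq]; exact subset_closure (by simp)), T.card_closure_r_p_z hgen hx hz]

theorem card_closure_s_f_r_p_z (hgen : closure T.generators = ⊤) (hx : T.x = 1) (hz : T.z ≠ 1) :
    Nat.card (closure {T.s, T.f, T.r, T.p, T.z}) = 32 := by
  have hnot : T.s ∉ closure {T.f, T.r, T.p, T.z} :=
    not_mem_closure_of_semiconjBy
      (by simpa using ⟨T.commute_f_r hx, T.commute_f_p, T.commute_f_z⟩)
      T.semiconjBy_f_s hz
  rw [card_closure_insert_of_mul_self_mem (T.normal_closure_f_r_p_z hgen hx) hnot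
    (by rw [s_mul_s]; exact one_mem _), T.card_closure_f_r_p_z hgen hx hz]

/-- The generators can be mapped to two rotations and a reflection of the square, the rotations
being arbitrary. -/
def HasDihedralImages : Prop :=
  ∀ i j : ZMod 4, ∃ φ : G →* DihedralGroup 4, φ T.a = .r i ∧ φ T.b = .sr 0 ∧ φ T.c = .r j

theorem closure_s_f_r_p_z_le_ker {H : Type*} [Group H] {φ : G →* H} (hs : φ T.s = 1) :
    closure {T.s, T.f, T.r, T.p, T.z} ≤ φ.ker := by
  have he : φ T.e = 1 := by simp [e, hs]
  have hq : φ T.q = 1 := by simp [q, hs]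
  have hp : φ T.p = 1 := by
    rw [p, map_pow, map_mul, hs, mul_one, map_pow, ← pow_mul, ← map_pow, T.a_pow_four, map_one]
  refine (closure_le _).mpr ?_
  rintro t (rfl | rfl | rfl | rfl | rfl) <;>
    simp [MonoidHom.mem_ker, f, r, z, hs, he, hq, hp]

theorem card_closure_c_s_f_r_p_z (hgen : closure T.generators = ⊤) (hx : T.x = 1) (hz : T.z ≠ 1)
    (hD : T.HasDihedralImages) :
    Nat.card (closure {T.c, T.s, T.f, T.r, T.p, T.z}) = 128 := by
  have hnot : T.c ^ 2 ∉ closure {T.s, T.f, T.r, T.p, T.z} := by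
    obtain ⟨φ, -, hb, hc⟩ := hD 0 1
    have hs : φ T.s = 1 := by rw [s, map_pow, hb, sq, DihedralGroup.sr_mul_self]
    intro hmem
    have h := T.closure_s_f_r_p_z_le_ker hs hmem
    rw [MonoidHom.mem_ker, map_pow, hc] at h
    exact absurd h (by decide)
  rw [card_closure_insert_of_pow_four_mem (T.normal_closure_s_f_r_p_z hgen hx) hnot
    (by rw [T.c_pow_four]; exact one_mem _), T.card_closure_s_f_r_p_z hgen hx hz]

theorem card_closure_a_c_s_f_r_p_z (hgen : closure T.generators = ⊤) (hx : T.x = 1) (hz : T.z ≠ 1)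
    (hD : T.HasDihedralImages) :
    Nat.card (closure {T.a, T.c, T.s, T.f, T.r, T.p, T.z}) = 512 := by
  have hnot : T.a ^ 2 ∉ closure {T.c, T.s, T.f, T.r, T.p, T.z} := by
    obtain ⟨φ, ha, hb, hc⟩ := hD 1 0
    have hs : φ T.s = 1 := by rw [s, map_pow, hb, sq, DihedralGroup.sr_mul_self]
    intro hmem
    have hle : closure {T.c, T.s, T.f, T.r, T.p, T.z} ≤ φ.ker := by
      refine (closure_le _).mpr (Set.insert_subset ?_ ?_)
      · exact hc
      · exact (closure_le _).mp (T.closure_s_f_r_p_z_le_ker hs)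
    have h := hle hmem
    rw [MonoidHom.mem_ker, map_pow, ha] at h
    exact absurd h (by decide)
  rw [card_closure_insert_of_pow_four_mem (T.normal_closure_c_s_f_r_p_z hgen hx) hnot
    (by rw [T.a_pow_four]; exact one_mem _), T.card_closure_c_s_f_r_p_z hgen hx hz hD]

theorem card_eq (hgen : closure T.generators = ⊤) (hx : T.x = 1) (hz : T.z ≠ 1)
    (hD : T.HasDihedralImages) : Nat.card G = 1024 := by
  have hnot : T.b ∉ closure {T.a, T.c, T.s, T.f, T.r, T.p, T.z} := by
    obtain ⟨φ, ha, hb, hc⟩ := hD 0 0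
    have hs : φ T.s = 1 := by rw [s, map_pow, hb, sq, DihedralGroup.sr_mul_self]
    intro hmem
    have hle : closure {T.a, T.c, T.s, T.f, T.r, T.p, T.z} ≤ φ.ker := by
      refine (closure_le _).mpr (Set.insert_subset ?_ (Set.insert_subset ?_ ?_))
      · exact ha
      · exact hc
      · exact (closure_le _).mp (T.closure_s_f_r_p_z_le_ker hs)
    have h := hle hmem
    rw [MonoidHom.mem_ker, hb] at h
    exact absurd h (by decide)
  have hmem : T.b * T.b ∈ closure {T.a, T.c, T.s, T.f, T.r, T.p, T.z} := by
    have hs : T.b * T.b = T.s := (sq T.b).symm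
    rw [hs]
    exact subset_closure (by simp)
  rw [← card_top, ← T.closure_b_a_c_s_f_r_p_z hgen,
    card_closure_insert_of_mul_self_mem (T.normal_closure_a_c_s_f_r_p_z hgen hx) hnot hmem,
    T.card_closure_a_c_s_f_r_p_z hgen hx hz hD]

section Map

variable {H : Type*} [Group H] (φ : G →* H)

/-- The realization in `H` obtained by applying a homomorphism `G →* H` to the generators. -/
def map : Realization H where
  a := φ T.a
  b := φ T.b
  c := φ T.c
  a_pow_four := by simpa using congrArg φ T.a_pow_four
  b_pow_four := by simpa using congrArg φ T.b_pow_four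
  c_pow_four := by simpa using congrArg φ T.c_pow_four
  ab_sq := by simpa using congrArg φ T.ab_sq
  bc_sq := by simpa using congrArg φ T.bc_sq
  abc_sq := by simpa using congrArg φ T.abc_sq
  a_sq_b_sq_pow_four := by simpa using congrArg φ T.a_sq_b_sq_pow_four
  a_sq_c_sq_b_sq := by simpa using congrArg φ T.a_sq_c_sq_b_sq
  commutator_b_sq := by simpa using congrArg φ T.commutator_b_sq

theorem map_x : (T.map φ).x = φ T.x := by simp [x, map]

theorem map_y : (T.map φ).y = φ T.y := by simp [y, map]

theorem map_z : (T.map φ).z = φ T.z := by simp [z, s, e, map]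

theorem closure_generators_map (hgen : closure T.generators = ⊤) (hφ : Function.Surjective φ) :
    closure (T.map φ).generators = ⊤ := by
  have himage : (T.map φ).generators = φ '' T.generators := by
    simp [generators, map, Set.image_insert_eq]
  rw [himage, ← MonoidHom.map_closure, hgen, map_top_of_surjective φ hφ]

end Map

/-- The tautological realization of the relations in `U` itself. -/
def universal : Realization UGroup where
  a := Ua
  b := Ub
  c := Uc
  a_pow_four := PresentedGroup.one_of_mem (by simp [Urels])
  b_pow_four := PresentedGroup.one_of_mem (by simp [Urels])
  c_pow_four := PresentedGroup.one_of_mem (by simp [Urels])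
  ab_sq := PresentedGroup.one_of_mem (by simp [Urels])
  bc_sq := PresentedGroup.one_of_mem (by simp [Urels])
  abc_sq := PresentedGroup.one_of_mem (by simp [Urels])
  a_sq_b_sq_pow_four := PresentedGroup.one_of_mem (by simp [Urels])
  a_sq_c_sq_b_sq := PresentedGroup.one_of_mem (by simp [Urels])
  commutator_b_sq := PresentedGroup.one_of_mem (by simp [Urels])

theorem closure_generators_universal : closure universal.generators = ⊤ := by
  have hrange : Set.range (PresentedGroup.of (rels := Urels)) = universal.generators := by
    ext t
    simp [generators, universal, Ua, Ub, Uc, Fin.exists_fin_succ, eq_comm]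
  rw [← hrange, PresentedGroup.closure_range_of]

/-- The homomorphism `U →* G` given by the universal property of the presentation. -/
def toHom : UGroup →* G :=
  PresentedGroup.toGroup (f := ![T.a, T.b, T.c]) <| by
    rintro w (rfl | rfl | rfl | rfl | rfl | rfl | rfl | rfl | rfl) <;>
      simp only [map_mul, map_inv, map_pow, FreeGroup.lift_apply_of, Matrix.cons_val]
    exacts [T.a_pow_four, T.b_pow_four, T.c_pow_four, T.ab_sq, T.bc_sq, T.abc_sq,
      T.a_sq_b_sq_pow_four, T.a_sq_c_sq_b_sq, T.commutator_b_sq]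

theorem map_toHom : universal.map T.toHom = T := by
  have h (i : Fin 3) : T.toHom (PresentedGroup.of i) = ![T.a, T.b, T.c] i :=
    PresentedGroup.toGroup.of _
  cases T
  simp only [map, mk.injEq]
  exact ⟨h 0, h 1, h 2⟩

theorem closure_le_ker_toHom (hx : T.x = 1) (hy : T.y = 1) :
    closure {universal.x, universal.y} ≤ T.toHom.ker := by
  refine (closure_le _).mpr (Set.insert_subset ?_ (Set.singleton_subset_iff.mpr ?_))
  · exact (universal.map_x T.toHom).symm.trans (T.map_toHom.symm ▸ hx)
  · exact (universal.map_y T.toHom).symm.trans (T.map_toHom.symm ▸ hy)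

instance normal_closure_universal_x_y : (closure {universal.x, universal.y}).Normal :=
  universal.normal_closure_x_y closure_generators_universal

/-- The realization of the relations in `U ⧸ N`. -/
def quotient : Realization (UGroup ⧸ closure {universal.x, universal.y}) :=
  universal.map (QuotientGroup.mk' _)

theorem x_quotient : quotient.x = 1 := by
  rw [quotient, map_x]
  exact (QuotientGroup.eq_one_iff _).mpr (subset_closure (by simp))

theorem exists_map_quotient_eq (hx : T.x = 1) (hy : T.y = 1) :
    ∃ φ : UGroup ⧸ closure {universal.x, universal.y} →* G, quotient.map φ = T :=
  ⟨QuotientGroup.lift _ T.toHom (T.closure_le_ker_toHom hx hy), T.map_toHom⟩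

/-- The realization in the dihedral group of the square by the rotations `rⁱ`, `rʲ` and a
reflection. -/
def dihedral (i j : ZMod 4) : Realization (DihedralGroup 4) where
  a := .r i
  b := .sr 0
  c := .r j
  a_pow_four := by decide +revert
  b_pow_four := by decide +revert
  c_pow_four := by decide +revert
  ab_sq := by decide +revert
  bc_sq := by decide +revert
  abc_sq := by decide +revert
  a_sq_b_sq_pow_four := by decide +revert
  a_sq_c_sq_b_sq := by decide +revert
  commutator_b_sq := by decide +revert

theorem hasDihedralImages_quotient : quotient.HasDihedralImages := by
  intro i j
  have hx : (dihedral i j).x = 1 := by decide +revert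
  have hy : (dihedral i j).y = 1 := by decide +revert
  obtain ⟨φ, hφ⟩ := (dihedral i j).exists_map_quotient_eq hx hy
  exact ⟨φ, congrArg Realization.a hφ, congrArg Realization.b hφ, congrArg Realization.c hφ⟩

/-- The underlying set of a permutation representation of `U` on the `128` cosets of `⟨a, bc⟩` in
`U ⧸ N`: the point `(s, e, p, r, z, u, v)` stands for the coset
`sˢ eᵉ pᵖ rʳ zᶻ cᵘ⁺²ᵛ ⟨a, bc⟩`. -/
structure Point where
  s : ZMod 2
  e : ZMod 2
  p : ZMod 2
  r : ZMod 2
  z : ZMod 2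
  u : ZMod 2
  v : ZMod 2
  deriving DecidableEq

namespace Point

/-- Deciding coordinate by coordinate evaluates in the kernel, which the derived `Fintype` instance
of a structure does not. -/
instance decidableForall (P : Point → Prop) [DecidablePred P] : Decidable (∀ t, P t) :=
  decidable_of_iff (∀ s e p r z u v, P ⟨s, e, p, r, z, u, v⟩)
    ⟨fun h t => h t.s t.e t.p t.r t.z t.u t.v, fun h s e p r z u v => h ⟨s, e, p, r, z, u, v⟩⟩

/-- The permutation given by a map whose fourth iterate is the identity. -/
def permOfIterate (f : Point → Point) (hf : ∀ t, f (f (f (f t))) = t) : Equiv.Perm Point where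
  toFun := f
  invFun t := f (f (f t))
  left_inv := hf
  right_inv := hf

/-- Left multiplication of cosets by `a`. -/
def permA : Equiv.Perm Point :=
  permOfIterate
    (fun t =>
      { t with
        s := t.e
        e := t.s + t.u
        p := t.s + t.p + t.r + t.u + t.v
        r := t.r + t.v
        z := t.z + t.s + t.p + t.r + t.s * t.e + t.u + t.u * t.v })
    (by decide +kernel)

/-- Left multiplication of cosets by `b`. -/
def permB : Equiv.Perm Point :=
  permOfIterate
    (fun t =>
      { t with
        s := t.s + 1 + t.u
        p := t.e + t.p
        r := t.r + t.v
        z := t.z + t.p + t.r + t.e * (1 + t.u) + t.u * t.v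
        u := t.u + 1 })
    (by decide +kernel)

/-- Left multiplication of cosets by `c`. -/
def permC : Equiv.Perm Point :=
  permOfIterate
    (fun t =>
      { t with
        p := t.p + t.e
        r := t.r + t.s + t.e
        z := t.z + t.s + t.r
        u := t.u + 1
        v := t.v + t.u })
    (by decide +kernel)

end Point

open Point in
/-- The action of the generators on the cosets of `⟨a, bc⟩`. -/
def cosetAction : Realization (Equiv.Perm Point) where
  a := permA
  b := permB
  c := permC
  a_pow_four := Equiv.ext (by decide +kernel)
  b_pow_four := Equiv.ext (by decide +kernel)
  c_pow_four := Equiv.ext (by decide +kernel)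
  ab_sq := Equiv.ext (by decide +kernel)
  bc_sq := Equiv.ext (by decide +kernel)
  abc_sq := Equiv.ext (by decide +kernel)
  a_sq_b_sq_pow_four := Equiv.ext (by decide +kernel)
  a_sq_c_sq_b_sq := Equiv.ext (by decide +kernel)
  commutator_b_sq := Equiv.ext (by decide +kernel)

theorem z_quotient_ne_one : quotient.z ≠ 1 := by
  have hx : cosetAction.x = 1 := Equiv.ext (by decide +kernel)
  have hy : cosetAction.y = 1 := Equiv.ext (by decide +kernel)
  have hz : cosetAction.z ≠ 1 := fun h =>
    absurd (DFunLike.congr_fun h ⟨0, 0, 0, 0, 0, 0, 0⟩) (by decide +kernel)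
  obtain ⟨φ, hφ⟩ := cosetAction.exists_map_quotient_eq hx hy
  intro h
  rw [← hφ, map_z, h, map_one] at hz
  exact hz rfl

end Realization

/-- The subgroup `N = ⟨x, y⟩` of `U` is normal of index `1024`. -/
theorem N_normal_index_1024 :
    (Subgroup.closure {Ux, Uy} : Subgroup UGroup).Normal ∧
    (Subgroup.closure {Ux, Uy} : Subgroup UGroup).index = 1024 := by
  have hgen : Subgroup.closure Realization.quotient.generators = ⊤ :=
    Realization.universal.closure_generators_map _ Realization.closure_generators_universal
      (QuotientGroup.mk'_surjective _)
  exact ⟨Realization.normal_closure_universal_x_y,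
    Realization.quotient.card_eq hgen Realization.x_quotient Realization.z_quotient_ne_one
      Realization.hasDihedralImages_quotient⟩
end

section
/- In the group U, the elements x = (ac^{-1})^4 and y = (c^{-1}a)^4 commute with each other, i.e., xy = yx. -/
/-!
Write `x = ac⁻¹` and `y = a⁻¹c`, so that `Ux = x⁴` and `Uy = y⁻⁴`, and let `x'`, `y'` be the
conjugates of `x`, `y` by `a²`. The relations of `U` make `b²` a conjugate of `[a, c]`, up to
inversion, so `[a, c]² = 1`, and `a²c²b²(ac)² = 1` says exactly that `a²` commutes with `cac`.
The first fact makes `xy`, `xy'`, `x'y` involutions; the second makes `x` commute with `x'` and `y`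
with `y'`. Hence `x` inverts `y'⁻¹y`, and `y` inverts `x'⁻¹x`.
For `d = a²c² = x'⁻¹y = y'⁻¹x` this gives `d⁴ = 1` and shows that `d²` commutes with `x²`. Since
`x²d⁻¹ = xy'` is an involution, `d` inverts `x⁴`, and therefore so does `y = x'd`. Thus even `y²`
commutes with `x⁴`.
-/

section Involutions

variable {G : Type*} [Group G] {x x' y y' u : G}

theorem commute_sq_of_semiconjBy_inv (h : SemiconjBy x y y⁻¹) : Commute (x ^ 2) y := by
  simpa only [Commute, sq, inv_inv] using h.inv_right.mul_left h

theorem commute_conj_of_commute_mul_mul (hu : u ^ 2 = 1) (h : Commute u (x * u * x)) :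
    Commute x (u * x * u⁻¹) := by
  have hu' : u⁻¹ = u := inv_eq_of_mul_eq_one_right (by rwa [← sq])
  calc x * (u * x * u⁻¹)
      = x * u * x * u := by rw [hu']; simp only [mul_assoc]
    _ = u * (x * u * x) := h.eq.symm
    _ = u * x * u⁻¹ * x := by rw [hu']; simp only [mul_assoc]

theorem sq_mul_eq_one_comm : (x * y) ^ 2 = 1 ↔ (y * x) ^ 2 = 1 := by
  rw [← conj_eq_one_iff (a := y), ← conj_pow, ← mul_assoc y x y, mul_inv_cancel_right]

theorem inv_eq_mul_mul_of_sq_mul_eq_one (h : (x * y) ^ 2 = 1) : x⁻¹ = y * x * y :=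
  inv_eq_of_mul_eq_one_right (by simpa only [sq, mul_assoc] using h)

theorem semiconjBy_inv_mul_inv (hy : Commute y y') (hxy : (x * y) ^ 2 = 1)
    (hxy' : (x * y') ^ 2 = 1) : SemiconjBy x (y'⁻¹ * y) (y'⁻¹ * y)⁻¹ := by
  have hyxy : y * x * y = y' * x * y' :=
    (inv_eq_mul_mul_of_sq_mul_eq_one hxy).symm.trans (inv_eq_mul_mul_of_sq_mul_eq_one hxy')
  calc x * (y'⁻¹ * y)
      = y⁻¹ * (y * x * y) * y'⁻¹ := by rw [← hy.inv_right.eq]; group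
    _ = (y'⁻¹ * y)⁻¹ * x := by rw [hyxy]; group

theorem inv_mul_sq_eq (hy : Commute y y') (hxy : (x * y) ^ 2 = 1)
    (hxy' : (x * y') ^ 2 = 1) (hd : x'⁻¹ * y = y'⁻¹ * x) :
    (x'⁻¹ * y) ^ 2 = x'⁻¹ * x * (y'⁻¹ * y)⁻¹ :=
  calc (x'⁻¹ * y) ^ 2
      = x'⁻¹ * y * (y'⁻¹ * x) := by rw [sq, ← hd]
    _ = x'⁻¹ * (y'⁻¹ * y * x) := by rw [← hy.inv_right.eq]; group
    _ = x'⁻¹ * x * (y'⁻¹ * y)⁻¹ := by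
      rw [mul_assoc x'⁻¹ x, (semiconjBy_inv_mul_inv hy hxy hxy').inv_right.eq, inv_inv]

theorem inv_mul_pow_four_eq_one (hx : Commute x x') (hy : Commute y y')
    (hxy : (x * y) ^ 2 = 1) (hxy' : (x * y') ^ 2 = 1) (hyx' : (y * x') ^ 2 = 1)
    (hd : x'⁻¹ * y = y'⁻¹ * x) : (x'⁻¹ * y) ^ 4 = 1 := by
  have hsq := inv_mul_sq_eq hy hxy hxy' hd
  have hsq' : (x'⁻¹ * y) ^ 2 = y'⁻¹ * y * (x'⁻¹ * x)⁻¹ :=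
    hd ▸ inv_mul_sq_eq hx (sq_mul_eq_one_comm.mp hxy) hyx' hd.symm
  calc (x'⁻¹ * y) ^ 4
      = (x'⁻¹ * y) ^ 2 * (x'⁻¹ * y) ^ 2 := by rw [← pow_add]
    _ = x'⁻¹ * x * (y'⁻¹ * y)⁻¹ * (y'⁻¹ * y * (x'⁻¹ * x)⁻¹) := by nth_rw 1 [hsq]; rw [hsq']
    _ = 1 := by group

theorem commute_inv_mul_sq_sq (hx : Commute x x') (hy : Commute y y')
    (hxy : (x * y) ^ 2 = 1) (hxy' : (x * y') ^ 2 = 1) (hd : x'⁻¹ * y = y'⁻¹ * x) :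
    Commute ((x'⁻¹ * y) ^ 2) (x ^ 2) := by
  rw [inv_mul_sq_eq hy hxy hxy' hd]
  have hT : Commute (x'⁻¹ * x) (x ^ 2) := (hx.symm.inv_left.mul_left (.refl x)).pow_right 2
  have hS : Commute (x ^ 2) (y'⁻¹ * y) :=
    commute_sq_of_semiconjBy_inv (semiconjBy_inv_mul_inv hy hxy hxy')
  exact hT.mul_left hS.symm.inv_left

theorem semiconjBy_sq_inv (hxy : (x * y⁻¹) ^ 2 = 1) (hy : y ^ 4 = 1) (hyx : Commute (y ^ 2) x) :
    SemiconjBy y (x ^ 2) (x ^ 2)⁻¹ := by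
  have hconj : SemiconjBy y x (y ^ 2 * x⁻¹) :=
    calc y * x
        = y ^ 2 * (y⁻¹ * x * y⁻¹) * y := by group
      _ = y ^ 2 * x⁻¹ * y := by rw [← inv_eq_mul_mul_of_sq_mul_eq_one hxy]
  have hsq : (y ^ 2 * x⁻¹) ^ 2 = (x ^ 2)⁻¹ := by
    rw [hyx.inv_right.mul_pow, ← pow_mul, hy, one_mul, inv_pow]
  exact hsq ▸ hconj.pow_right 2

theorem semiconjBy_pow_four_inv (hx : Commute x x') (hy : Commute y y')
    (hxy : (x * y) ^ 2 = 1) (hxy' : (x * y') ^ 2 = 1) (hyx' : (y * x') ^ 2 = 1)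
    (hd : x'⁻¹ * y = y'⁻¹ * x) : SemiconjBy y (x ^ 4) (x ^ 4)⁻¹ := by
  have hinvol : (x ^ 2 * (x'⁻¹ * y)⁻¹) ^ 2 = 1 := by
    rwa [hd, mul_inv_rev, inv_inv, sq x, mul_assoc, mul_inv_cancel_left]
  have hd_inverts : SemiconjBy (x'⁻¹ * y) (x ^ 4) (x ^ 4)⁻¹ := by
    simpa only [← pow_mul] using semiconjBy_sq_inv hinvol
      (inv_mul_pow_four_eq_one hx hy hxy hxy' hyx' hd) (commute_inv_mul_sq_sq hx hy hxy hxy' hd)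
  have hx'_fixes : Commute x' (x ^ 4)⁻¹ := (hx.symm.pow_right 4).inv_right
  simpa only [mul_inv_cancel_left] using hx'_fixes.semiconjBy.mul_left hd_inverts

end Involutions

open scoped commutatorElement

section CommutatorRelations

variable {G : Type*} [Group G] {a b c : G}

theorem sq_conj_eq_one {g : G} (hg : g ^ 2 = 1) (h : G) : (h * g * h⁻¹) ^ 2 = 1 := by
  rw [conj_pow, conj_eq_one_iff, hg]

theorem commute_mul_inv_conj_sq (ha : a ^ 4 = 1) (hcomm : Commute (a ^ 2) (c * a * c)) :
    Commute (a * c⁻¹) (a ^ 2 * (a * c⁻¹) * (a ^ 2)⁻¹) := by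
  refine commute_conj_of_commute_mul_mul (by rw [← pow_mul, ha]) ?_
  have hxux : a * c⁻¹ * a ^ 2 * (a * c⁻¹) = a * (c * a * c)⁻¹ :=
    calc a * c⁻¹ * a ^ 2 * (a * c⁻¹)
        = a * c⁻¹ * a ^ 4 * (a⁻¹ * c⁻¹) := by group
      _ = a * (c * a * c)⁻¹ := by rw [ha]; group
  exact hxux ▸ (Commute.pow_self a 2).mul_right hcomm.inv_right

theorem commute_inv_mul_conj_sq (ha : a ^ 4 = 1) (hcomm : Commute (a ^ 2) (c * a * c)) :
    Commute (a⁻¹ * c) (a ^ 2 * (a⁻¹ * c) * (a ^ 2)⁻¹) := by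
  refine commute_conj_of_commute_mul_mul (by rw [← pow_mul, ha]) ?_
  have hyuy : a⁻¹ * c * a ^ 2 * (a⁻¹ * c) = a⁻¹ * (c * a * c) := by group
  exact hyuy ▸ (Commute.pow_self a 2).inv_right.mul_right hcomm

theorem semiconjBy_inv_mul_pow_four (ha : a ^ 4 = 1) (hc : c ^ 4 = 1) (hac : ⁅a, c⁆ ^ 2 = 1)
    (hcomm : Commute (a ^ 2) (c * a * c)) :
    SemiconjBy (a⁻¹ * c) ((a * c⁻¹) ^ 4) ((a * c⁻¹) ^ 4)⁻¹ := by
  have hca : ⁅c, a⁆ ^ 2 = 1 := by rw [← commutatorElement_inv, inv_pow, hac, inv_one]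
  have hxy : a * c⁻¹ * (a⁻¹ * c) = c⁻¹ * ⁅c, a⁆ * c⁻¹⁻¹ := by
    rw [commutatorElement_def]; group
  have hxy' : a * c⁻¹ * (a ^ 2 * (a⁻¹ * c) * (a ^ 2)⁻¹) =
      a * c⁻¹ * ⁅a, c⁆ * (a * c⁻¹)⁻¹ := by
    rw [commutatorElement_def]; group
  have hyx' : a⁻¹ * c * (a ^ 2 * (a * c⁻¹) * (a ^ 2)⁻¹) =
      a ^ 2 * ⁅a, c⁆ * (a ^ 2)⁻¹ :=
    calc a⁻¹ * c * (a ^ 2 * (a * c⁻¹) * (a ^ 2)⁻¹)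
        = (a ^ 4)⁻¹ * a ^ 3 * c * a ^ 4 * a⁻¹ * c⁻¹ * (a ^ 2)⁻¹ := by group
      _ = a ^ 2 * ⁅a, c⁆ * (a ^ 2)⁻¹ := by rw [ha, commutatorElement_def]; group
  have hd : (a ^ 2 * (a * c⁻¹) * (a ^ 2)⁻¹)⁻¹ * (a⁻¹ * c) =
      (a ^ 2 * (a⁻¹ * c) * (a ^ 2)⁻¹)⁻¹ * (a * c⁻¹) :=
    calc (a ^ 2 * (a * c⁻¹) * (a ^ 2)⁻¹)⁻¹ * (a⁻¹ * c)
        = a ^ 2 * c * (a ^ 4)⁻¹ * c ^ 4 * (c ^ 3)⁻¹ := by group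
      _ = (a ^ 2 * (a⁻¹ * c) * (a ^ 2)⁻¹)⁻¹ * (a * c⁻¹) := by rw [ha, hc]; group
  exact semiconjBy_pow_four_inv (commute_mul_inv_conj_sq ha hcomm)
    (commute_inv_mul_conj_sq ha hcomm) (hxy ▸ sq_conj_eq_one hca _)
    (hxy' ▸ sq_conj_eq_one hac _) (hyx' ▸ sq_conj_eq_one hac _) hd

theorem commutatorElement_sq_eq_one_of_mul_sq_eq_one (hb : b ^ 4 = 1) (h : ⁅a⁻¹, c⁆ * b ^ 2 = 1) :
    ⁅a, c⁆ ^ 2 = 1 := by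
  have hconj : ⁅a, c⁆ = a * b ^ 2 * a⁻¹ := by
    rw [← inv_eq_of_mul_eq_one_right h, commutatorElement_def, commutatorElement_def]; group
  exact hconj ▸ sq_conj_eq_one (by rw [← pow_mul, hb]) a

theorem commute_sq_mul_mul_of_relations (ha : a ^ 4 = 1) (hc : c ^ 4 = 1)
    (hb : ⁅a⁻¹, c⁆ * b ^ 2 = 1) (hrel : a ^ 2 * c ^ 2 * b ^ 2 * (a * c) ^ 2 = 1) :
    Commute (a ^ 2) (c * a * c) := by
  have hconj : a ^ 2 * ((c * a * c)⁻¹ * a ^ 2 * (c * a * c)) = 1 :=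
    calc a ^ 2 * ((c * a * c)⁻¹ * a ^ 2 * (c * a * c))
        = a ^ 2 * (c ^ 4)⁻¹ * c ^ 2 * ⁅a⁻¹, c⁆⁻¹ * (a * c) ^ 2 := by
          rw [commutatorElement_def, sq (a * c), sq a]; group
      _ = 1 := by rw [hc, inv_one, mul_one, inv_eq_of_mul_eq_one_right hb, hrel]
  calc a ^ 2 * (c * a * c)
      = c * a * c * ((c * a * c)⁻¹ * a ^ 2 * (c * a * c)) := by group
    _ = c * a * c * (a ^ 4 * (a ^ 2)⁻¹) := by
      rw [← inv_eq_of_mul_eq_one_right hconj, ha, one_mul]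
    _ = c * a * c * a ^ 2 := by group

theorem x_comm_y_general (ha : a ^ 4 = 1) (hc : c ^ 4 = 1) (hac : ⁅a, c⁆ ^ 2 = 1)
    (hcomm : Commute (a ^ 2) (c * a * c)) :
    Commute ((a * c⁻¹) ^ 4) ((c⁻¹ * a) ^ 2) := by
  have hinv : SemiconjBy (c⁻¹ * a) ((a * c⁻¹) ^ 4) ((a * c⁻¹) ^ 4)⁻¹ := by
    simpa only [mul_inv_rev, inv_inv] using
      (semiconjBy_inv_mul_pow_four ha hc hac hcomm).inv_symm_left.inv_right
  exact (commute_sq_of_semiconjBy_inv hinv).symm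

end CommutatorRelations

theorem Ua_pow_four : Ua ^ 4 = 1 :=
  PresentedGroup.one_of_mem (x := FreeGroup.of 0 ^ 4) (by simp [Urels])

theorem Ub_pow_four : Ub ^ 4 = 1 :=
  PresentedGroup.one_of_mem (x := FreeGroup.of 1 ^ 4) (by simp [Urels])

theorem Uc_pow_four : Uc ^ 4 = 1 :=
  PresentedGroup.one_of_mem (x := FreeGroup.of 2 ^ 4) (by simp [Urels])

theorem Ua_sq_mul_Uc_sq_mul_Ub_sq_mul_eq_one :
    Ua ^ 2 * Uc ^ 2 * Ub ^ 2 * (Ua * Uc) ^ 2 = 1 :=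
  PresentedGroup.one_of_mem (x := FreeGroup.of 0 ^ 2 * FreeGroup.of 2 ^ 2 * FreeGroup.of 1 ^ 2 *
    (FreeGroup.of 0 * FreeGroup.of 2) ^ 2) (by simp [Urels])

theorem commutatorElement_Ua_inv_Uc_mul_Ub_sq_eq_one : ⁅Ua⁻¹, Uc⁆ * Ub ^ 2 = 1 := by
  rw [commutatorElement_def, inv_inv]
  exact PresentedGroup.one_of_mem (x := (FreeGroup.of 0)⁻¹ * FreeGroup.of 2 * FreeGroup.of 0 *
    (FreeGroup.of 2)⁻¹ * FreeGroup.of 1 ^ 2) (by simp [Urels])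

theorem commutatorElement_Ua_Uc_sq_eq_one : ⁅Ua, Uc⁆ ^ 2 = 1 :=
  commutatorElement_sq_eq_one_of_mul_sq_eq_one Ub_pow_four
    commutatorElement_Ua_inv_Uc_mul_Ub_sq_eq_one

theorem commute_Ua_sq_Uc_mul_Ua_mul_Uc : Commute (Ua ^ 2) (Uc * Ua * Uc) :=
  commute_sq_mul_mul_of_relations Ua_pow_four Uc_pow_four
    commutatorElement_Ua_inv_Uc_mul_Ub_sq_eq_one Ua_sq_mul_Uc_sq_mul_Ub_sq_mul_eq_one

/-- The elements `x = (ac⁻¹)^4` and `y = (c⁻¹a)^4` of `U` commute. -/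
theorem x_comm_y : Ux * Uy = Uy * Ux := by
  have h : Commute Ux ((Uc⁻¹ * Ua) ^ 2) := x_comm_y_general Ua_pow_four Uc_pow_four
    commutatorElement_Ua_Uc_sq_eq_one commute_Ua_sq_Uc_mul_Ua_mul_Uc
  simpa only [Uy, ← pow_mul] using (h.pow_right 2).eq
end

section
/- In the group U, the subgroup N = ⟨x, y⟩ generated by x = (ac^{-1})^4 and y = (c^{-1}a)^4 is free abelian of rank 2; that is, N is isomorphic to Z ⊕ Z, with {x, y} a free generating set. -/
/-!
Commutation. In a group with `g ^ 4 = h ^ 4 = (g * h) ^ 2 = 1`, a quotient of the `(4, 4, 2)`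
triangle group, `g * h⁻¹` and `h⁻¹ * g` are commuting translations, which the half turn `g * h`
inverts. For the pair `b, c` this makes `p = c²b²` and `q = c⁻¹b²c⁻¹` commute. The relators give
`x = (a²q)²` and `y = (c⁻¹a²c · p)²`, where `a²` commutes with `p`, hence `c⁻¹a²c` with `q`, so it
remains to see that `z = a² · qa²q⁻¹` commutes with `c⁻¹a²c`. Conjugating by `c` turns `c⁻¹a²c` into
`a²` and `z` into `(s²b²)²` with `s = aba⁻¹`. But `b, s` is again such a pair, with half turn
`bs = a²`, and its translations have order dividing `4` because `(a²b²)⁴ = 1`, so `a²` inverts, and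
hence fixes, their squares.

Independence. `U` acts on the lattice `ℤ × ℤ` by a reflection and two quarter turns so that `x` and
`y` become the translations by `(4, 0)` and `(0, 4)`.
-/

section Group

variable {G : Type*} [Group G]

theorem inv_sq_of_pow_four_eq_one {g : G} (hg : g ^ 4 = 1) : (g ^ 2)⁻¹ = g ^ 2 :=
  inv_eq_of_mul_eq_one_left (by rw [← pow_add, hg])

theorem inv_eq_pow_three {g : G} (hg : g ^ 4 = 1) : g⁻¹ = g ^ 3 :=
  inv_eq_of_mul_eq_one_left (by rw [← pow_succ, hg])

theorem mul_eq_inv_mul_inv_of_mul_sq_eq_one {g h : G} (hgh : (g * h) ^ 2 = 1) :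
    g * h = h⁻¹ * g⁻¹ := by
  rw [← mul_inv_rev, eq_inv_iff_mul_eq_one, ← sq, hgh]

theorem mul_sq_eq_one_symm {g h : G} (hgh : (g * h) ^ 2 = 1) : (h * g) ^ 2 = 1 :=
  (SemiconjBy.pow_right (mul_assoc h g h).symm 2).eq_one_iff.1 hgh

theorem commute_sq_of_semiconjBy_inv_s5 {r p : G} (hr : SemiconjBy r p p⁻¹) (hp : p ^ 4 = 1) :
    Commute r (p ^ 2) := by
  have h := hr.pow_right 2
  rwa [inv_pow, inv_sq_of_pow_four_eq_one hp] at h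

theorem commute_mul_sq_mul_sq_of_commute_mul_conj {u v p q : G} (hup : Commute u p)
    (hvq : Commute v q) (hpq : Commute p q) (huv : Commute (u * (q * u * q⁻¹)) v) :
    Commute ((u * q) ^ 2) ((v * p) ^ 2) := by
  have hzp : Commute (u * (q * u * q⁻¹)) p :=
    hup.mul_left ((hpq.symm.mul_left hup).mul_left hpq.symm.inv_left)
  have hzw : Commute (u * (q * u * q⁻¹)) (v * (p * v * p⁻¹)) :=
    huv.mul_right ((hzp.mul_right huv).mul_right hzp.inv_right)
  have hqw : Commute q (v * (p * v * p⁻¹)) :=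
    hvq.symm.mul_right ((hpq.symm.mul_right hvq.symm).mul_right hpq.symm.inv_right)
  have huqsq : (u * q) ^ 2 = u * (q * u * q⁻¹) * q ^ 2 := by simp [sq, mul_assoc]
  have hvpsq : (v * p) ^ 2 = v * (p * v * p⁻¹) * p ^ 2 := by simp [sq, mul_assoc]
  rw [huqsq, hvpsq]
  exact (hzw.mul_right (hzp.pow_right 2)).mul_left
    ((hqw.mul_right (hpq.symm.pow_right 2)).pow_left 2)

theorem semiconjBy_inv_of_sq_eq_one {g r : G} (hr : r ^ 2 = 1) (hgr : (g * r) ^ 2 = 1) :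
    SemiconjBy r g g⁻¹ := by
  have hr' : r⁻¹ = r := inv_eq_of_mul_eq_one_left (by rw [← sq, hr])
  calc r * g = g⁻¹ * r⁻¹ := mul_eq_inv_mul_inv_of_mul_sq_eq_one (mul_sq_eq_one_symm hgr)
    _ = g⁻¹ * r := by rw [hr']

section Triangle

variable {g h : G}

theorem sq_mul_sq_eq_inv_mul_inv_mul (hgh : (g * h) ^ 2 = 1) :
    h ^ 2 * g ^ 2 = (g * h⁻¹)⁻¹ * (h⁻¹ * g) := by
  have hhg := mul_eq_inv_mul_inv_of_mul_sq_eq_one (mul_sq_eq_one_symm hgh)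
  calc h ^ 2 * g ^ 2 = h * (h * g) * g := by simp only [sq, mul_assoc]
    _ = (g * h⁻¹)⁻¹ * (h⁻¹ * g) := by rw [hhg]; group

theorem commute_mul_inv_inv_mul (hg : g ^ 4 = 1) (hh : h ^ 4 = 1) (hgh : (g * h) ^ 2 = 1) :
    Commute (g * h⁻¹) (h⁻¹ * g) := by
  have hgh' := mul_eq_inv_mul_inv_of_mul_sq_eq_one hgh
  have hhg := mul_eq_inv_mul_inv_of_mul_sq_eq_one (mul_sq_eq_one_symm hgh)
  calc g * h⁻¹ * (h⁻¹ * g) = g * (h ^ 2)⁻¹ * g := by group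
    _ = (g * h) * (h * g) := by
      rw [inv_sq_of_pow_four_eq_one hh]; simp only [sq, mul_assoc]
    _ = h⁻¹ * (g ^ 2)⁻¹ * h⁻¹ := by rw [hgh', hhg]; group
    _ = h⁻¹ * g * (g * h⁻¹) := by
      rw [inv_sq_of_pow_four_eq_one hg]; simp only [sq, mul_assoc]

theorem commute_sq_mul_sq_inv_mul_sq_mul_inv (hg : g ^ 4 = 1) (hh : h ^ 4 = 1)
    (hgh : (g * h) ^ 2 = 1) : Commute (h ^ 2 * g ^ 2) (h⁻¹ * g ^ 2 * h⁻¹) := by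
  have htrans := commute_mul_inv_inv_mul hg hh hgh
  have hq : h⁻¹ * g ^ 2 * h⁻¹ = h⁻¹ * g * (g * h⁻¹) := by simp only [sq, mul_assoc]
  rw [sq_mul_sq_eq_inv_mul_inv_mul hgh, hq]
  exact (htrans.mul_right (.refl _)).inv_left.mul_left ((Commute.refl _).mul_right htrans.symm)

theorem mul_semiconjBy_mul_inv_inv (hh : h ^ 4 = 1) (hgh : (g * h) ^ 2 = 1) :
    SemiconjBy (g * h) (g * h⁻¹) (g * h⁻¹)⁻¹ :=
  calc g * h * (g * h⁻¹) = (h ^ 2)⁻¹ := by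
        rw [mul_eq_inv_mul_inv_of_mul_sq_eq_one hgh]; group
    _ = (g * h⁻¹)⁻¹ * (g * h) := by rw [inv_sq_of_pow_four_eq_one hh, sq]; group

theorem mul_semiconjBy_inv_mul_inv (hg : g ^ 4 = 1) (hgh : (g * h) ^ 2 = 1) :
    SemiconjBy (g * h) (h⁻¹ * g) (h⁻¹ * g)⁻¹ :=
  calc g * h * (h⁻¹ * g) = g ^ 2 := by rw [sq]; group
    _ = (g ^ 2)⁻¹ := (inv_sq_of_pow_four_eq_one hg).symm
    _ = (h⁻¹ * g)⁻¹ * (g * h) := by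
        rw [mul_eq_inv_mul_inv_of_mul_sq_eq_one hgh]; group

theorem commute_mul_sq_mul_sq_sq (hg : g ^ 4 = 1) (hh : h ^ 4 = 1) (hgh : (g * h) ^ 2 = 1)
    (he : (g * h⁻¹) ^ 4 = 1) : Commute (g * h) ((h ^ 2 * g ^ 2) ^ 2) := by
  have hconj : SemiconjBy h (h⁻¹ * g) (g * h⁻¹) := by simp [SemiconjBy]
  have hf : (h⁻¹ * g) ^ 4 = 1 := (hconj.pow_right 4).eq_one_iff.2 he
  have he' := commute_sq_of_semiconjBy_inv_s5 (mul_semiconjBy_mul_inv_inv hh hgh) he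
  have hf' := commute_sq_of_semiconjBy_inv_s5 (mul_semiconjBy_inv_mul_inv hg hgh) hf
  rw [sq_mul_sq_eq_inv_mul_inv_mul hgh, (commute_mul_inv_inv_mul hg hh hgh).inv_left.mul_pow,
    inv_pow]
  exact he'.inv_right.mul_right hf'

end Triangle

section Relators

variable {a b c : G}

theorem mul_eq_mul_sq_mul_of_mul_sq_eq_one (hab : (a * b) ^ 2 = 1) (hbc : (b * c) ^ 2 = 1)
    (habc : (a * b * c) ^ 2 = 1) : c * a = a * b ^ 2 * c :=
  calc c * a = b⁻¹ * (b * c * a) := by group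
    _ = b⁻¹ * a⁻¹ * (b * c) := by
      rw [semiconjBy_inv_of_sq_eq_one hbc (mul_assoc a b c ▸ habc), mul_assoc]
    _ = a * b ^ 2 * c := by
      rw [← mul_eq_inv_mul_inv_of_mul_sq_eq_one hab]; simp only [sq, mul_assoc]

theorem commute_sq_sq_mul_sq (ha : a ^ 4 = 1) (hb : b ^ 4 = 1) (hc : c ^ 4 = 1)
    (hca : c * a = a * b ^ 2 * c) (hac : a ^ 2 * c ^ 2 * b ^ 2 * (a * c) ^ 2 = 1) :
    Commute (a ^ 2) (c ^ 2 * b ^ 2) := by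
  have hac2 : (a * c) ^ 2 = a ^ 2 * (c ^ 2 * b ^ 2)⁻¹ := by
    calc (a * c) ^ 2 = a * (c * a) * c := by simp only [sq, mul_assoc]
      _ = a ^ 2 * (b ^ 2 * c ^ 2) := by rw [hca]; simp only [sq, mul_assoc]
      _ = a ^ 2 * (c ^ 2 * b ^ 2)⁻¹ := by
        rw [mul_inv_rev, inv_sq_of_pow_four_eq_one hb, inv_sq_of_pow_four_eq_one hc]
  calc a ^ 2 * (c ^ 2 * b ^ 2) = ((a * c) ^ 2)⁻¹ := by
        rw [← mul_assoc]; exact eq_inv_of_mul_eq_one_left hac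
    _ = c ^ 2 * b ^ 2 * a ^ 2 := by
        rw [hac2, mul_inv_rev, inv_inv, inv_sq_of_pow_four_eq_one ha]

theorem mul_inv_sq_eq_sq_mul (hb : b ^ 4 = 1) (hca : c * a = a * b ^ 2 * c) :
    (a * c⁻¹) ^ 2 = a ^ 2 * (c⁻¹ * b ^ 2 * c⁻¹) := by
  have h : c⁻¹ * a = a * c⁻¹ * b ^ 2 := by
    calc c⁻¹ * a = c⁻¹ * (a * b ^ 2 * c) * c⁻¹ * (b ^ 2)⁻¹ := by group
      _ = a * c⁻¹ * b ^ 2 := by rw [← hca, inv_sq_of_pow_four_eq_one hb]; group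
  calc (a * c⁻¹) ^ 2 = a * (c⁻¹ * a) * c⁻¹ := by simp only [sq, mul_assoc]
    _ = a ^ 2 * (c⁻¹ * b ^ 2 * c⁻¹) := by rw [h]; simp only [sq, mul_assoc]

theorem commute_inv_conj_sq (hb : b ^ 4 = 1)
    (hap : Commute (a ^ 2) (c ^ 2 * b ^ 2)) :
    Commute (c⁻¹ * a ^ 2 * c) (c⁻¹ * b ^ 2 * c⁻¹) := by
  have hq : c⁻¹ * (c ^ 2 * b ^ 2) * c = (c⁻¹ * b ^ 2 * c⁻¹)⁻¹ := by
    rw [mul_inv_rev, mul_inv_rev, inv_inv, inv_sq_of_pow_four_eq_one hb]; group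
  have h := hap.conj c⁻¹
  rwa [inv_inv, hq, Commute.inv_right_iff] at h

theorem conj_sq_eq_inv_conj_sq (ha : a ^ 4 = 1) (hbc : (b * c) ^ 2 = 1)
    (habc : (a * b * c) ^ 2 = 1) : c * a ^ 2 * c⁻¹ = b⁻¹ * a ^ 2 * b := by
  have h := (semiconjBy_inv_of_sq_eq_one hbc (mul_assoc a b c ▸ habc)).pow_right 2
  rw [inv_pow, inv_sq_of_pow_four_eq_one ha] at h
  calc c * a ^ 2 * c⁻¹ = b⁻¹ * (b * c * a ^ 2) * c⁻¹ := by group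
    _ = b⁻¹ * a ^ 2 * b := by rw [h.eq]; group

theorem inv_conj_sq_eq_conj (hb : b ^ 4 = 1) (hc : c ^ 4 = 1)
    (hca : c * a = a * b ^ 2 * c) (hap : Commute (a ^ 2) (c ^ 2 * b ^ 2))
    (hcb : c * a ^ 2 * c⁻¹ = b⁻¹ * a ^ 2 * b) :
    c⁻¹ * a ^ 2 * c = a * (b⁻¹ * a ^ 2 * b) * a⁻¹ := by
  have hbac : (b ^ 2)⁻¹ * a ^ 2 * b ^ 2 = c ^ 2 * a ^ 2 * (c ^ 2)⁻¹ :=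
    calc (b ^ 2)⁻¹ * a ^ 2 * b ^ 2 = b ^ 2 * a ^ 2 * (b ^ 2)⁻¹ := by
          rw [inv_sq_of_pow_four_eq_one hb]
      _ = (c ^ 2)⁻¹ * (c ^ 2 * b ^ 2 * a ^ 2) * (b ^ 2)⁻¹ := by group
      _ = (c ^ 2)⁻¹ * a ^ 2 * c ^ 2 := by rw [← hap.eq]; group
      _ = c ^ 2 * a ^ 2 * (c ^ 2)⁻¹ := by rw [inv_sq_of_pow_four_eq_one hc]
  calc c⁻¹ * a ^ 2 * c = a * ((c * a)⁻¹ * a ^ 2 * (c * a)) * a⁻¹ := by group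
    _ = a * (c⁻¹ * ((b ^ 2)⁻¹ * a ^ 2 * b ^ 2) * c) * a⁻¹ := by rw [hca]; group
    _ = a * (c * a ^ 2 * c⁻¹) * a⁻¹ := by rw [hbac]; group
    _ = a * (b⁻¹ * a ^ 2 * b) * a⁻¹ := by rw [hcb]

theorem mul_conj_eq_sq (ha : a ^ 4 = 1) (hab : (a * b) ^ 2 = 1) : b * (a * b * a⁻¹) = a ^ 2 := by
  rw [mul_eq_inv_mul_inv_of_mul_sq_eq_one hab, ← inv_sq_of_pow_four_eq_one ha]
  group

theorem conj_sq_mul_conj_sq_eq (ha : a ^ 4 = 1) (hb : b ^ 4 = 1) (hab : (a * b) ^ 2 = 1)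
    (hcb : c * a ^ 2 * c⁻¹ = b⁻¹ * a ^ 2 * b)
    (hca : c⁻¹ * a ^ 2 * c = a * (b⁻¹ * a ^ 2 * b) * a⁻¹) :
    c * (a ^ 2 * (c⁻¹ * b ^ 2 * c⁻¹ * a ^ 2 * (c⁻¹ * b ^ 2 * c⁻¹)⁻¹)) * c⁻¹ =
      ((a * b * a⁻¹) ^ 2 * b ^ 2) ^ 2 := by
  have hbs := mul_conj_eq_sq ha hab
  set s := a * b * a⁻¹ with hs
  have hbs2 : (b * s) ^ 2 = 1 := by rw [hbs, ← pow_mul, ha]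
  have hb3 : b * b ^ 2 = b⁻¹ := by rw [← pow_succ', inv_eq_pow_three hb]
  have hsb : b⁻¹ * a ^ 2 * b = s * b := by rw [← hbs]; group
  have hsbs : a * (b⁻¹ * a ^ 2 * b) * a⁻¹ = s⁻¹ * b * s ^ 2 :=
    calc a * (b⁻¹ * a ^ 2 * b) * a⁻¹ = s⁻¹ * a ^ 2 * s := by rw [hs]; group
      _ = s⁻¹ * b * s ^ 2 := by rw [← hbs]; simp only [sq, mul_assoc]
  calc c * (a ^ 2 * (c⁻¹ * b ^ 2 * c⁻¹ * a ^ 2 * (c⁻¹ * b ^ 2 * c⁻¹)⁻¹)) * c⁻¹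
      = (c * a ^ 2 * c⁻¹) * (b ^ 2 * (c⁻¹ * a ^ 2 * c) * (b ^ 2)⁻¹) := by group
    _ = s * (b * b ^ 2) * s⁻¹ * b * (s ^ 2 * b ^ 2) := by
      rw [hcb, hca, hsbs, hsb, inv_sq_of_pow_four_eq_one hb]; simp only [mul_assoc]
    _ = (b * s⁻¹)⁻¹ * (s⁻¹ * b) * (s ^ 2 * b ^ 2) := by rw [hb3]; group
    _ = (s ^ 2 * b ^ 2) ^ 2 := by rw [← sq_mul_sq_eq_inv_mul_inv_mul hbs2, ← sq]

theorem commute_sq_conj_sq_mul_sq_sq (ha : a ^ 4 = 1) (hb : b ^ 4 = 1) (hab : (a * b) ^ 2 = 1)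
    (habab : (a ^ 2 * b ^ 2) ^ 4 = 1) : Commute (a ^ 2) (((a * b * a⁻¹) ^ 2 * b ^ 2) ^ 2) := by
  have hbs := mul_conj_eq_sq ha hab
  set s := a * b * a⁻¹ with hs
  have hs4 : s ^ 4 = 1 := by rw [hs, conj_pow, hb, mul_one, mul_inv_cancel]
  have hbs2 : (b * s) ^ 2 = 1 := by rw [hbs, ← pow_mul, ha]
  have hconj : SemiconjBy b (b * s⁻¹)⁻¹ (a ^ 2 * b ^ 2) :=
    calc b * (b * s⁻¹)⁻¹ = b * s * b⁻¹ := by group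
      _ = a ^ 2 * b ^ 2 * b := by rw [hbs, inv_eq_pow_three hb, pow_succ b 2, mul_assoc]
  have he : (b * s⁻¹) ^ 4 = 1 := by
    rw [← inv_eq_one, ← inv_pow]
    exact (hconj.pow_right 4).eq_one_iff.2 habab
  rw [← hbs]
  exact commute_mul_sq_mul_sq_sq hb hs4 hbs2 he

theorem commute_mul_inv_pow_four_inv_mul_pow_four (ha : a ^ 4 = 1) (hb : b ^ 4 = 1)
    (hc : c ^ 4 = 1) (hab : (a * b) ^ 2 = 1) (hbc : (b * c) ^ 2 = 1) (habc : (a * b * c) ^ 2 = 1)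
    (habab : (a ^ 2 * b ^ 2) ^ 4 = 1) (hac : a ^ 2 * c ^ 2 * b ^ 2 * (a * c) ^ 2 = 1) :
    Commute ((a * c⁻¹) ^ 4) ((c⁻¹ * a) ^ 4) := by
  have hca := mul_eq_mul_sq_mul_of_mul_sq_eq_one hab hbc habc
  have hap := commute_sq_sq_mul_sq ha hb hc hca hac
  have hcb := conj_sq_eq_inv_conj_sq ha hbc habc
  have hz : Commute (a ^ 2 * (c⁻¹ * b ^ 2 * c⁻¹ * a ^ 2 * (c⁻¹ * b ^ 2 * c⁻¹)⁻¹))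
      (c⁻¹ * a ^ 2 * c) := by
    rw [← Commute.conj_iff c, conj_sq_mul_conj_sq_eq ha hb hab hcb
      (inv_conj_sq_eq_conj hb hc hca hap hcb)]
    have hcac : c * (c⁻¹ * a ^ 2 * c) * c⁻¹ = a ^ 2 := by group
    rw [hcac]
    exact (commute_sq_conj_sq_mul_sq_sq ha hb hab habab).symm
  have hx : (a * c⁻¹) ^ 4 = (a ^ 2 * (c⁻¹ * b ^ 2 * c⁻¹)) ^ 2 := by
    rw [← mul_inv_sq_eq_sq_mul hb hca, ← pow_mul]
  have hy : (c⁻¹ * a) ^ 4 = (c⁻¹ * a ^ 2 * c * (c ^ 2 * b ^ 2)) ^ 2 := by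
    have hconj : c⁻¹ * a = c⁻¹ * (a * c⁻¹) * c⁻¹⁻¹ := by group
    rw [hconj, conj_pow, hx, ← conj_pow, ← inv_sq_of_pow_four_eq_one hc]
    group
  rw [hx, hy]
  exact commute_mul_sq_mul_sq_of_commute_mul_conj hap (commute_inv_conj_sq hb hap)
    (commute_sq_mul_sq_inv_mul_sq_mul_inv hb hc hbc) hz

end Relators

end Group

section ZpowPair

variable {G : Type*} [Group G] {x y : G}

/-- The homomorphism `(m, n) ↦ x ^ m * y ^ n` determined by two commuting elements. -/
noncomputable def zpowPairHom (hxy : Commute x y) : Multiplicative (ℤ × ℤ) →* G :=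
  ((zpowersHom G x).noncommCoprod (zpowersHom G y) fun m n => by
    simpa only [zpowersHom_apply] using hxy.zpow_zpow m.toAdd n.toAdd).comp
    (MulEquiv.prodMultiplicative ℤ ℤ).toMonoidHom

theorem zpowPairHom_ofAdd (hxy : Commute x y) (v : ℤ × ℤ) :
    zpowPairHom hxy (Multiplicative.ofAdd v) = x ^ v.1 * y ^ v.2 :=
  rfl

theorem range_zpowPairHom (hxy : Commute x y) :
    (zpowPairHom hxy).range = Subgroup.closure {x, y} := by
  rw [zpowPairHom, MonoidHom.range_comp,
    MonoidHom.range_eq_top.2 (MulEquiv.prodMultiplicative ℤ ℤ).surjective,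
    ← MonoidHom.range_eq_map, MonoidHom.noncommCoprod_range, Set.insert_eq, Subgroup.closure_union,
    ← Subgroup.zpowers_eq_closure, ← Subgroup.zpowers_eq_closure, Subgroup.range_zpowersHom,
    Subgroup.range_zpowersHom]

end ZpowPair

section PlaneAction

/-- The reflection of the lattice `ℤ × ℤ` through which the generator `a` acts. -/
def latticeReflection : Equiv.Perm (ℤ × ℤ) where
  toFun v := (v.2 + 1, v.1 - 1)
  invFun v := (v.2 + 1, v.1 - 1)
  left_inv v := by ext <;> simp
  right_inv v := by ext <;> simp

/-- The clockwise quarter turn of the lattice `ℤ × ℤ` that sends the origin to `w`; the generators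
`b` and `c` act through `w = (1, 0)` and `w = (0, 1)`. -/
def latticeQuarterTurn (w : ℤ × ℤ) : Equiv.Perm (ℤ × ℤ) where
  toFun v := (w.1 + v.2, w.2 - v.1)
  invFun v := (w.2 - v.2, v.1 - w.1)
  left_inv v := by ext <;> simp
  right_inv v := by ext <;> simp

theorem latticeReflection_apply (v : ℤ × ℤ) : latticeReflection v = (v.2 + 1, v.1 - 1) := rfl

theorem latticeReflection_inv_apply (v : ℤ × ℤ) :
    latticeReflection⁻¹ v = (v.2 + 1, v.1 - 1) := rfl

theorem latticeQuarterTurn_apply (w v : ℤ × ℤ) :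
    latticeQuarterTurn w v = (w.1 + v.2, w.2 - v.1) := rfl

theorem latticeQuarterTurn_inv_apply (w v : ℤ × ℤ) :
    (latticeQuarterTurn w)⁻¹ v = (w.2 - v.2, v.1 - w.1) := rfl

theorem lift_lattice_eq_one_of_mem_Urels :
    ∀ r ∈ Urels, FreeGroup.lift
      ![latticeReflection, latticeQuarterTurn (1, 0), latticeQuarterTurn (0, 1)] r = 1 := by
  intro r hr
  simp only [Urels, Set.mem_insert_iff, Set.mem_singleton_iff] at hr
  rcases hr with rfl | rfl | rfl | rfl | rfl | rfl | rfl | rfl | rfl <;>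
  · simp only [map_mul, map_pow, map_inv, FreeGroup.lift_apply_of, Matrix.cons_val]
    ext v <;>
    · simp only [pow_succ, pow_zero, one_mul, Equiv.Perm.mul_apply, latticeReflection_apply,
        latticeReflection_inv_apply, latticeQuarterTurn_apply, latticeQuarterTurn_inv_apply,
        Equiv.Perm.one_apply]
      ring

/-- The action of `U` on the lattice `ℤ × ℤ` by affine isometries. -/
def latticeAction : UGroup →* Equiv.Perm (ℤ × ℤ) :=
  PresentedGroup.toGroup lift_lattice_eq_one_of_mem_Urels

theorem latticeAction_Ua : latticeAction Ua = latticeReflection :=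
  PresentedGroup.toGroup.of lift_lattice_eq_one_of_mem_Urels

theorem latticeAction_Uc : latticeAction Uc = latticeQuarterTurn (0, 1) :=
  PresentedGroup.toGroup.of lift_lattice_eq_one_of_mem_Urels

/-- The action of `ℤ × ℤ` on itself by translations. -/
def latticeTranslation : Multiplicative (ℤ × ℤ) →* Equiv.Perm (ℤ × ℤ) :=
  MulAction.toPermHom (Multiplicative (ℤ × ℤ)) (ℤ × ℤ)

theorem latticeTranslation_ofAdd_apply (w v : ℤ × ℤ) :
    latticeTranslation (Multiplicative.ofAdd w) v = w + v := rfl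

theorem latticeAction_Ux :
    latticeAction Ux = latticeTranslation (Multiplicative.ofAdd (4, 0)) := by
  ext v <;>
  · simp only [Ux, map_mul, map_inv, latticeAction_Ua, latticeAction_Uc, pow_succ,
      pow_zero, one_mul, Equiv.Perm.mul_apply, latticeReflection_apply,
      latticeQuarterTurn_inv_apply, latticeTranslation_ofAdd_apply, Prod.fst_add, Prod.snd_add]
    ring

theorem latticeAction_Uy :
    latticeAction Uy = latticeTranslation (Multiplicative.ofAdd (0, 4)) := by
  ext v <;>
  · simp only [Uy, map_mul, map_inv, latticeAction_Ua, latticeAction_Uc, pow_succ,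
      pow_zero, one_mul, Equiv.Perm.mul_apply, latticeReflection_apply,
      latticeQuarterTurn_inv_apply, latticeTranslation_ofAdd_apply, Prod.fst_add, Prod.snd_add]
    ring

theorem latticeAction_Ux_zpow_mul_Uy_zpow (m n : ℤ) :
    latticeAction (Ux ^ m * Uy ^ n) =
      latticeTranslation (Multiplicative.ofAdd (m * 4, n * 4)) := by
  rw [map_mul, map_zpow, map_zpow, latticeAction_Ux, latticeAction_Uy,
    ← map_zpow latticeTranslation, ← map_zpow latticeTranslation, ← map_mul, ← ofAdd_zsmul,
    ← ofAdd_zsmul, ← ofAdd_add]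
  simp

end PlaneAction

theorem commute_Ux_Uy : Commute Ux Uy := by
  have hrel {r : FreeGroup (Fin 3)} (hr : r ∈ Urels) : PresentedGroup.mk Urels r = 1 :=
    PresentedGroup.one_of_mem hr
  exact commute_mul_inv_pow_four_inv_mul_pow_four (a := Ua) (b := Ub) (c := Uc)
    (hrel (r := .of 0 ^ 4) (by simp [Urels]))
    (hrel (r := .of 1 ^ 4) (by simp [Urels]))
    (hrel (r := .of 2 ^ 4) (by simp [Urels]))
    (hrel (r := (.of 0 * .of 1) ^ 2) (by simp [Urels]))
    (hrel (r := (.of 1 * .of 2) ^ 2) (by simp [Urels]))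
    (hrel (r := (.of 0 * .of 1 * .of 2) ^ 2) (by simp [Urels]))
    (hrel (r := (.of 0 ^ 2 * .of 1 ^ 2) ^ 4) (by simp [Urels]))
    (hrel (r := .of 0 ^ 2 * .of 2 ^ 2 * .of 1 ^ 2 * (.of 0 * .of 2) ^ 2) (by simp [Urels]))

theorem injective_zpowPairHom_Ux_Uy : Function.Injective (zpowPairHom commute_Ux_Uy) := by
  rw [injective_iff_map_eq_one]
  intro v hv
  obtain ⟨⟨m, n⟩, rfl⟩ := Multiplicative.ofAdd.surjective v
  have horigin : latticeAction (zpowPairHom commute_Ux_Uy (Multiplicative.ofAdd (m, n))) 0 = 0 := by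
    rw [hv, map_one, Equiv.Perm.one_apply]
  rw [zpowPairHom_ofAdd, latticeAction_Ux_zpow_mul_Uy_zpow, latticeTranslation_ofAdd_apply,
    add_zero, Prod.mk_eq_zero] at horigin
  rw [ofAdd_eq_one, Prod.mk_eq_zero]
  omega

/-- The subgroup `N = ⟨x, y⟩` of `U` is free abelian of rank 2, with `{x, y}` a free
generating set: there is an injective homomorphism from `ℤ ⊕ ℤ` into `U` sending the
two free generators to `x` and `y`, whose range is `N`. -/
theorem N_free_abelian_rank_two :
    ∃ f : Multiplicative (ℤ × ℤ) →* UGroup,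
      Function.Injective f ∧
      f (Multiplicative.ofAdd ((1 : ℤ), (0 : ℤ))) = Ux ∧
      f (Multiplicative.ofAdd ((0 : ℤ), (1 : ℤ))) = Uy ∧
      f.range = Subgroup.closure {Ux, Uy} := by
  refine ⟨zpowPairHom commute_Ux_Uy, injective_zpowPairHom_Ux_Uy, ?_, ?_,
    range_zpowPairHom commute_Ux_Uy⟩ <;>
  simp [zpowPairHom_ofAdd]
end

section
/- For every positive integer m, the subgroup N_m = ⟨x^m, y^m⟩ of U generated by x^m = (ac^{-1})^{4m} and y^m = (c^{-1}a)^{4m} is a normal subgroup of U of index |U : N_m| = 1024 m^2. -/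
/-- The subgroup `N_m = ⟨x^m, y^m⟩` of `U`. -/
def UN (m : ℕ) : Subgroup UGroup := Subgroup.closure {Ux ^ m, Uy ^ m}

/-! There is a chain of normal subgroups `U ⊇ L ⊇ K N_m ⊇ N_m` with factors of order `16`, `(2m)²`
and `16`. Here `K`, the normal closure of `a²`, has order 16, and `U / K` is a plane
crystallographic group. The elements `σ` and `τ` of `U` commute and act on the plane as translations
by `(2, 0)` and `(0, 2)`, `L` is generated by them and `K`, and `x = σ² z`, `y = τ² z` for a central
involution `z` of `U` lying in `K`. Hence `K N_m = K ⟨σ^{2m}, τ^{2m}⟩`, and `N_m` meets `K`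
trivially since its nontrivial elements move the plane. The generators `a, b, c` permute
`{x^{±1}, y^{±1}}` by conjugation, so `N_m` is normal. -/

open Subgroup

theorem commute_of_sq_eq_one {G : Type*} [Group G] {g h : G} (hg : g ^ 2 = 1) (hh : h ^ 2 = 1)
    (hgh : (g * h) ^ 2 = 1) : Commute g h := by
  rw [sq, mul_eq_one_iff_eq_inv] at hg hh hgh
  rw [Commute, SemiconjBy, hgh, mul_inv_rev, ← hg, ← hh]

theorem semiconjBy_of_semiconjBy {G : Type*} [Group G] {g u u' x x' y y' : G}
    (hu : SemiconjBy g u u') (hx : SemiconjBy g x x') (hy : SemiconjBy g y y')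
    (h : SemiconjBy u x y) : SemiconjBy u' x' y' := by
  rw [← mul_inv_eq_of_eq_mul hu.eq, ← mul_inv_eq_of_eq_mul hx.eq, ← mul_inv_eq_of_eq_mul hy.eq]
  exact SemiconjBy.conj_iff.mpr h

theorem semiconjBy_of_mul_semiconjBy {G : Type*} [Group G] {g h x y x' : G}
    (hgh : SemiconjBy (g * h) x x') (hh : SemiconjBy h x y) : SemiconjBy g y x' := by
  simpa only [mul_inv_cancel_right] using hgh.mul_left (SemiconjBy.inv_symm_left hh)

/-- The homomorphism `(m, n) ↦ g ^ m * h ^ n` from `ℤ × ℤ` attached to commuting elements `g`, `h`,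
with `ℤ` written multiplicatively. -/
def latticeHom {G : Type*} [Group G] {g h : G} (hgh : Commute g h) :
    Multiplicative ℤ × Multiplicative ℤ →* G :=
  (zpowersHom G g).noncommCoprod (zpowersHom G h) fun m n ↦ by
    simpa only [zpowersHom_apply] using hgh.zpow_zpow m.toAdd n.toAdd

theorem latticeHom_apply {G : Type*} [Group G] {g h : G} (hgh : Commute g h)
    (u : Multiplicative ℤ × Multiplicative ℤ) :
    latticeHom hgh u = g ^ u.1.toAdd * h ^ u.2.toAdd := rfl

theorem map_latticeHom_prod_zpowers {G : Type*} [Group G] {g h : G} (hgh : Commute g h) (n : ℤ) :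
    ((zpowers (.ofAdd n)).prod (zpowers (.ofAdd n))).map (latticeHom hgh) =
      closure {g ^ n, h ^ n} := by
  have hg : latticeHom hgh (.ofAdd n, 1) = g ^ n := by simp [latticeHom_apply]
  have hh : latticeHom hgh (1, .ofAdd n) = h ^ n := by simp [latticeHom_apply]
  apply le_antisymm
  · rw [map_le_iff_le_comap, prod_le_iff, MonoidHom.map_zpowers, MonoidHom.map_zpowers, zpowers_le,
      zpowers_le, mem_comap, mem_comap, MonoidHom.inl_apply, MonoidHom.inr_apply, hg, hh]
    exact ⟨subset_closure (.inl rfl), subset_closure (.inr rfl)⟩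
  · rw [closure_le, Set.pair_subset_iff, ← hg, ← hh]
    exact ⟨mem_map_of_mem _ ⟨mem_zpowers _, one_mem _⟩, mem_map_of_mem _ ⟨one_mem _, mem_zpowers _⟩⟩

theorem range_latticeHom {G : Type*} [Group G] {g h : G} (hgh : Commute g h) :
    (latticeHom hgh).range = closure {g, h} := by
  have htop : zpowers (Multiplicative.ofAdd (1 : ℤ)) = ⊤ :=
    eq_top_iff.mpr fun m _ ↦ ⟨m.toAdd, by simp [← ofAdd_zsmul]⟩
  have h := map_latticeHom_prod_zpowers hgh 1
  rwa [htop, top_prod_top, ← MonoidHom.range_eq_map, zpow_one, zpow_one] at h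

theorem index_prod_zpowers (n : ℤ) :
    ((zpowers (Multiplicative.ofAdd n)).prod (zpowers (Multiplicative.ofAdd n))).index =
      n.natAbs ^ 2 := by
  have hn : (zpowers (Multiplicative.ofAdd n)).index = n.natAbs := Int.index_zmultiples n
  rw [index_prod, hn, sq]

theorem disjoint_range_ker {A G H : Type*} [Group A] [Group G] [Group H] {f : A →* G}
    {φ : G →* H} (hφf : Function.Injective (φ.comp f)) : Disjoint f.range φ.ker := by
  rw [disjoint_def]
  rintro _ ⟨u, rfl⟩ hu
  rw [hφf (hu.trans (map_one (φ.comp f)).symm), map_one]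

theorem relIndex_sup_map {A G H : Type*} [Group A] [Group G] [Group H] {f : A →* G} {φ : G →* H}
    (hφf : Function.Injective (φ.comp f)) {K : Subgroup G} [K.Normal] (hK : K ≤ φ.ker)
    {B : Subgroup A} (hB : (K ⊔ B.map f).Normal) :
    (K ⊔ B.map f).relIndex (K ⊔ f.range) = B.index := by
  have hcomap : (K ⊔ B.map f).comap f = B := by
    refine le_antisymm (fun u hu ↦ ?_) (map_le_iff_le_comap.mp le_sup_right)
    obtain ⟨k, hk, _, ⟨v, hv, rfl⟩, hkv⟩ := mem_sup_of_normal_left.mp hu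
    have hvu := congrArg φ hkv
    rw [map_mul, MonoidHom.mem_ker.mp (hK hk), one_mul] at hvu
    rwa [← hφf hvu]
  have hsup : K ⊔ f.range = K ⊔ B.map f ⊔ f.range := by
    rw [sup_assoc, sup_eq_right.mpr (map_le_range f B)]
  rw [hsup, relIndex_sup_left, ← index_comap, hcomap]

theorem sup_closure_pair_mul {G : Type*} [Group G] {K : Subgroup G} {g h k l : G} (hk : k ∈ K)
    (hl : l ∈ K) : K ⊔ closure {g * k, h * l} = K ⊔ closure {g, h} := by
  have hle {g h k l : G} (hk : k ∈ K) (hl : l ∈ K) :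
      K ⊔ closure {g * k, h * l} ≤ K ⊔ closure {g, h} := by
    rw [sup_le_iff, closure_le, Set.pair_subset_iff]
    exact ⟨le_sup_left, mul_mem (mem_sup_right (subset_closure (.inl rfl))) (mem_sup_left hk),
      mul_mem (mem_sup_right (subset_closure (.inr rfl))) (mem_sup_left hl)⟩
  refine le_antisymm (hle hk hl) ?_
  simpa only [mul_inv_cancel_right] using
    hle (g := g * k) (h := h * l) (inv_mem hk) (inv_mem hl)

theorem lift_eq_one_of_mem_Urels {G : Type*} [Group G] {f : Fin 3 → G}
    (ha : f 0 ^ 4 = 1) (hb : f 1 ^ 4 = 1) (hc : f 2 ^ 4 = 1) (hab : (f 0 * f 1) ^ 2 = 1)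
    (hbc : (f 1 * f 2) ^ 2 = 1) (habc : (f 0 * f 1 * f 2) ^ 2 = 1)
    (hsq : (f 0 ^ 2 * f 1 ^ 2) ^ 4 = 1)
    (hacb : f 0 ^ 2 * f 2 ^ 2 * f 1 ^ 2 * (f 0 * f 2) ^ 2 = 1)
    (hcomm : (f 0)⁻¹ * f 2 * f 0 * (f 2)⁻¹ * f 1 ^ 2 = 1) :
    ∀ r ∈ Urels, FreeGroup.lift f r = 1 := by
  rintro r (rfl | rfl | rfl | rfl | rfl | rfl | rfl | rfl | rfl) <;>
    simpa only [map_mul, map_pow, map_inv, FreeGroup.lift_apply_of]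

namespace UGroup

theorem a_pow_four : Ua ^ 4 = 1 :=
  PresentedGroup.one_of_mem (rels := Urels) (x := .of 0 ^ 4) (by simp [Urels])

theorem b_pow_four : Ub ^ 4 = 1 :=
  PresentedGroup.one_of_mem (rels := Urels) (x := .of 1 ^ 4) (by simp [Urels])

theorem c_pow_four : Uc ^ 4 = 1 :=
  PresentedGroup.one_of_mem (rels := Urels) (x := .of 2 ^ 4) (by simp [Urels])

theorem a_mul_b_sq : (Ua * Ub) ^ 2 = 1 :=
  PresentedGroup.one_of_mem (rels := Urels) (x := (.of 0 * .of 1) ^ 2) (by simp [Urels])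

theorem b_mul_c_sq : (Ub * Uc) ^ 2 = 1 :=
  PresentedGroup.one_of_mem (rels := Urels) (x := (.of 1 * .of 2) ^ 2) (by simp [Urels])

theorem a_sq_mul_b_sq_pow_four : (Ua ^ 2 * Ub ^ 2) ^ 4 = 1 :=
  PresentedGroup.one_of_mem (rels := Urels) (x := (.of 0 ^ 2 * .of 1 ^ 2) ^ 4) (by simp [Urels])

theorem a_sq_mul_c_sq_mul_b_sq_mul : Ua ^ 2 * Uc ^ 2 * Ub ^ 2 * (Ua * Uc) ^ 2 = 1 :=
  PresentedGroup.one_of_mem (rels := Urels)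
    (x := .of 0 ^ 2 * .of 2 ^ 2 * .of 1 ^ 2 * (.of 0 * .of 2) ^ 2) (by simp [Urels])

theorem commutator_a_c_mul_b_sq : Ua⁻¹ * Uc * Ua * Uc⁻¹ * Ub ^ 2 = 1 :=
  PresentedGroup.one_of_mem (rels := Urels)
    (x := (.of 0)⁻¹ * .of 2 * .of 0 * (.of 2)⁻¹ * .of 1 ^ 2) (by simp [Urels])

/-- The involution `a²`, whose normal closure is the finite normal subgroup `UGroup.K`. -/
def s : UGroup := Ua ^ 2

/-- The conjugate of `a²` by `b`, one of the generators of `UGroup.K`. -/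
def w : UGroup := Ub * s * Ub⁻¹

/-- The product of `a²` with its conjugate by `b²`, one of the generators of `UGroup.K`. -/
def p : UGroup := s * (Ub ^ 2 * s * (Ub ^ 2)⁻¹)

/-- The commutator of the involutions `s` and `w`; it is central in `U`. -/
def z : UGroup := (s * w) ^ 2

/-- With `UGroup.τ`, a basis of a rank two lattice complementing the finite normal subgroup
`UGroup.K` in the subgroup `UGroup.L`. -/
def σ : UGroup := Uc⁻¹ * Ub ^ 2 * Uc⁻¹

/-- With `UGroup.σ`, a basis of a rank two lattice complementing the finite normal subgroup
`UGroup.K` in the subgroup `UGroup.L`. -/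
def τ : UGroup := Uc ^ 2 * Ub ^ 2

theorem b_sq_inv : (Ub ^ 2)⁻¹ = Ub ^ 2 := by
  rw [inv_eq_iff_mul_eq_one, ← pow_add, b_pow_four]

theorem c_sq_inv : (Uc ^ 2)⁻¹ = Uc ^ 2 := by
  rw [inv_eq_iff_mul_eq_one, ← pow_add, c_pow_four]

theorem s_sq : s ^ 2 = 1 := by rw [s, ← pow_mul, a_pow_four]

theorem s_inv : s⁻¹ = s := by rw [inv_eq_iff_mul_eq_one, ← sq, s_sq]

theorem s_mul_s : s * s = 1 := by rw [← sq, s_sq]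

theorem commute_a_s : Commute Ua s := (Commute.refl Ua).pow_right 2

theorem semiconjBy_a_b : SemiconjBy Ua Ub (Ub⁻¹ * s) := by
  rw [SemiconjBy, mul_assoc, s, ← pow_succ, ← mul_right_inj Ub, mul_inv_cancel_left,
    ← mul_right_inj Ua, ← pow_succ', a_pow_four, ← a_mul_b_sq]
  simp only [sq, mul_assoc]

theorem semiconjBy_a_s_mul_b_inv : SemiconjBy Ua (s * Ub⁻¹) Ub := by
  have h := semiconjBy_a_b.inv_right.eq
  rw [mul_inv_rev, inv_inv, s_inv] at h
  rw [SemiconjBy, ← mul_assoc, commute_a_s.eq, mul_assoc, h, ← mul_assoc, ← mul_assoc, s_mul_s,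
    one_mul]

theorem semiconjBy_a_b_sq_mul_c : SemiconjBy Ua (Ub ^ 2 * Uc) Uc := by
  have h : Ua⁻¹ * Uc * Ua * Uc⁻¹ = Ub ^ 2 := by
    rw [mul_eq_one_iff_eq_inv.mp commutator_a_c_mul_b_sq, b_sq_inv]
  rw [SemiconjBy, ← h]
  group

theorem semiconjBy_b_s : SemiconjBy Ub s w := SemiconjBy.conj_mk Ub s

theorem w_sq : w ^ 2 = 1 := (semiconjBy_b_s.pow_right 2).eq_one_iff.mp s_sq

theorem w_inv : w⁻¹ = w := by rw [inv_eq_iff_mul_eq_one, ← sq, w_sq]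

theorem w_mul_w : w * w = 1 := by rw [← sq, w_sq]

theorem p_sq : p ^ 2 = 1 := by
  have h : p = (Ua ^ 2 * Ub ^ 2) ^ 2 := by
    rw [p, b_sq_inv, s, sq (Ua ^ 2 * _)]
    simp only [mul_assoc]
  rw [h, ← pow_mul, a_sq_mul_b_sq_pow_four]

theorem p_inv : p⁻¹ = p := by rw [inv_eq_iff_mul_eq_one, ← sq, p_sq]

theorem p_mul_p : p * p = 1 := by rw [← sq, p_sq]

theorem semiconjBy_b_sq_s : SemiconjBy (Ub ^ 2) s (s * p) := by
  rw [p, ← mul_assoc s, s_mul_s, one_mul]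
  exact SemiconjBy.conj_mk _ _

theorem semiconjBy_b_w : SemiconjBy Ub w (s * p) := by
  have h := semiconjBy_b_sq_s.eq
  rw [SemiconjBy, w, ← mul_assoc, ← mul_assoc, ← sq, h, mul_assoc, sq, mul_inv_cancel_right]

theorem s_mul_p_sq : (s * p) ^ 2 = 1 := (semiconjBy_b_w.pow_right 2).eq_one_iff.mp w_sq

theorem commute_s_p : Commute s p := commute_of_sq_eq_one s_sq p_sq s_mul_p_sq

theorem semiconjBy_b_s_mul_p : SemiconjBy Ub (s * p) (s * w * (s * p)) := by
  have hconj : s * p = Ub ^ 2 * s * (Ub ^ 2)⁻¹ :=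
    (mul_inv_eq_of_eq_mul semiconjBy_b_sq_s.eq).symm
  have hsb : (s * Ub) ^ 4 = 1 := by
    have h := (semiconjBy_a_b.inv_right.pow_right 4).eq_one_iff.mp
      (by rw [inv_pow, b_pow_four, inv_one])
    rwa [mul_inv_rev, inv_inv, s_inv] at h
  have hprod : s * w * (s * p) * (Ub * (s * p) * Ub⁻¹) = 1 := by
    calc s * w * (s * p) * (Ub * (s * p) * Ub⁻¹)
        = (s * Ub) ^ 4 * (Ub ^ 4)⁻¹ := by
          rw [hconj, w]
          simp only [pow_succ, pow_zero, one_mul]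
          group
      _ = 1 := by rw [hsb, b_pow_four, inv_one, mul_one]
  have hinv : (Ub * (s * p) * Ub⁻¹)⁻¹ = Ub * (s * p) * Ub⁻¹ := by
    rw [inv_eq_iff_mul_eq_one, ← sq, conj_pow, s_mul_p_sq, mul_one, mul_inv_cancel]
  rw [mul_eq_one_iff_eq_inv.mp hprod, hinv]
  exact SemiconjBy.conj_mk _ _

theorem commute_w_p : Commute w p := by
  have hsws : (s * w * s⁻¹) ^ 2 = 1 := by rw [conj_pow, w_sq, mul_one, mul_inv_cancel]
  have hswsp : (s * w * s⁻¹ * p) ^ 2 = 1 := by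
    rw [s_inv, mul_assoc (s * w)]
    exact (semiconjBy_b_s_mul_p.pow_right 2).eq_one_iff.mp s_mul_p_sq
  refine semiconjBy_of_semiconjBy (g := s⁻¹) ?_ commute_s_p.inv_left commute_s_p.inv_left
    (commute_of_sq_eq_one hsws p_sq hswsp)
  exact SemiconjBy.inv_symm_left (SemiconjBy.conj_mk s w)

theorem z_mul_w : z * w = s * w * s := by
  rw [z, sq, ← mul_assoc, mul_assoc _ w w, w_mul_w, mul_one]

theorem semiconjBy_s_w : SemiconjBy s w (z * w) := by
  rw [SemiconjBy, z_mul_w, mul_assoc (s * w), s_mul_s, mul_one]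

theorem semiconjBy_b_z_mul_w_mul_p : SemiconjBy Ub (z * w * p) s := by
  have h : SemiconjBy (Ub ^ 3) s (z * w * p) := by
    rw [pow_succ', z_mul_w, mul_assoc (s * w)]
    exact semiconjBy_b_s_mul_p.mul_left semiconjBy_b_sq_s
  have hb : Ub ^ 3 = Ub⁻¹ := by rw [eq_inv_iff_mul_eq_one, ← pow_succ, b_pow_four]
  rwa [hb, SemiconjBy.inv_symm_left_iff] at h

theorem commute_w_z : Commute w z := by
  have hs : Commute s (s * p) := (Commute.refl s).mul_right commute_s_p
  have h : Commute w (s * w * (s * p)) :=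
    semiconjBy_of_semiconjBy semiconjBy_b_s semiconjBy_b_s_mul_p semiconjBy_b_s_mul_p hs
  rw [← mul_assoc, ← z_mul_w] at h
  simpa using (h.mul_right commute_w_p.inv_right).mul_right (Commute.refl w).inv_right

theorem z_sq : z ^ 2 = 1 := by
  have h : (z * w) ^ 2 = 1 := (semiconjBy_s_w.pow_right 2).eq_one_iff.mp w_sq
  rwa [commute_w_z.symm.mul_pow, w_sq, mul_one] at h

theorem z_inv : z⁻¹ = z := by rw [inv_eq_iff_mul_eq_one, ← sq, z_sq]

theorem z_mul_z : z * z = 1 := by rw [← sq, z_sq]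

theorem semiconjBy_s_z_mul_w : SemiconjBy s (z * w) w := by
  have h := SemiconjBy.inv_symm_left semiconjBy_s_w
  rwa [s_inv] at h

theorem commute_s_z : Commute s z := by
  have h := semiconjBy_s_z_mul_w.mul_right semiconjBy_s_w.inv_right
  rwa [mul_inv_cancel_right, mul_inv_rev, ← mul_assoc, w_inv, z_inv, w_mul_w, one_mul] at h

theorem commute_p_z : Commute p z :=
  (commute_s_p.symm.mul_right commute_w_p.symm).pow_right 2

theorem w_mul_s : w * s = z * (s * w) := by
  rw [← mul_assoc, ← commute_s_z.eq, mul_assoc, z_mul_w, mul_assoc, ← mul_assoc, s_mul_s, one_mul]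

theorem s_mul_s_mul (g : UGroup) : s * (s * g) = g := by rw [← mul_assoc, s_mul_s, one_mul]

theorem w_mul_w_mul (g : UGroup) : w * (w * g) = g := by rw [← mul_assoc, w_mul_w, one_mul]

theorem p_mul_p_mul (g : UGroup) : p * (p * g) = g := by rw [← mul_assoc, p_mul_p, one_mul]

theorem z_mul_z_mul (g : UGroup) : z * (z * g) = g := by rw [← mul_assoc, z_mul_z, one_mul]

theorem w_mul_s_mul (g : UGroup) : w * (s * g) = z * (s * (w * g)) := by
  rw [← mul_assoc, w_mul_s, mul_assoc, mul_assoc]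

theorem s_mul_p : s * p = p * s := commute_s_p

theorem w_mul_p : w * p = p * w := commute_w_p

theorem s_mul_z : s * z = z * s := commute_s_z

theorem w_mul_z : w * z = z * w := commute_w_z

theorem p_mul_z : p * z = z * p := commute_p_z

theorem s_mul_p_mul (g : UGroup) : s * (p * g) = p * (s * g) := commute_s_p.left_comm g

theorem w_mul_p_mul (g : UGroup) : w * (p * g) = p * (w * g) := commute_w_p.left_comm g

theorem s_mul_z_mul (g : UGroup) : s * (z * g) = z * (s * g) := commute_s_z.left_comm g

theorem w_mul_z_mul (g : UGroup) : w * (z * g) = z * (w * g) := commute_w_z.left_comm g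

theorem p_mul_z_mul (g : UGroup) : p * (z * g) = z * (p * g) := commute_p_z.left_comm g

-- Rewrites every word in `s, w, p, z` to the normal form `z ^ l * p ^ k * s ^ i * w ^ j`.
attribute [local simp] mul_assoc s_inv w_inv p_inv z_inv s_mul_s w_mul_w p_mul_p z_mul_z
  s_mul_s_mul w_mul_w_mul p_mul_p_mul z_mul_z_mul w_mul_s w_mul_s_mul s_mul_p w_mul_p s_mul_z
  w_mul_z p_mul_z s_mul_p_mul w_mul_p_mul s_mul_z_mul w_mul_z_mul p_mul_z_mul

theorem semiconjBy_b_p : SemiconjBy Ub p (z * p) := by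
  simpa using semiconjBy_b_s.mul_right semiconjBy_b_s_mul_p

theorem semiconjBy_b_z : SemiconjBy Ub z z := by
  simpa using (semiconjBy_b_z_mul_w_mul_p.mul_right semiconjBy_b_p).mul_right semiconjBy_b_w

theorem semiconjBy_b_inv_s : SemiconjBy Ub⁻¹ s (z * w * p) :=
  SemiconjBy.inv_symm_left semiconjBy_b_z_mul_w_mul_p

theorem semiconjBy_a_w : SemiconjBy Ua w (z * w * p) := by
  have h := (semiconjBy_a_b.mul_right commute_a_s).mul_right semiconjBy_a_b.inv_right
  have hb : Ub⁻¹ * s * s * (Ub⁻¹ * s)⁻¹ = z * w * p := by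
    rw [mul_inv_rev, inv_inv, s_inv, mul_assoc Ub⁻¹, s_mul_s, mul_one, ← mul_assoc,
      semiconjBy_b_inv_s.eq, inv_mul_cancel_right]
  rwa [hb] at h

theorem semiconjBy_a_z : SemiconjBy Ua z z := by
  have h := (SemiconjBy.mul_right commute_a_s semiconjBy_a_w).pow_right 2
  simpa [sq] using h

theorem semiconjBy_a_z_mul_w_mul_p : SemiconjBy Ua (z * w * p) (z * w) := by
  have h : SemiconjBy (Ua * Ua) w (z * w) := by
    rw [← sq]
    exact semiconjBy_s_w
  exact semiconjBy_of_mul_semiconjBy h semiconjBy_a_w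

theorem semiconjBy_a_p : SemiconjBy Ua p (z * p) := by
  simpa using (semiconjBy_a_z.mul_right semiconjBy_a_w).mul_right semiconjBy_a_z_mul_w_mul_p

theorem semiconjBy_a_s_mul_b_mul_c : SemiconjBy Ua (s * (Ub * Uc)) (Ub * Uc) := by
  have h := semiconjBy_a_s_mul_b_inv.mul_right semiconjBy_a_b_sq_mul_c
  rwa [← mul_assoc, sq, ← mul_assoc, inv_mul_cancel_right, mul_assoc] at h

theorem commute_s_b_mul_c : Commute s (Ub * Uc) :=
  commute_of_sq_eq_one s_sq b_mul_c_sq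
    ((semiconjBy_a_s_mul_b_mul_c.pow_right 2).eq_one_iff.mpr b_mul_c_sq)

theorem semiconjBy_c_s : SemiconjBy Uc s (z * w * p) := by
  simpa using semiconjBy_b_inv_s.mul_left commute_s_b_mul_c.symm

theorem c_mul_a : Uc * Ua = Ua * (Ub ^ 2 * Uc) := semiconjBy_a_b_sq_mul_c.eq.symm

theorem τ_inv : τ⁻¹ = Ub ^ 2 * Uc ^ 2 := by
  rw [τ, mul_inv_rev, b_sq_inv, c_sq_inv]

theorem a_mul_c_sq : (Ua * Uc) ^ 2 = s * τ⁻¹ := by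
  rw [sq, mul_assoc, ← mul_assoc Uc, c_mul_a, τ_inv, s]
  simp only [sq, mul_assoc]

theorem commute_s_τ : Commute s τ := by
  have h : s * τ * (s * τ⁻¹) = 1 := by
    rw [← a_mul_c_sq, ← a_sq_mul_c_sq_mul_b_sq_mul, s, τ, ← mul_assoc (Ua ^ 2)]
  rwa [mul_eq_one_iff_eq_inv, mul_inv_rev, inv_inv, s_inv] at h

theorem semiconjBy_b_sq_s_mul_p : SemiconjBy (Ub ^ 2) (s * p) s := by
  have h := SemiconjBy.inv_symm_left semiconjBy_b_sq_s
  rwa [b_sq_inv] at h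

theorem semiconjBy_c_sq_s : SemiconjBy (Uc ^ 2) s (s * p) := by
  have h := SemiconjBy.inv_symm_left
    (semiconjBy_of_mul_semiconjBy commute_s_τ.symm semiconjBy_b_sq_s)
  rwa [c_sq_inv] at h

theorem semiconjBy_c_z_mul_w_mul_p : SemiconjBy Uc (z * w * p) (s * p) :=
  semiconjBy_of_mul_semiconjBy (sq Uc ▸ semiconjBy_c_sq_s) semiconjBy_c_s

theorem semiconjBy_c_z_mul_w : SemiconjBy Uc (z * w) s := by
  have ha : SemiconjBy Ua⁻¹ (z * w) (z * w * p) :=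
    SemiconjBy.inv_symm_left semiconjBy_a_z_mul_w_mul_p
  have hc : Uc = Ua * (Ub ^ 2 * (Uc * Ua⁻¹)) := by
    rw [← mul_assoc, ← mul_assoc, mul_assoc Ua, ← c_mul_a, mul_inv_cancel_right]
  rw [hc]
  exact SemiconjBy.mul_left commute_a_s
    (semiconjBy_b_sq_s_mul_p.mul_left (semiconjBy_c_z_mul_w_mul_p.mul_left ha))

theorem semiconjBy_c_p : SemiconjBy Uc p p := by
  simpa using semiconjBy_c_z_mul_w.mul_right semiconjBy_c_z_mul_w_mul_p

theorem semiconjBy_c_z : SemiconjBy Uc z z := by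
  simpa [sq] using (semiconjBy_c_s.mul_right semiconjBy_c_z_mul_w).pow_right 2

theorem semiconjBy_c_w : SemiconjBy Uc w (z * s) := by
  simpa using semiconjBy_c_z.mul_right semiconjBy_c_z_mul_w

theorem b_mul_c : Ub * Uc = Uc⁻¹ * Ub⁻¹ := by
  rw [← mul_inv_rev, eq_inv_iff_mul_eq_one, ← sq, b_mul_c_sq]

theorem c_mul_b : Uc * Ub = Ub⁻¹ * Uc⁻¹ := by
  rw [eq_inv_mul_iff_mul_eq, ← mul_assoc, b_mul_c, inv_mul_cancel_right]

theorem b_mul_c_eq_c_mul_τ_mul_b : Ub * Uc = Uc * τ * Ub := by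
  rw [b_mul_c, τ, ← b_sq_inv, ← c_sq_inv]
  group

theorem σ_eq : σ = Ub * Uc ^ 2 * Ub := by
  calc σ = (Uc⁻¹ * Ub⁻¹) * (Ub⁻¹ * Uc⁻¹) := by rw [σ, ← b_sq_inv]; group
    _ = Ub * Uc ^ 2 * Ub := by rw [← b_mul_c, ← c_mul_b]; simp only [sq, mul_assoc]

theorem semiconjBy_c_τ : SemiconjBy Uc τ σ := by
  rw [SemiconjBy, σ, inv_mul_cancel_right, τ, ← mul_assoc]
  congr 1
  rw [eq_inv_iff_mul_eq_one, ← pow_succ', ← pow_succ, c_pow_four]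

theorem semiconjBy_c_σ : SemiconjBy Uc σ τ⁻¹ := by
  rw [τ_inv, SemiconjBy, σ, ← c_sq_inv]
  group

theorem semiconjBy_b_τ : SemiconjBy Ub τ σ := by
  rw [SemiconjBy, σ_eq, τ, sq Ub]
  simp only [mul_assoc]

theorem semiconjBy_b_σ : SemiconjBy Ub σ τ⁻¹ := by
  rw [τ_inv, SemiconjBy, σ_eq, sq Ub]
  simp only [mul_assoc]

theorem commute_σ_τ : Commute σ τ := by
  have hc : SemiconjBy (Uc ^ 2) σ⁻¹ σ := by
    rw [sq]
    exact semiconjBy_c_τ.mul_left (inv_inv τ ▸ semiconjBy_c_σ.inv_right)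
  have hb : SemiconjBy (Ub ^ 2) σ σ⁻¹ := by
    rw [sq]
    exact semiconjBy_b_τ.inv_right.mul_left semiconjBy_b_σ
  exact (hc.mul_left hb).symm

theorem semiconjBy_τ_w : SemiconjBy τ w (z * w) := by
  have hb : SemiconjBy (Ub ^ 2) w (s * w * (s * p)) := by
    rw [sq]
    exact semiconjBy_b_s_mul_p.mul_left semiconjBy_b_w
  have hc : SemiconjBy (Uc ^ 2) (z * w * p) (z * w) := by
    rw [sq]
    simpa using (semiconjBy_c_s.mul_right semiconjBy_c_p).mul_left semiconjBy_c_z_mul_w_mul_p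
  rw [← mul_assoc, ← z_mul_w] at hb
  exact hc.mul_left hb

theorem commute_τ_z : Commute τ z :=
  Commute.mul_left (Commute.pow_left semiconjBy_c_z 2) (Commute.pow_left semiconjBy_b_z 2)

theorem c_inv_mul_a_sq : (Uc⁻¹ * Ua) ^ 2 = z * w * τ := by
  have hca : Uc⁻¹ * Ua = Ua * (Uc⁻¹ * (Ub ^ 2)⁻¹) := by
    rw [inv_mul_eq_iff_eq_mul, ← mul_assoc, c_mul_a]
    group
  have hs : Uc⁻¹ * s = z * w * Uc⁻¹ := (SemiconjBy.inv_symm_left semiconjBy_c_z_mul_w).eq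
  calc (Uc⁻¹ * Ua) ^ 2 = Uc⁻¹ * s * (Uc⁻¹ * (Ub ^ 2)⁻¹) := by
        rw [sq]
        nth_rewrite 2 [hca]
        simp only [s, sq, mul_assoc]
    _ = z * w * (Uc ^ 2)⁻¹ * (Ub ^ 2)⁻¹ := by rw [hs, sq Uc, mul_inv_rev]; simp only [mul_assoc]
    _ = z * w * τ := by rw [b_sq_inv, c_sq_inv, τ, mul_assoc (z * w)]

theorem semiconjBy_c_c_inv_mul_a : SemiconjBy Uc (Uc⁻¹ * Ua) (Ua * Uc⁻¹) := by
  rw [SemiconjBy, mul_inv_cancel_left, inv_mul_cancel_right]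

theorem semiconjBy_a_c_inv_mul_a : SemiconjBy Ua (Uc⁻¹ * Ua) (Ua * Uc⁻¹) :=
  (mul_assoc _ _ _).symm

theorem semiconjBy_c_z_mul_w_mul_τ : SemiconjBy Uc (z * w * τ) (s * σ) :=
  semiconjBy_c_z_mul_w.mul_right semiconjBy_c_τ

theorem a_mul_c_inv_sq : (Ua * Uc⁻¹) ^ 2 = s * σ := by
  have h := semiconjBy_c_c_inv_mul_a.pow_right 2
  rw [c_inv_mul_a_sq] at h
  exact mul_right_cancel (h.eq.symm.trans semiconjBy_c_z_mul_w_mul_τ.eq)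

theorem Uy_eq : Uy = τ ^ 2 * z := by
  have h : SemiconjBy τ (z * w) w := by
    simpa using SemiconjBy.mul_right commute_τ_z semiconjBy_τ_w
  calc Uy = (z * w * τ) * (z * w * τ) := by rw [Uy, ← c_inv_mul_a_sq, ← sq, ← pow_mul]
    _ = z * w * (τ * (z * w)) * τ := by simp only [mul_assoc]
    _ = z * τ ^ 2 := by rw [h.eq, sq]; simp
    _ = τ ^ 2 * z := (commute_τ_z.pow_left 2).eq.symm

theorem semiconjBy_c_Uy : SemiconjBy Uc Uy Ux := semiconjBy_c_c_inv_mul_a.pow_right 4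

theorem semiconjBy_a_Uy : SemiconjBy Ua Uy Ux := semiconjBy_a_c_inv_mul_a.pow_right 4

theorem Ux_eq : Ux = σ ^ 2 * z := by
  have h := semiconjBy_c_Uy.eq
  rw [Uy_eq, ((semiconjBy_c_τ.pow_right 2).mul_right semiconjBy_c_z).eq] at h
  exact mul_right_cancel h.symm

theorem semiconjBy_a_Ux : SemiconjBy Ua Ux Uy := by
  have hs : SemiconjBy (Ua * Ua) Uy Uy := by
    rw [← sq, Uy_eq]
    exact (commute_s_τ.pow_right 2).mul_right commute_s_z
  exact semiconjBy_of_mul_semiconjBy hs semiconjBy_a_Uy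

theorem Uy_inv : Uy⁻¹ = τ⁻¹ ^ 2 * z := by
  rw [Uy_eq, (commute_τ_z.pow_left 2).eq, mul_inv_rev, z_inv, inv_pow]

theorem semiconjBy_b_Uy : SemiconjBy Ub Uy Ux := by
  rw [Uy_eq, Ux_eq]
  exact (semiconjBy_b_τ.pow_right 2).mul_right semiconjBy_b_z

theorem semiconjBy_b_Ux : SemiconjBy Ub Ux Uy⁻¹ := by
  rw [Uy_inv, Ux_eq]
  exact (semiconjBy_b_σ.pow_right 2).mul_right semiconjBy_b_z

theorem semiconjBy_c_Ux : SemiconjBy Uc Ux Uy⁻¹ := by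
  rw [Uy_inv, Ux_eq]
  exact (semiconjBy_c_σ.pow_right 2).mul_right semiconjBy_c_z

theorem semiconjBy_a_z_mul_w_mul_τ : SemiconjBy Ua (z * w * τ) (s * σ) := by
  rw [← c_inv_mul_a_sq, ← a_mul_c_inv_sq]
  exact semiconjBy_a_c_inv_mul_a.pow_right 2

theorem semiconjBy_a_τ : SemiconjBy Ua τ ((w * p)⁻¹ * (s * σ)) := by
  have h : SemiconjBy Ua (z * w) (w * p) := by
    simpa using SemiconjBy.mul_right semiconjBy_a_z semiconjBy_a_w
  simpa only [inv_mul_cancel_left] using h.inv_right.mul_right semiconjBy_a_z_mul_w_mul_τ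

theorem semiconjBy_a_σ : SemiconjBy Ua σ (s * w * τ) := by
  have hs : SemiconjBy (Ua * Ua) (z * w * τ) (w * τ) := by
    rw [← sq]
    exact semiconjBy_s_z_mul_w.mul_right commute_s_τ
  have h := SemiconjBy.mul_right commute_a_s.inv_right
    (semiconjBy_of_mul_semiconjBy hs semiconjBy_a_z_mul_w_mul_τ)
  rwa [inv_mul_cancel_left, s_inv, ← mul_assoc] at h

theorem commute_σ_z : Commute σ z :=
  semiconjBy_of_semiconjBy semiconjBy_c_τ semiconjBy_c_z semiconjBy_c_z commute_τ_z

theorem commute_Ux_Uy : Commute Ux Uy := by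
  rw [Ux_eq, Uy_eq]
  have hz : Commute (σ ^ 2) z := commute_σ_z.pow_left 2
  exact ((commute_σ_τ.pow_pow 2 2).mul_right hz).mul_left
    ((commute_τ_z.symm.pow_right 2).mul_right (Commute.refl z))

theorem induction_mul_left {P : UGroup → Prop} (one : P 1) (ha : ∀ g, P g → P (Ua * g))
    (hb : ∀ g, P g → P (Ub * g)) (hc : ∀ g, P g → P (Uc * g)) (g : UGroup) : P g := by
  have hgen : ∀ i : Fin 3, ∀ g, P g → P (PresentedGroup.of (rels := Urels) i * g) := by
    intro i
    fin_cases i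
    exacts [ha, hb, hc]
  have hpow : ∀ i : Fin 3, (PresentedGroup.of (rels := Urels) i)⁻¹ = PresentedGroup.of i ^ 3 := by
    intro i
    rw [inv_eq_iff_mul_eq_one, ← pow_succ']
    fin_cases i
    exacts [a_pow_four, b_pow_four, c_pow_four]
  have hg : g ∈ closure (Set.range (PresentedGroup.of (rels := Urels))) := by
    rw [PresentedGroup.closure_range_of]
    exact mem_top g
  induction hg using closure_induction_left with
  | one => exact one
  | mul_left _ hx y _ ih =>
    obtain ⟨i, rfl⟩ := hx
    exact hgen i y ih
  | inv_mul_cancel _ hx y _ ih =>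
    obtain ⟨i, rfl⟩ := hx
    rw [hpow, pow_succ, pow_two, mul_assoc, mul_assoc]
    exact hgen i _ (hgen i _ (hgen i _ ih))

theorem closure_normal {S : Set UGroup} (ha : ∀ k ∈ S, ∃ k' ∈ closure S, SemiconjBy Ua k k')
    (hb : ∀ k ∈ S, ∃ k' ∈ closure S, SemiconjBy Ub k k')
    (hc : ∀ k ∈ S, ∃ k' ∈ closure S, SemiconjBy Uc k k') : (closure S).Normal := by
  have hconj {u : UGroup} (hu : ∀ k ∈ S, ∃ k' ∈ closure S, SemiconjBy u k k') :
      closure S ≤ (closure S).comap (MulAut.conj u).toMonoidHom := by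
    rw [closure_le]
    intro k hk
    obtain ⟨k', hk', h⟩ := hu k hk
    rwa [SetLike.mem_coe, mem_comap, MulEquiv.coe_toMonoidHom, MulAut.conj_apply,
      mul_inv_eq_of_eq_mul h.eq]
  have hmul {u : UGroup} (hu : ∀ k ∈ S, ∃ k' ∈ closure S, SemiconjBy u k k') (g : UGroup)
      (hg : ∀ k ∈ closure S, g * k * g⁻¹ ∈ closure S) :
      ∀ k ∈ closure S, u * g * k * (u * g)⁻¹ ∈ closure S := by
    intro k hk
    simpa only [mem_comap, MulEquiv.coe_toMonoidHom, MulAut.conj_apply, mul_inv_rev, mul_assoc]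
      using hconj hu (hg k hk)
  refine ⟨fun k hk g ↦ ?_⟩
  induction g using induction_mul_left generalizing k with
  | one => rwa [one_mul, inv_one, mul_one]
  | ha g ih => exact hmul ha g ih k hk
  | hb g ih => exact hmul hb g ih k hk
  | hc g ih => exact hmul hc g ih k hk

/-- The normal closure of `a²`, a group of order 16. -/
def K : Subgroup UGroup := closure {s, w, p}

/-- The subgroup of `U` generated by `UGroup.K` and the lattice `⟨σ, τ⟩`, a normal subgroup of
index 16. -/
def L : Subgroup UGroup := K ⊔ closure {σ, τ}

theorem s_mem_K : s ∈ K := subset_closure (by simp)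

theorem w_mem_K : w ∈ K := subset_closure (by simp)

theorem p_mem_K : p ∈ K := subset_closure (by simp)

theorem z_mem_K : z ∈ K := pow_mem (mul_mem s_mem_K w_mem_K) 2

instance K_normal : K.Normal := by
  apply closure_normal
  · rintro k (rfl | rfl | rfl)
    exacts [⟨_, s_mem_K, commute_a_s⟩,
      ⟨_, mul_mem (mul_mem z_mem_K w_mem_K) p_mem_K, semiconjBy_a_w⟩,
      ⟨_, mul_mem z_mem_K p_mem_K, semiconjBy_a_p⟩]
  · rintro k (rfl | rfl | rfl)
    exacts [⟨_, w_mem_K, semiconjBy_b_s⟩, ⟨_, mul_mem s_mem_K p_mem_K, semiconjBy_b_w⟩,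
      ⟨_, mul_mem z_mem_K p_mem_K, semiconjBy_b_p⟩]
  · rintro k (rfl | rfl | rfl)
    exacts [⟨_, mul_mem (mul_mem z_mem_K w_mem_K) p_mem_K, semiconjBy_c_s⟩,
      ⟨_, mul_mem z_mem_K s_mem_K, semiconjBy_c_w⟩, ⟨_, p_mem_K, semiconjBy_c_p⟩]

theorem K_le_L : K ≤ L := le_sup_left

theorem σ_mem_L : σ ∈ L := mem_sup_right (subset_closure (.inl rfl))

theorem τ_mem_L : τ ∈ L := mem_sup_right (subset_closure (.inr rfl))

instance L_normal : L.Normal := by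
  have hL : L = closure ({s, w, p} ∪ {σ, τ}) := (closure_union _ _).symm
  have hK {u : UGroup} : ∀ k ∈ ({s, w, p} : Set UGroup), ∃ k' ∈ L, SemiconjBy u k k' := fun k hk ↦
    ⟨_, K_le_L (K_normal.conj_mem k (subset_closure hk) u), SemiconjBy.conj_mk u k⟩
  rw [hL]
  apply closure_normal <;> rw [← hL] <;> rintro k (hk | rfl | rfl)
  exacts [hK k hk,
    ⟨_, mul_mem (K_le_L (mul_mem s_mem_K w_mem_K)) τ_mem_L, semiconjBy_a_σ⟩,
    ⟨_, mul_mem (K_le_L (inv_mem (mul_mem w_mem_K p_mem_K)))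
      (mul_mem (K_le_L s_mem_K) σ_mem_L), semiconjBy_a_τ⟩,
    hK k hk, ⟨_, inv_mem τ_mem_L, semiconjBy_b_σ⟩, ⟨_, σ_mem_L, semiconjBy_b_τ⟩,
    hK k hk, ⟨_, inv_mem τ_mem_L, semiconjBy_c_σ⟩, ⟨_, σ_mem_L, semiconjBy_c_τ⟩]

instance UN_normal (m : ℕ) : (UN m).Normal := by
  have hx : Ux ^ m ∈ UN m := subset_closure (.inl rfl)
  have hy : Uy ^ m ∈ UN m := subset_closure (.inr rfl)
  have hy' : Uy⁻¹ ^ m ∈ UN m := by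
    rw [inv_pow]
    exact inv_mem hy
  apply closure_normal
  · rintro k (rfl | rfl)
    exacts [⟨_, hy, semiconjBy_a_Ux.pow_right m⟩, ⟨_, hx, semiconjBy_a_Uy.pow_right m⟩]
  · rintro k (rfl | rfl)
    exacts [⟨_, hy', semiconjBy_b_Ux.pow_right m⟩, ⟨_, hx, semiconjBy_b_Uy.pow_right m⟩]
  · rintro k (rfl | rfl)
    exacts [⟨_, hy', semiconjBy_c_Ux.pow_right m⟩, ⟨_, hx, semiconjBy_c_Uy.pow_right m⟩]

/-- The normal form of the elements of `UGroup.K`, in which only the exponents modulo 2 matter. -/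
def kWord (i j k l : ℕ) : UGroup := s ^ i * w ^ j * p ^ k * z ^ l

theorem s_mul_kWord (i j k l : ℕ) : s * kWord i j k l = kWord (i + 1) j k l := by
  simp only [kWord, pow_succ', mul_assoc]

theorem w_mul_kWord (i j k l : ℕ) : w * kWord i j k l = kWord i (j + 1) k (i + l) := by
  have hws : w * s ^ i = s ^ i * z ^ i * w := by
    have h : SemiconjBy w s (s * z) := by simp [SemiconjBy]
    rw [(h.pow_right i).eq, commute_s_z.mul_pow]
  have hz : z ^ i * (w * w ^ j * p ^ k) = w * w ^ j * p ^ k * z ^ i :=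
    (((commute_w_z.mul_left (commute_w_z.pow_left j)).mul_left
      (commute_p_z.pow_left k)).pow_right i).symm
  calc w * kWord i j k l = w * s ^ i * (w ^ j * p ^ k) * z ^ l := by
        simp only [kWord, mul_assoc]
    _ = s ^ i * (z ^ i * (w * w ^ j * p ^ k)) * z ^ l := by rw [hws]; simp only [mul_assoc]
    _ = kWord i (j + 1) k (i + l) := by
        rw [hz, kWord, pow_succ', pow_add]
        simp only [mul_assoc]

theorem p_mul_kWord (i j k l : ℕ) : p * kWord i j k l = kWord i j (k + 1) l := by
  have h : Commute p (s ^ i * w ^ j) :=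
    (commute_s_p.symm.pow_right i).mul_right (commute_w_p.symm.pow_right j)
  rw [kWord, kWord, ← mul_assoc, ← mul_assoc, h.eq, pow_succ', mul_assoc _ p]

theorem exists_eq_kWord {g : UGroup} (hg : g ∈ K) : ∃ i j k l : ℕ, g = kWord i j k l := by
  have hmul : ∀ x ∈ ({s, w, p} : Set UGroup), ∀ y, (∃ i j k l : ℕ, y = kWord i j k l) →
      ∃ i j k l : ℕ, x * y = kWord i j k l := by
    rintro x (rfl | rfl | rfl) _ ⟨i, j, k, l, rfl⟩
    exacts [⟨_, _, _, _, s_mul_kWord i j k l⟩, ⟨_, _, _, _, w_mul_kWord i j k l⟩,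
      ⟨_, _, _, _, p_mul_kWord i j k l⟩]
  induction hg using closure_induction_left with
  | one => exact ⟨0, 0, 0, 0, by simp [kWord]⟩
  | mul_left x hx y _ ih => exact hmul x hx y ih
  | inv_mul_cancel x hx y _ ih =>
    have hinv : x⁻¹ = x := by
      obtain rfl | rfl | rfl := hx
      exacts [s_inv, w_inv, p_inv]
    rw [hinv]
    exact hmul x hx y ih

theorem kWord_mem_K (i j k l : ℕ) : kWord i j k l ∈ K :=
  mul_mem (mul_mem (mul_mem (pow_mem s_mem_K i) (pow_mem w_mem_K j)) (pow_mem p_mem_K k))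
    (pow_mem z_mem_K l)

theorem kWord_mod_two (i j k l : ℕ) : kWord (i % 2) (j % 2) (k % 2) (l % 2) = kWord i j k l := by
  rw [kWord, kWord, ← pow_eq_pow_mod i s_sq, ← pow_eq_pow_mod j w_sq, ← pow_eq_pow_mod k p_sq,
    ← pow_eq_pow_mod l z_sq]

/-- The images of `a, b, c` under `UGroup.cosetAction`. -/
def cosetGen : Fin 3 → Equiv.Perm (ZMod 2 × ZMod 2 × ZMod 2 × ZMod 2 × ZMod 2) :=
  ![⟨fun (i, j, k, l, e) ↦ (i + e, j, j + k, j + k + l + e * j, e + 1),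
      fun (i, j, k, l, e) ↦ (i + e + 1, j, j + k, k + l + e * j + j, e + 1),
      by decide, by decide⟩,
    ⟨fun (i, j, k, l, e) ↦ (j + e, i, j + k, i * j + k + l + e * i, e),
      fun (i, j, k, l, e) ↦ (j, i + e, i + k + e, i * j + i + k + l + e, e),
      by decide, by decide⟩,
    ⟨fun (i, j, k, l, e) ↦ (j, i, i + k, i * j + i + j + l, e),
      fun (i, j, k, l, e) ↦ (j, i, j + k, i * j + i + j + l, e), by decide, by decide⟩]

/-- A transitive action of `U` on 32 points in which `b` and `c` fix the point `0`. It separates the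
elements of `UGroup.K`: the point `(i, j, k, l, e)` is the image of `0` under
`s ^ i * w ^ j * p ^ k * z ^ l * a ^ e`. -/
def cosetAction : UGroup →* Equiv.Perm (ZMod 2 × ZMod 2 × ZMod 2 × ZMod 2 × ZMod 2) :=
  PresentedGroup.toGroup (f := cosetGen) <| by
    apply lift_eq_one_of_mem_Urels <;> decide +kernel

theorem cosetAction_kWord (i j k l : ZMod 2) :
    cosetAction (kWord i.val j.val k.val l.val) 0 = (i, j, k, l, 0) := by
  revert i j k l
  decide

theorem card_K : Nat.card K = 16 := by
  let word : ZMod 2 × ZMod 2 × ZMod 2 × ZMod 2 → K := fun (i, j, k, l) ↦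
    ⟨kWord i.val j.val k.val l.val, kWord_mem_K _ _ _ _⟩
  have hinj : Function.Injective word := by
    rintro ⟨i, j, k, l⟩ ⟨i', j', k', l'⟩ h
    have h0 := DFunLike.congr_fun (congrArg cosetAction (congrArg Subtype.val h)) 0
    rw [cosetAction_kWord, cosetAction_kWord] at h0
    simpa only [Prod.mk.injEq, and_true] using h0
  have hsurj : Function.Surjective word := by
    rintro ⟨g, hg⟩
    obtain ⟨i, j, k, l, rfl⟩ := exists_eq_kWord hg
    refine ⟨(i, j, k, l), Subtype.ext ?_⟩
    simp only [word, ZMod.val_natCast, kWord_mod_two]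
  rw [← Nat.card_eq_of_bijective word ⟨hinj, hsurj⟩]
  simp

/-- A homomorphism from `U` onto the product of the dihedral group of order 8 with a group of
order 2. Its kernel is `UGroup.L`. -/
def dihedralHom : UGroup →* DihedralGroup 4 × Multiplicative (ZMod 2) :=
  PresentedGroup.toGroup (f := ![(.sr 0, 1), (.r 1, 1), (.r (-1), .ofAdd 1)]) <| by
    apply lift_eq_one_of_mem_Urels <;> decide

theorem L_le_ker_dihedralHom : L ≤ dihedralHom.ker := by
  rw [L, K, ← Subgroup.closure_union, closure_le]
  rintro k ((rfl | rfl | rfl) | rfl | rfl)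
  all_goals rw [SetLike.mem_coe, MonoidHom.mem_ker]; decide

theorem dihedralHom_surjective : Function.Surjective dihedralHom := by
  have h : ∀ q, ∃ j < 4, ∃ k < 2, ∃ i < 2,
    dihedralHom (Ub ^ j * (Ub * Uc) ^ k * Ua ^ i) = q := by decide
  intro q
  obtain ⟨j, -, k, -, i, -, h⟩ := h q
  exact ⟨_, h⟩

theorem mk_s : (s : UGroup ⧸ L) = 1 :=
  (QuotientGroup.eq_one_iff s).mpr (K_le_L s_mem_K)

theorem mk_a_sq : (Ua : UGroup ⧸ L) ^ 2 = 1 := mk_s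

theorem mk_b_pow_four : (Ub : UGroup ⧸ L) ^ 4 = 1 :=
  congrArg (QuotientGroup.mk' L) b_pow_four

theorem mk_b_mul_c_sq : (Ub * Uc : UGroup ⧸ L) ^ 2 = 1 :=
  congrArg (QuotientGroup.mk' L) b_mul_c_sq

theorem mk_semiconjBy_a_b : SemiconjBy (Ua : UGroup ⧸ L) Ub (Ub ^ 3) := by
  have h : SemiconjBy (Ua : UGroup ⧸ L) Ub ((Ub : UGroup ⧸ L)⁻¹ * (s : UGroup ⧸ L)) :=
    semiconjBy_a_b.map (QuotientGroup.mk' L)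
  have hb : (Ub : UGroup ⧸ L)⁻¹ = Ub ^ 3 := by
    rw [inv_eq_iff_mul_eq_one, ← pow_succ', mk_b_pow_four]
  rwa [mk_s, mul_one, hb] at h

theorem mk_commute_a_b_mul_c : Commute (Ua : UGroup ⧸ L) (Ub * Uc) := by
  have h : SemiconjBy (Ua : UGroup ⧸ L) ((s : UGroup ⧸ L) * (Ub * Uc)) (Ub * Uc) :=
    semiconjBy_a_s_mul_b_mul_c.map (QuotientGroup.mk' L)
  rwa [mk_s, one_mul] at h

theorem mk_commute_b_c : Commute (Ub : UGroup ⧸ L) Uc := by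
  have hτ : (τ : UGroup ⧸ L) = 1 := (QuotientGroup.eq_one_iff τ).mpr τ_mem_L
  have h : (Ub * Uc : UGroup ⧸ L) = Uc * τ * Ub :=
    congrArg (QuotientGroup.mk' L) b_mul_c_eq_c_mul_τ_mul_b
  rwa [hτ, mul_one] at h

theorem exists_mk_eq (g : UGroup) :
    ∃ j k i : ℕ, (g : UGroup ⧸ L) = Ub ^ j * (Ub * Uc) ^ k * Ua ^ i := by
  induction g using induction_mul_left with
  | one => exact ⟨0, 0, 0, by simp⟩
  | ha g ih =>
    obtain ⟨j, k, i, hg⟩ := ih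
    refine ⟨3 * j, k, i + 1, ?_⟩
    have h := (mk_semiconjBy_a_b.pow_right j).mul_right (mk_commute_a_b_mul_c.pow_right k)
    rw [QuotientGroup.mk_mul, hg, ← mul_assoc, h.eq, ← pow_mul, mul_assoc, ← pow_succ']
  | hb g ih =>
    obtain ⟨j, k, i, hg⟩ := ih
    refine ⟨j + 1, k, i, ?_⟩
    rw [QuotientGroup.mk_mul, hg, ← mul_assoc, ← mul_assoc, ← pow_succ']
  | hc g ih =>
    obtain ⟨j, k, i, hg⟩ := ih
    refine ⟨j + 3, k + 1, i, ?_⟩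
    have hc : (Uc : UGroup ⧸ L) = Ub ^ 3 * (Ub * Uc) := by
      rw [← mul_assoc, ← pow_succ, mk_b_pow_four, one_mul]
    have h : Commute (Ub * Uc : UGroup ⧸ L) (Ub ^ j) :=
      ((Commute.refl _).mul_left mk_commute_b_c.symm).pow_right j
    calc ((Uc * g : UGroup) : UGroup ⧸ L)
        = Ub ^ 3 * (Ub * Uc) * (Ub ^ j * (Ub * Uc) ^ k * Ua ^ i) := by
          rw [QuotientGroup.mk_mul, hg, ← hc]
      _ = Ub ^ 3 * (Ub * Uc * Ub ^ j) * (Ub * Uc) ^ k * Ua ^ i := by simp only [mul_assoc]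
      _ = Ub ^ (j + 3) * (Ub * Uc) ^ (k + 1) * Ua ^ i := by
          rw [h.eq, add_comm j, pow_add, pow_succ' _ k]
          simp only [mul_assoc]

theorem ker_dihedralHom_le_L : dihedralHom.ker ≤ L := by
  intro g hg
  obtain ⟨j, k, i, hmk⟩ := exists_mk_eq g
  rw [pow_eq_pow_mod j mk_b_pow_four, pow_eq_pow_mod k mk_b_mul_c_sq, pow_eq_pow_mod i mk_a_sq]
    at hmk
  have hword : ∀ (j : Fin 4) (k i : Fin 2),
      dihedralHom (Ub ^ j.val * (Ub * Uc) ^ k.val * Ua ^ i.val) = 1 →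
        j.val = 0 ∧ k.val = 0 ∧ i.val = 0 := by
    decide
  have hker := L_le_ker_dihedralHom (QuotientGroup.eq.mp hmk)
  rw [MonoidHom.mem_ker, map_mul, map_inv, MonoidHom.mem_ker.mp hg, inv_one, one_mul] at hker
  obtain ⟨hj, hk, hi⟩ := hword ⟨j % 4, Nat.mod_lt j four_pos⟩ ⟨k % 2, Nat.mod_lt k two_pos⟩
    ⟨i % 2, Nat.mod_lt i two_pos⟩ hker
  dsimp only at hj hk hi
  rwa [hj, hk, hi, pow_zero, pow_zero, pow_zero, mul_one, mul_one, QuotientGroup.eq_one_iff] at hmk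

theorem index_L : L.index = 16 := by
  rw [le_antisymm L_le_ker_dihedralHom ker_dihedralHom_le_L, index_ker,
    MonoidHom.range_eq_top.mpr dihedralHom_surjective, card_top, Nat.card_prod,
    DihedralGroup.nat_card]
  simp

/-- The images of `a, b, c` under `UGroup.planeAction`. -/
def planeGen : Fin 3 → Equiv.Perm (ℤ × ℤ) :=
  ![⟨fun q ↦ (q.2 + 1, q.1 - 1), fun q ↦ (q.2 + 1, q.1 - 1), fun q ↦ by simp, fun q ↦ by simp⟩,
    ⟨fun q ↦ (q.2 + 1, -q.1 - 1), fun q ↦ (-q.2 - 1, q.1 - 1), fun q ↦ by simp, fun q ↦ by simp⟩,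
    ⟨fun q ↦ (q.2, -q.1), fun q ↦ (-q.2, q.1), fun q ↦ by simp, fun q ↦ by simp⟩]

/-- The action of `U` on the lattice `ℤ × ℤ` through a plane group of type `p4m`. The subgroup
`UGroup.K` acts trivially and `UGroup.σ`, `UGroup.τ` act as translations. -/
def planeAction : UGroup →* Equiv.Perm (ℤ × ℤ) :=
  PresentedGroup.toGroup (f := planeGen) <| by
    apply lift_eq_one_of_mem_Urels <;> ext1 ⟨m, n⟩ <;>
      simp [planeGen, pow_succ, Equiv.Perm.mul_apply]

/-- The action of `ℤ × ℤ` on itself by translations. -/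
def translation : Multiplicative (ℤ × ℤ) →* Equiv.Perm (ℤ × ℤ) :=
  MulAction.toPermHom _ _

theorem planeAction_s : planeAction s = 1 := by
  ext1 ⟨m, n⟩
  change (m - 1 + 1, n + 1 - 1) = (m, n)
  simp

theorem planeAction_w : planeAction w = 1 := by
  rw [w, map_mul, map_mul, planeAction_s, mul_one, ← map_mul, mul_inv_cancel, map_one]

theorem planeAction_p : planeAction p = 1 := by
  rw [p, map_mul, map_mul, map_mul, planeAction_s, mul_one, one_mul, ← map_mul, mul_inv_cancel,
    map_one]

theorem planeAction_σ : planeAction σ = translation (.ofAdd (2, 0)) := by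
  ext1 ⟨m, n⟩
  change (-(-(m + 1) - 1), - -n - 1 + 1) = (2 + m, 0 + n)
  ring_nf

theorem planeAction_τ : planeAction τ = translation (.ofAdd (0, 2)) := by
  ext1 ⟨m, n⟩
  change (-(-m - 1 + 1), -(-(n + 1) - 1)) = (0 + m, 2 + n)
  ring_nf

theorem K_le_ker_planeAction : K ≤ planeAction.ker := by
  rw [K, closure_le]
  rintro k (rfl | rfl | rfl)
  exacts [planeAction_s, planeAction_w, planeAction_p]

theorem planeAction_comp_latticeHom_injective {g h : UGroup} (hgh : Commute g h) {k : ℤ}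
    (hk : k ≠ 0) (hg : planeAction g = translation (.ofAdd (k, 0)))
    (hh : planeAction h = translation (.ofAdd (0, k))) :
    Function.Injective (planeAction.comp (latticeHom hgh)) := by
  rw [injective_iff_map_eq_one]
  intro u hu
  have h0 := DFunLike.congr_fun hu 0
  rw [MonoidHom.comp_apply, latticeHom_apply, map_mul, map_zpow, map_zpow, hg, hh,
    ← map_zpow translation, ← map_zpow translation, ← map_mul, ← ofAdd_zsmul, ← ofAdd_zsmul,
    ← ofAdd_add] at h0
  change (u.1.toAdd * k + u.2.toAdd * 0 + 0, u.1.toAdd * 0 + u.2.toAdd * k + 0) = (0, 0) at h0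
  simp only [mul_zero, add_zero, zero_add, Prod.mk.injEq, mul_eq_zero, hk, or_false] at h0
  exact Prod.ext h0.1 h0.2

theorem planeAction_z : planeAction z = 1 := K_le_ker_planeAction z_mem_K

theorem planeAction_Ux : planeAction Ux = translation (.ofAdd (4, 0)) := by
  rw [Ux_eq, map_mul, map_pow, planeAction_σ, planeAction_z, mul_one, ← map_pow]
  rfl

theorem planeAction_Uy : planeAction Uy = translation (.ofAdd (0, 4)) := by
  rw [Uy_eq, map_mul, map_pow, planeAction_τ, planeAction_z, mul_one, ← map_pow]
  rfl

theorem disjoint_UN_K (m : ℕ) : Disjoint (UN m) K := by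
  have hinj := planeAction_comp_latticeHom_injective commute_Ux_Uy four_ne_zero planeAction_Ux
    planeAction_Uy
  refine (disjoint_range_ker hinj).mono ?_ K_le_ker_planeAction
  rw [UN, closure_le, Set.pair_subset_iff, range_latticeHom]
  exact ⟨pow_mem (subset_closure (.inl rfl)) m, pow_mem (subset_closure (.inr rfl)) m⟩

theorem relIndex_UN_sup_K (m : ℕ) : (UN m).relIndex (K ⊔ UN m) = 16 := by
  rw [relIndex_sup_right, ← inf_relIndex_right, (disjoint_UN_K m).eq_bot, relIndex_bot_left,
    card_K]

theorem K_sup_UN (m : ℕ) : K ⊔ UN m = K ⊔ closure {σ ^ (2 * m), τ ^ (2 * m)} := by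
  have hz : z ^ m ∈ K := pow_mem z_mem_K m
  rw [UN, Ux_eq, Uy_eq, (commute_σ_z.pow_left 2).mul_pow, (commute_τ_z.pow_left 2).mul_pow,
    ← pow_mul, ← pow_mul, sup_closure_pair_mul hz hz]

theorem K_sup_UN_le_L (m : ℕ) : K ⊔ UN m ≤ L := by
  rw [K_sup_UN, sup_le_iff, closure_le, Set.pair_subset_iff]
  exact ⟨K_le_L, pow_mem σ_mem_L _, pow_mem τ_mem_L _⟩

theorem relIndex_K_sup_UN_L (m : ℕ) : (K ⊔ UN m).relIndex L = (2 * m) ^ 2 := by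
  have hinj := planeAction_comp_latticeHom_injective commute_σ_τ two_ne_zero planeAction_σ
    planeAction_τ
  have hmap : K ⊔ UN m = K ⊔ ((zpowers (.ofAdd ((2 * m : ℕ) : ℤ))).prod
      (zpowers (.ofAdd ((2 * m : ℕ) : ℤ)))).map (latticeHom commute_σ_τ) := by
    rw [K_sup_UN, map_latticeHom_prod_zpowers, zpow_natCast, zpow_natCast]
  rw [L, ← range_latticeHom commute_σ_τ, hmap,
    relIndex_sup_map hinj K_le_ker_planeAction (hmap ▸ inferInstance), index_prod_zpowers,
    Int.natAbs_natCast]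

end UGroup

/-- For every positive integer `m`, the subgroup `N_m = ⟨x^m, y^m⟩` of `U` is a normal
subgroup of index `1024 m^2`. -/
theorem Nm_normal_index (m : ℕ) (hm : 0 < m) :
    (UN m).Normal ∧ (UN m).index = 1024 * m ^ 2 := by
  refine ⟨UGroup.UN_normal m, ?_⟩
  calc (UN m).index
      = (UN m).relIndex (UGroup.K ⊔ UN m) * (UGroup.K ⊔ UN m).relIndex UGroup.L *
          UGroup.L.index := by
        rw [relIndex_mul_relIndex _ _ _ le_sup_right (UGroup.K_sup_UN_le_L m),
          relIndex_mul_index (le_sup_right.trans (UGroup.K_sup_UN_le_L m))]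
    _ = 16 * (2 * m) ^ 2 * 16 := by
        rw [UGroup.relIndex_UN_sup_K, UGroup.relIndex_K_sup_UN_L, UGroup.index_L]
    _ = 1024 * m ^ 2 := by ring
end
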